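/- Every simple hexagon can be partitioned into strictly convex quadrilaterals using at most 3 Steiner points placed in its interior (i.e., there is a decomposition of the hexagon into strictly convex quadrilaterals whose vertex set consists of the 6 hexagon vertices plus at most 3 interior points). -/

import Mathlib

open scoped BigOperators

/-- Points in the plane. -/
abbrev Pt := ℝ × ℝ

/-- 2×2 determinant (cross product) of two plane vectors. -/
noncomputable def det2 (p q : Pt) : ℝ := p.1 * q.2 - p.2 * q.1

/-- Open half-plane strictly to the left of the directed line from `p` to `q`. -/
def Lhp (p q : Pt) : Set Pt := {x | 0 < det2 (q - p) (x - p)}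

/-- Open half-plane strictly to the right of the directed line from `p` to `q`. -/
def Rhp (p q : Pt) : Set Pt := {x | det2 (q - p) (x - p) < 0}

/-- The boundary of the polygon with vertices `v 0, …, v (n-1)`:
the union of its (cyclically consecutive) edges. -/
def polyBoundary {n : ℕ} [NeZero n] (v : Fin n → Pt) : Set Pt :=
  ⋃ i : Fin n, segment ℝ (v i) (v (i + 1))

/-- `v` describes a simple polygon: at least 3 distinct vertices, and two distinct
edges may only meet at a common endpoint. -/
def IsSimplePolygon {n : ℕ} [NeZero n] (v : Fin n → Pt) : Prop :=
  3 ≤ n ∧ Function.Injective v ∧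
    ∀ i j : Fin n, i ≠ j →
      segment ℝ (v i) (v (i + 1)) ∩ segment ℝ (v j) (v (j + 1)) ⊆
        ({v i, v (i + 1)} ∩ {v j, v (j + 1)} : Set Pt)

/-- The interior of the polygon: the union of the bounded connected components of the
complement of the boundary. -/
def polyInterior {n : ℕ} [NeZero n] (v : Fin n → Pt) : Set Pt :=
  {x | x ∉ polyBoundary v ∧
    Bornology.IsBounded (connectedComponentIn (polyBoundary v)ᶜ x)}

/-- The (closed) polygonal region: interior together with boundary. -/
def polyRegion {n : ℕ} [NeZero n] (v : Fin n → Pt) : Set Pt :=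
  polyBoundary v ∪ polyInterior v

/-- Twice the signed area of the polygon. -/
noncomputable def signedArea2 {n : ℕ} [NeZero n] (v : Fin n → Pt) : ℝ :=
  ∑ i : Fin n, det2 (v i) (v (i + 1))

/-- The vertices are listed in counterclockwise order. -/
def IsCCW {n : ℕ} [NeZero n] (v : Fin n → Pt) : Prop := 0 < signedArea2 v

/-- The vertex `v i` of a counterclockwise polygon is strictly convex
(interior angle strictly less than 180°). -/
def StrictlyConvexAt {n : ℕ} [NeZero n] (v : Fin n → Pt) (i : Fin n) : Prop :=
  0 < det2 (v i - v (i - 1)) (v (i + 1) - v i)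

/-- The vertex `v i` of a counterclockwise polygon is reflex
(interior angle greater than or equal to 180°). -/
def ReflexAt {n : ℕ} [NeZero n] (v : Fin n → Pt) (i : Fin n) : Prop :=
  det2 (v i - v (i - 1)) (v (i + 1) - v i) ≤ 0

/-- The wedge of vertex `v i`:  `L(v⁻, v) ∩ R(v⁺, v) ∩ interior P`. -/
def Wedge {n : ℕ} [NeZero n] (v : Fin n → Pt) (i : Fin n) : Set Pt :=
  Lhp (v (i - 1)) (v i) ∩ Rhp (v (i + 1)) (v i) ∩ polyInterior v

/-- `x` sees `y` inside the polygon `v`: the segment `xy` is contained in the region. -/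
def Sees {n : ℕ} [NeZero n] (v : Fin n → Pt) (x y : Pt) : Prop :=
  segment ℝ x y ⊆ polyRegion v

/-- The kernel of the polygon: the points of the region that see every point of it. -/
def polyKernel {n : ℕ} [NeZero n] (v : Fin n → Pt) : Set Pt :=
  {x ∈ polyRegion v | ∀ y ∈ polyRegion v, segment ℝ x y ⊆ polyRegion v}

/-- The open triangle on three points. -/
def openTriangle (a b c : Pt) : Set Pt := interior (convexHull ℝ {a, b, c})

/-- `a b c d` (in counterclockwise order) form a strictly convex quadrilateral. -/
def StrictConvexQuad (a b c d : Pt) : Prop :=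
  0 < det2 (b - a) (c - b) ∧ 0 < det2 (c - b) (d - c) ∧
    0 < det2 (d - c) (a - d) ∧ 0 < det2 (a - d) (b - a)

/-- The closed region of a quadrilateral cell. -/
noncomputable def quadSet (q : Pt × Pt × Pt × Pt) : Set Pt :=
  convexHull ℝ {q.1, q.2.1, q.2.2.1, q.2.2.2}

/-- The closed region of a triangular cell. -/
noncomputable def triSet (t : Pt × Pt × Pt) : Set Pt :=
  convexHull ℝ {t.1, t.2.1, t.2.2}

/-- The vertices of a quadrilateral cell. -/
noncomputable def quadVerts (q : Pt × Pt × Pt × Pt) : Finset Pt :=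
  {q.1, q.2.1, q.2.2.1, q.2.2.2}

/-- The vertices of a triangular cell. -/
noncomputable def triVerts (t : Pt × Pt × Pt) : Finset Pt :=
  {t.1, t.2.1, t.2.2}

/-- A strictly convex quadrangulation of a finite planar point set `S`:
a decomposition of `conv S` into strictly convex quadrilaterals and at most one
(nondegenerate) triangle, with pairwise disjoint interiors, whose vertex set contains
`S`, and such that no point of `S` is interior to a cell. -/
structure ConvexQuadrangulation (S : Finset Pt) where
  quads : Finset (Pt × Pt × Pt × Pt)
  tris : Finset (Pt × Pt × Pt)
  tris_card : tris.card ≤ 1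
  quads_convex : ∀ q ∈ quads, StrictConvexQuad q.1 q.2.1 q.2.2.1 q.2.2.2
  tris_nondeg : ∀ t ∈ tris, 0 < det2 (t.2.1 - t.1) (t.2.2 - t.2.1)
  covers : ((⋃ q ∈ quads, quadSet q) ∪ ⋃ t ∈ tris, triSet t) = convexHull ℝ (S : Set Pt)
  cells_disjoint : ((quadSet '' quads) ∪ (triSet '' tris)).Pairwise
    fun A B => interior A ∩ interior B = ∅
  verts_cover : (S : Set Pt) ⊆
    ((quads.biUnion quadVerts ∪ tris.biUnion triVerts : Finset Pt) : Set Pt)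
  no_pt_in_quad_interior : ∀ q ∈ quads, ∀ p ∈ S, p ∉ interior (quadSet q)
  no_pt_in_tri_interior : ∀ t ∈ tris, ∀ p ∈ S, p ∉ interior (triSet t)

/-- The Steiner points of a quadrangulation: vertices of the decomposition not in `S`. -/
noncomputable def steinerPoints (S : Finset Pt) (Q : ConvexQuadrangulation S) : Finset Pt :=
  (Q.quads.biUnion quadVerts ∪ Q.tris.biUnion triVerts) \ S

section part1
/-! ## Angles and winding numbers -/

/-- `conj a * b` as a complex number. -/
noncomputable def dz (a b : Pt) : ℂ := ⟨a.1 * b.1 + a.2 * b.2, det2 a b⟩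

/-- a point as a complex number -/
noncomputable def cx (a : Pt) : ℂ := ⟨a.1, a.2⟩

/-- signed angle under which the segment `ab` is seen from `x`. -/
noncomputable def th (a b x : Pt) : ℝ := Complex.arg (dz (a - x) (b - x))

/-- total signed angle of a closed polygon seen from `x` -/
noncomputable def Wd {n : ℕ} [NeZero n] (v : Fin n → Pt) (x : Pt) : ℝ :=
  ∑ i : Fin n, th (v i) (v (i + 1)) x

/-- orientation determinant of a point relative to a directed line -/
noncomputable def dt (a b x : Pt) : ℝ := det2 (b - a) (x - a)

lemma dz_eq (a b : Pt) : dz a b = (starRingEnd ℂ) (cx a) * cx b := by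
  apply Complex.ext <;> simp [dz, cx, det2]
  ring

lemma cx_ne {a : Pt} (h : a ≠ 0) : cx a ≠ 0 := by
  intro h'
  apply h
  have h1 := congrArg Complex.re h'
  have h2 := congrArg Complex.im h'
  simp [cx] at h1 h2
  exact Prod.ext h1 h2

lemma arg_dz (a b : Pt) (ha : a ≠ 0) (hb : b ≠ 0) :
    ((Complex.arg (dz a b) : ℝ) : Real.Angle) = Complex.arg (cx b) - Complex.arg (cx a) := by
  rw [dz_eq, Complex.arg_mul_coe_angle (by simpa using cx_ne ha) (cx_ne hb),
    Complex.arg_conj_coe_angle]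
  abel

lemma dt_eq (a b x : Pt) : det2 (a - x) (b - x) = dt a b x := by
  simp [dt, det2]; ring

lemma mem_seg_of (a b x : Pt) (h0 : dt a b x = 0)
    (h1 : (a.1 - x.1) * (b.1 - x.1) + (a.2 - x.2) * (b.2 - x.2) ≤ 0) : x ∈ segment ℝ a b := by
  by_cases hax : a = x
  · subst hax; exact left_mem_segment ℝ _ _
  set p := a - x with hp
  set q := b - x with hq
  have hN : 0 < p.1 ^ 2 + p.2 ^ 2 := by
    by_contra hcon
    apply hax
    have h1 : p.1 = 0 := by nlinarith [sq_nonneg p.1, sq_nonneg p.2]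
    have h2 : p.2 = 0 := by nlinarith [sq_nonneg p.1, sq_nonneg p.2]
    have : p = 0 := Prod.ext h1 h2
    rwa [hp, sub_eq_zero] at this
  have h1' : p.1 * q.1 + p.2 * q.2 ≤ 0 := by simpa [hp, hq] using h1
  have h0' : p.1 * q.2 - p.2 * q.1 = 0 := by
    have := dt_eq a b x
    rw [h0] at this; exact this
  set N := p.1 ^ 2 + p.2 ^ 2 with hNd
  set s := p.1 * q.1 + p.2 * q.2 with hs
  have hD : 0 < N - s := by linarith
  refine ⟨-s / (N - s), N / (N - s), div_nonneg (by linarith) hD.le,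
    div_nonneg hN.le hD.le, ?_, ?_⟩
  · field_simp; ring
  have ha : a = x + p := by simp [hp]
  have hb : b = x + q := by simp [hq]
  have e1 : N * q.1 = s * p.1 := by rw [hNd, hs]; linear_combination (-p.2) * h0'
  have e2 : N * q.2 = s * p.2 := by rw [hNd, hs]; linear_combination (p.1) * h0'
  rw [ha, hb]
  apply Prod.ext
  · simp
    field_simp
    linear_combination e1
  · simp
    field_simp
    linear_combination e2

lemma dz_slit {a b x : Pt} (h : x ∉ segment ℝ a b) : dz (a - x) (b - x) ∈ Complex.slitPlane := by
  rw [Complex.mem_slitPlane_iff]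
  by_contra hc
  push Not at hc
  apply h
  refine mem_seg_of a b x ?_ ?_
  · rw [← dt_eq]; exact hc.2
  · simpa [dz] using hc.1

lemma th_anti {a b x : Pt} (h : x ∉ segment ℝ a b) : th b a x = - th a b x := by
  have e : dz (b - x) (a - x) = (starRingEnd ℂ) (dz (a - x) (b - x)) := by
    apply Complex.ext <;> simp [dz, det2] <;> ring
  rw [th, e, Complex.arg_conj, if_neg]
  · rfl
  · exact Complex.slitPlane_arg_ne_pi (dz_slit h)

lemma dz_cont (a b : Pt) : Continuous fun x : Pt => dz (a - x) (b - x) := by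
  have : (fun x : Pt => dz (a - x) (b - x)) = fun x : Pt =>
      (((a.1 - x.1) * (b.1 - x.1) + (a.2 - x.2) * (b.2 - x.2) : ℝ) : ℂ) +
        (((a.1 - x.1) * (b.2 - x.2) - (a.2 - x.2) * (b.1 - x.1) : ℝ) : ℂ) * Complex.I := by
    funext x
    apply Complex.ext <;> simp [dz, det2]
  rw [this]
  fun_prop

lemma th_cont {a b x : Pt} (h : x ∉ segment ℝ a b) : ContinuousAt (fun y => th a b y) x :=
  ContinuousAt.comp (f := fun y : Pt => dz (a - y) (b - y))
    (Complex.continuousAt_arg (dz_slit h)) (dz_cont a b).continuousAt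

lemma th_pos {a b x : Pt} (h : 0 < dt a b x) : 0 < th a b x ∧ th a b x < Real.pi := by
  rw [← dt_eq] at h
  have hi : 0 < (dz (a - x) (b - x)).im := h
  constructor
  · have := Complex.arg_nonneg_iff.2 hi.le
    rcases this.lt_or_eq with h1 | h1
    · exact h1
    · have := Complex.arg_eq_zero_iff.1 h1.symm
      linarith [this.2]
  · rcases (Complex.arg_le_pi (dz (a - x) (b - x))).lt_or_eq with h1 | h1
    · exact h1
    · have := Complex.arg_eq_pi_iff.1 h1
      linarith [this.2]

lemma th_neg {a b x : Pt} (h : dt a b x < 0) : th a b x < 0 ∧ - Real.pi < th a b x := by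
  rw [← dt_eq] at h
  have hi : (dz (a - x) (b - x)).im < 0 := h
  exact ⟨Complex.arg_neg_iff.2 hi, Complex.neg_pi_lt_arg _⟩

lemma sum_tele {n : ℕ} [NeZero n] {M : Type*} [AddCommGroup M] (g : Fin n → M) :
    ∑ i : Fin n, (g (i + 1) - g i) = 0 := by
  rw [Finset.sum_sub_distrib, sub_eq_zero]
  exact Equiv.sum_comp (Equiv.addRight (1 : Fin n)) g

lemma Wd_int {n : ℕ} [NeZero n] (v : Fin n → Pt) (x : Pt) (hx : ∀ i, v i ≠ x) :
    ∃ k : ℤ, Wd v x = 2 * Real.pi * k := by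
  have h : ((Wd v x : ℝ) : Real.Angle) = 0 := by
    have e : ((Wd v x : ℝ) : Real.Angle) = ∑ i : Fin n, ((th (v i) (v (i + 1)) x : ℝ) : Real.Angle) := by
      rw [Wd]
      exact map_sum Real.Angle.coeHom _ _
    rw [e]
    have : ∀ i, ((th (v i) (v (i + 1)) x : ℝ) : Real.Angle) =
        (fun i => ((Complex.arg (cx (v i - x)) : ℝ) : Real.Angle)) (i + 1) -
        (fun i => ((Complex.arg (cx (v i - x)) : ℝ) : Real.Angle)) i := fun i =>
      arg_dz _ _ (sub_ne_zero.2 (hx i)) (sub_ne_zero.2 (hx (i + 1)))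
    rw [Finset.sum_congr rfl fun i _ => this i]
    exact sum_tele _
  rw [show (0 : Real.Angle) = ((0 : ℝ) : Real.Angle) by simp, Real.Angle.angle_eq_iff_two_pi_dvd_sub] at h
  obtain ⟨k, hk⟩ := h
  exact ⟨k, by linarith⟩

/-- the angle is a difference of potentials if both endpoints are in a half plane. -/
lemma th_half {a b x u : Pt} (ha : 0 < u.1 * (a.1 - x.1) + u.2 * (a.2 - x.2))
    (hb : 0 < u.1 * (b.1 - x.1) + u.2 * (b.2 - x.2)) :
    th a b x = Complex.arg (dz u (b - x)) - Complex.arg (dz u (a - x)) := by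
  have hu : u ≠ 0 := by rintro rfl; simp at ha
  have hane : a - x ≠ 0 := by
    intro h
    have h1 : a.1 - x.1 = 0 := congrArg Prod.fst h
    have h2 : a.2 - x.2 = 0 := congrArg Prod.snd h
    rw [h1, h2] at ha; simp at ha
  have hbne : b - x ≠ 0 := by
    intro h
    have h1 : b.1 - x.1 = 0 := congrArg Prod.fst h
    have h2 : b.2 - x.2 = 0 := congrArg Prod.snd h
    rw [h1, h2] at hb; simp at hb
  have e : ((th a b x : ℝ) : Real.Angle) =
      ((Complex.arg (dz u (b - x)) - Complex.arg (dz u (a - x)) : ℝ) : Real.Angle) := by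
    rw [th, Real.Angle.coe_sub, arg_dz _ _ hane hbne, arg_dz _ _ hu hbne, arg_dz _ _ hu hane]
    abel
  have h1 : |Complex.arg (dz u (b - x))| < Real.pi / 2 := by
    rw [Complex.abs_arg_lt_pi_div_two_iff]; left; simpa [dz] using hb
  have h2 : |Complex.arg (dz u (a - x))| < Real.pi / 2 := by
    rw [Complex.abs_arg_lt_pi_div_two_iff]; left; simpa [dz] using ha
  rw [abs_lt] at h1 h2
  have e1 := congrArg Real.Angle.toReal e
  rw [Real.Angle.toReal_coe_eq_self_iff_mem_Ioc.2, Real.Angle.toReal_coe_eq_self_iff_mem_Ioc.2] at e1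
  · exact e1
  · constructor <;> linarith [h1.1, h1.2, h2.1, h2.2]
  · exact ⟨Complex.neg_pi_lt_arg _, Complex.arg_le_pi _⟩

lemma Wd_half {n : ℕ} [NeZero n] (v : Fin n → Pt) (x u : Pt)
    (h : ∀ i, 0 < u.1 * ((v i).1 - x.1) + u.2 * ((v i).2 - x.2)) : Wd v x = 0 := by
  rw [Wd, Finset.sum_congr rfl fun i _ => th_half (h i) (h (i + 1))]
  exact sum_tele (fun i => Complex.arg (dz u (v i - x)))

/-- winding number -/
noncomputable def wn {n : ℕ} [NeZero n] (v : Fin n → Pt) (x : Pt) : ℤ :=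
  round (Wd v x / (2 * Real.pi))

lemma vertex_mem_bd {n : ℕ} [NeZero n] (v : Fin n → Pt) (i : Fin n) : v i ∈ polyBoundary v :=
  Set.mem_iUnion.2 ⟨i, left_mem_segment ℝ _ _⟩

lemma Wd_wn {n : ℕ} [NeZero n] {v : Fin n → Pt} {x : Pt} (hx : x ∉ polyBoundary v) :
    Wd v x = 2 * Real.pi * wn v x := by
  obtain ⟨k, hk⟩ := Wd_int v x (fun i h => hx (h ▸ vertex_mem_bd v i))
  have : wn v x = k := by
    rw [wn, hk, mul_div_cancel_left₀ _ (by positivity)]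
    exact round_intCast k
  rw [this, hk]

lemma wn_half {n : ℕ} [NeZero n] (v : Fin n → Pt) (x u : Pt)
    (h : ∀ i, 0 < u.1 * ((v i).1 - x.1) + u.2 * ((v i).2 - x.2)) : wn v x = 0 := by
  rw [wn, Wd_half v x u h]; simp

lemma seg_closed (a b : Pt) : IsClosed (segment ℝ a b) := by
  have : IsCompact (segment ℝ a b) := by
    rw [segment_eq_image_lineMap]
    exact isCompact_Icc.image AffineMap.lineMap_continuous
  exact this.isClosed

lemma bd_closed {n : ℕ} [NeZero n] (v : Fin n → Pt) : IsClosed (polyBoundary v) :=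
  isClosed_iUnion_of_finite fun _ => seg_closed _ _

lemma Wd_contAt {n : ℕ} [NeZero n] {v : Fin n → Pt} {x : Pt} (hx : x ∉ polyBoundary v) :
    ContinuousAt (Wd v) x := by
  have : ∀ i, x ∉ segment ℝ (v i) (v (i + 1)) := fun i h => hx (Set.mem_iUnion.2 ⟨i, h⟩)
  unfold Wd
  exact tendsto_finsetSum _ fun i _ => th_cont (this i)

lemma wn_contOn {n : ℕ} [NeZero n] (v : Fin n → Pt) : ContinuousOn (wn v) (polyBoundary v)ᶜ := by
  rw [Int.isClosedEmbedding_coe_real.isInducing.continuousOn_iff]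
  have h : ContinuousOn (fun x => Wd v x / (2 * Real.pi)) (polyBoundary v)ᶜ := fun x hx =>
    ((Wd_contAt hx).div_const _).continuousWithinAt
  refine h.congr fun x hx => ?_
  simp only [Function.comp]
  rw [Wd_wn hx, mul_div_cancel_left₀ _ (by positivity)]

lemma wn_const {n : ℕ} [NeZero n] {v : Fin n → Pt} {S : Set Pt} (hS : IsPreconnected S)
    (hSb : S ⊆ (polyBoundary v)ᶜ) {x y : Pt} (hx : x ∈ S) (hy : y ∈ S) : wn v x = wn v y :=
  hS.constant ((wn_contOn v).mono hSb) hx hy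

lemma wn_open {n : ℕ} [NeZero n] (v : Fin n → Pt) (k : ℤ) :
    IsOpen {x | x ∉ polyBoundary v ∧ wn v x = k} :=
  (wn_contOn v).isOpen_inter_preimage (bd_closed v).isOpen_compl (isOpen_discrete {k})
end part1

section part2
open Filter Topology

/-! ## Local structure near the boundary -/

/-- side of a directed line -/
def Side (e : ℝ) (a b : Pt) : Set Pt := {x | 0 < e * dt a b x}

lemma dt_cont (a b : Pt) : Continuous (dt a b) := by
  unfold dt det2; fun_prop

lemma Side_open (e : ℝ) (a b : Pt) : IsOpen (Side e a b) :=
  isOpen_lt continuous_const (continuous_const.mul (dt_cont a b))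

lemma dt_comb (a b x y : Pt) (s t : ℝ) (h : s + t = 1) :
    dt a b (s • x + t • y) = s * dt a b x + t * dt a b y := by
  obtain rfl : s = 1 - t := by linarith
  simp [dt, det2]; ring

lemma dt_left (a b : Pt) : dt a b a = 0 := by simp [dt, det2]
lemma dt_right (a b : Pt) : dt a b b = 0 := by simp [dt, det2]; ring

lemma dt_seg {a b x : Pt} (h : x ∈ segment ℝ a b) : dt a b x = 0 := by
  obtain ⟨s, t, hs, ht, hst, rfl⟩ := h
  rw [dt_comb _ _ _ _ _ _ hst, dt_left, dt_right]; simp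

lemma Side_convex (e : ℝ) (a b : Pt) : Convex ℝ (Side e a b) := by
  intro x hx y hy s t hs ht hst
  simp only [Side, Set.mem_ofPred_eq] at *
  rw [dt_comb _ _ _ _ _ _ hst]
  rcases hs.eq_or_lt with h | h
  · subst h; obtain rfl : t = 1 := by linarith
    simpa using hy
  · have : 0 < s * (e * dt a b x) := mul_pos h hx
    have : 0 ≤ t * (e * dt a b y) := mul_nonneg ht hy.le
    linarith

/-- unit perturbation direction -/
def rot (p : Pt) : Pt := (-p.2, p.1)

lemma pos_of_ne {a b : Pt} (h : a ≠ b) : 0 < (b.1 - a.1) ^ 2 + (b.2 - a.2) ^ 2 := by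
  by_contra hc
  apply h
  apply Prod.ext <;> nlinarith [sq_nonneg (b.1 - a.1), sq_nonneg (b.2 - a.2)]

lemma dt_add (a b m w : Pt) : dt a b (m + w) = dt a b m + det2 (b - a) w := by
  simp [dt, det2]; ring

lemma det2_smul (p w : Pt) (t : ℝ) : det2 p (t • w) = t * det2 p w := by
  simp [det2]; ring

lemma det2_smul_left (p w : Pt) (t : ℝ) : det2 (t • p) w = t * det2 p w := by
  simp [det2]; ring

/-- If `w` points strictly to side `e` then small multiples are near `m`. -/
lemma tendsto_add_smul (m w : Pt) : Tendsto (fun t : ℝ => m + t • w) (𝓝[>] 0) (𝓝 m) := by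
  have : Tendsto (fun t : ℝ => m + t • w) (𝓝 0) (𝓝 (m + (0:ℝ) • w)) :=
    (Continuous.tendsto (by fun_prop) _)
  simp at this
  exact this.mono_left nhdsWithin_le_nhds

lemma Side_neBot {e : ℝ} (he : e ≠ 0) {a b m : Pt} (hab : a ≠ b) (hm : dt a b m = 0) :
    (𝓝[Side e a b] m).NeBot := by
  have h1 : Tendsto (fun t : ℝ => m + t • (e • rot (b - a))) (𝓝[>] 0) (𝓝[Side e a b] m) := by
    refine tendsto_nhdsWithin_iff.2 ⟨tendsto_add_smul _ _, ?_⟩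
    filter_upwards [self_mem_nhdsWithin] with t ht
    simp only [Set.mem_Ioi] at ht
    have := pos_of_ne hab
    simp only [Side, Set.mem_ofPred_eq, dt_add, hm, det2_smul]
    have e1 : det2 (b - a) (rot (b - a)) = (b.1 - a.1) ^ 2 + (b.2 - a.2) ^ 2 := by
      simp [det2, rot]; ring
    rw [e1]
    have : 0 < e ^ 2 * (t * ((b.1 - a.1) ^ 2 + (b.2 - a.2) ^ 2)) := by positivity
    linarith
  exact h1.neBot

section simple
variable {n : ℕ} [NeZero n] {v : Fin n → Pt}

lemma add_one_ne (hn : 3 ≤ n) (i : Fin n) : i + 1 ≠ i := by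
  intro h
  have h2 : (1 : Fin n) = 0 := by simpa using h
  have := congrArg Fin.val h2
  rw [Fin.val_one', Nat.mod_eq_of_lt (by omega)] at this
  simp at this

lemma add_two_ne (hn : 3 ≤ n) (i : Fin n) : i + 1 + 1 ≠ i := by
  intro h
  have h2 : (1 : Fin n) + 1 = 0 := by simpa [add_assoc] using h
  have := congrArg Fin.val h2
  rw [Fin.val_add, Fin.val_one', Nat.mod_eq_of_lt (by omega : 1 < n),
    Nat.mod_eq_of_lt (by omega)] at this
  simp at this

lemma edge_ne (hv : IsSimplePolygon v) (i : Fin n) : v i ≠ v (i + 1) := fun h =>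
  add_one_ne hv.1 i (hv.2.1 h).symm

lemma openSeg_ne {a b m : Pt} (hab : a ≠ b) (h : m ∈ openSegment ℝ a b) : m ≠ a ∧ m ≠ b := by
  have h1 := openSegment_subset_segment ℝ a b h
  constructor
  · rintro rfl
    exact hab (left_mem_openSegment_iff.1 h)
  · rintro rfl
    exact hab (right_mem_openSegment_iff.1 h)

lemma open_edge_other (hv : IsSimplePolygon v) {i j : Fin n} (hij : j ≠ i) {m : Pt}
    (hm : m ∈ openSegment ℝ (v i) (v (i + 1))) : m ∉ segment ℝ (v j) (v (j + 1)) := by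
  intro hmj
  have h := hv.2.2 i j hij.symm ⟨openSegment_subset_segment _ _ _ hm, hmj⟩
  have := openSeg_ne (edge_ne hv i) hm
  rcases h.1 with h1 | h1
  · exact this.1 h1
  · exact this.2 h1

lemma near_edge {i : Fin n} {m : Pt}
    (ho : ∀ j, j ≠ i → m ∉ segment ℝ (v j) (v (j + 1))) :
    ∀ᶠ y in 𝓝 m, dt (v i) (v (i + 1)) y ≠ 0 → y ∉ polyBoundary v := by
  have : ∀ᶠ y in 𝓝 m, ∀ j, j ≠ i → y ∉ segment ℝ (v j) (v (j + 1)) := by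
    rw [eventually_all]
    intro j
    by_cases hj : j = i
    · simp [hj]
    · filter_upwards [(seg_closed (v j) (v (j + 1))).isOpen_compl.mem_nhds (ho j hj)] with y hy _
      exact hy
  filter_upwards [this] with y hy hd hb
  obtain ⟨j, hj⟩ := Set.mem_iUnion.1 hb
  by_cases hji : j = i
  · subst hji; exact hd (dt_seg hj)
  · exact hy j hji hj

/-- crossing an edge changes the winding number by one -/
lemma jump {i : Fin n} {m : Pt} (hne : v i ≠ v (i + 1))
    (hm : m ∈ openSegment ℝ (v i) (v (i + 1)))
    (ho : ∀ j, j ≠ i → m ∉ segment ℝ (v j) (v (j + 1))) :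
    ∃ U ∈ 𝓝 m, (∀ x ∈ U, dt (v i) (v (i + 1)) x ≠ 0 → x ∉ polyBoundary v) ∧
      ∀ x ∈ U, ∀ y ∈ U, 0 < dt (v i) (v (i + 1)) x → dt (v i) (v (i + 1)) y < 0 →
        wn v x = wn v y + 1 := by
  set S : Pt → ℝ := fun x => ∑ j ∈ Finset.univ.erase i, th (v j) (v (j + 1)) x with hS
  have hSc : ContinuousAt S m := tendsto_finsetSum _ fun j hj =>
    th_cont (ho j (Finset.ne_of_mem_erase hj))
  have hpi := Real.pi_pos
  have h1 : ∀ᶠ x in 𝓝 m, |S x - S m| < Real.pi / 4 := by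
    have := Metric.tendsto_nhds.1 hSc (Real.pi / 4) (by positivity)
    simpa [Real.dist_eq] using this
  have h2 : ∀ᶠ x in 𝓝 m, (dz (v i - x) (v (i + 1) - x)).re < 0 := by
    have hc : Continuous fun x : Pt => (dz (v i - x) (v (i + 1) - x)).re :=
      Complex.continuous_re.comp (dz_cont _ _)
    apply hc.continuousAt.eventually_lt continuousAt_const
    obtain ⟨s, t, hs, ht, hst, rfl⟩ := hm
    obtain rfl : s = 1 - t := by linarith
    have := mul_pos (mul_pos hs ht) (pos_of_ne hne)
    simp [dz]
    linarith
  refine ⟨{x | (dt (v i) (v (i + 1)) x ≠ 0 → x ∉ polyBoundary v) ∧ |S x - S m| < Real.pi / 4 ∧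
    (dz (v i - x) (v (i + 1) - x)).re < 0}, (near_edge ho).and (h1.and h2), fun x hx => hx.1, ?_⟩
  rintro x ⟨hx1, hx2, hx3⟩ y ⟨hy1, hy2, hy3⟩ hx hy
  have e : ∀ z, Wd v z = S z + th (v i) (v (i + 1)) z := fun z =>
    (Finset.sum_erase_add _ _ (Finset.mem_univ i)).symm
  have w1 := Wd_wn (hx1 hx.ne')
  have w2 := Wd_wn (hy1 hy.ne)
  rw [e] at w1 w2
  have a1 := th_pos hx
  have a2 := th_neg hy
  have b1 : Real.pi / 2 < th (v i) (v (i + 1)) x := by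
    by_contra hc
    have : |Complex.arg (dz (v i - x) (v (i + 1) - x))| ≤ Real.pi / 2 := by
      rw [abs_le]; constructor
      · have := a1.1; unfold th at this; linarith
      · exact not_lt.1 hc
    rw [Complex.abs_arg_le_pi_div_two_iff] at this
    linarith
  have b2 : th (v i) (v (i + 1)) y < - (Real.pi / 2) := by
    by_contra hc
    have : |Complex.arg (dz (v i - y) (v (i + 1) - y))| ≤ Real.pi / 2 := by
      rw [abs_le]; constructor
      · exact not_lt.1 hc
      · have := a2.1; unfold th at this; linarith
    rw [Complex.abs_arg_le_pi_div_two_iff] at this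
    linarith
  rw [abs_lt] at hx2 hy2
  have c1 : 2 * Real.pi * ((wn v x - wn v y : ℤ) : ℝ) =
      S x + th (v i) (v (i + 1)) x - (S y + th (v i) (v (i + 1)) y) := by
    push_cast; linarith
  have c2 : (0:ℝ) < ((wn v x - wn v y : ℤ) : ℝ) := by
    by_contra hc
    have : 2 * Real.pi * ((wn v x - wn v y : ℤ) : ℝ) ≤ 0 :=
      mul_nonpos_of_nonneg_of_nonpos (by positivity) (not_lt.1 hc)
    linarith
  have c3 : ((wn v x - wn v y : ℤ) : ℝ) < 2 := by
    by_contra hc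
    have : 2 * Real.pi * 2 ≤ 2 * Real.pi * ((wn v x - wn v y : ℤ) : ℝ) :=
      mul_le_mul_of_nonneg_left (not_lt.1 hc) (by positivity)
    linarith
  have c4 : 0 < wn v x - wn v y := by exact_mod_cast c2
  have c5 : wn v x - wn v y < 2 := by exact_mod_cast c3
  omega

end simple
end part2

section part3
open Filter Topology

section simple
variable {n : ℕ} [NeZero n] {v : Fin n → Pt}

/-- two half-neighbourhoods are joined by a connected set off the boundary -/
def Lk (v : Fin n → Pt) (e : ℝ) (i : Fin n) (m : Pt) (i' : Fin n) (m' : Pt) : Prop :=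
  ∃ T : Set Pt, IsPreconnected T ∧ T ⊆ (polyBoundary v)ᶜ ∧
    T ∈ 𝓝[Side e (v i) (v (i + 1))] m ∧ T ∈ 𝓝[Side e (v i') (v (i' + 1))] m'

lemma Lk.symm {e : ℝ} {i i' : Fin n} {m m' : Pt} (h : Lk v e i m i' m') : Lk v e i' m' i m := by
  obtain ⟨T, h1, h2, h3, h4⟩ := h
  exact ⟨T, h1, h2, h4, h3⟩

lemma Lk.trans (hv : IsSimplePolygon v) {e : ℝ} (he : e ≠ 0) {i i' i'' : Fin n} {m m' m'' : Pt}
    (hm : m' ∈ segment ℝ (v i') (v (i' + 1)))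
    (h : Lk v e i m i' m') (h' : Lk v e i' m' i'' m'') : Lk v e i m i'' m'' := by
  obtain ⟨T, h1, h2, h3, h4⟩ := h
  obtain ⟨T', h1', h2', h3', h4'⟩ := h'
  have := Side_neBot he (edge_ne hv i') (dt_seg hm)
  obtain ⟨x, hx, hx'⟩ := Filter.nonempty_of_mem (Filter.inter_mem h4 h3')
  exact ⟨T ∪ T', h1.union x hx hx' h1', Set.union_subset h2 h2',
    mem_of_superset h3 Set.subset_union_left, mem_of_superset h4' Set.subset_union_right⟩

lemma openSeg_preconn (a b : Pt) : IsPreconnected (openSegment ℝ a b) :=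
  (convex_openSegment a b).isPreconnected

lemma Lk_edge (hv : IsSimplePolygon v) {e : ℝ} (he : e ≠ 0) {i : Fin n} {m m' : Pt}
    (hm : m ∈ openSegment ℝ (v i) (v (i + 1))) (hm' : m' ∈ openSegment ℝ (v i) (v (i + 1))) :
    Lk v e i m i m' := by
  have key := (openSeg_preconn (v i) (v (i + 1))).induction₂
    (fun x y => x ∈ openSegment ℝ (v i) (v (i + 1)) → y ∈ openSegment ℝ (v i) (v (i + 1)) →
      Lk v e i x i y)
    (fun x hx => ?_) (fun x y z hx hy hz h1 h2 a b => ?_) (fun x y hx hy h1 a b => (h1 b a).symm)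
    hm hm'
  · exact key hm hm'
  · obtain ⟨r, hr, hb⟩ := Metric.eventually_nhds_iff_ball.1
      (near_edge (fun j hj => open_edge_other hv hj hx))
    filter_upwards [mem_nhdsWithin_of_mem_nhds (Metric.ball_mem_nhds x hr)] with y hy _ hy'
    refine ⟨Metric.ball x r ∩ Side e (v i) (v (i + 1)),
      ((convex_ball x r).inter (Side_convex _ _ _)).isPreconnected, ?_, ?_, ?_⟩
    · intro z hz
      refine hb z hz.1 ?_
      intro h0
      have := hz.2
      simp [Side, h0] at this
    · rw [Set.inter_comm]
      exact inter_mem_nhdsWithin _ (Metric.ball_mem_nhds x hr)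
    · rw [Set.inter_comm]
      exact inter_mem_nhdsWithin _ (Metric.isOpen_ball.mem_nhds hy)
  · exact Lk.trans hv he (openSegment_subset_segment _ _ _ hy) (h1 a hy) (h2 hy b)

/-- consecutive edges do not fold back -/
lemma no_fold (hv : IsSimplePolygon v) (i : Fin n)
    (h0 : det2 (v (i + 1) - v i) (v (i + 1 + 1) - v (i + 1)) = 0) :
    0 < (v (i + 1) - v i).1 * (v (i + 1 + 1) - v (i + 1)).1 +
      (v (i + 1) - v i).2 * (v (i + 1 + 1) - v (i + 1)).2 := by
  by_contra hc
  have hi := hv.2.2 i (i + 1) (add_one_ne hv.1 i).symm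
  have n1 := edge_ne hv i
  have n2 := edge_ne hv (i + 1)
  have n3 : v i ≠ v (i + 1 + 1) := fun h => add_two_ne hv.1 i (hv.2.1 h).symm
  have hA : v i ∉ segment ℝ (v (i + 1)) (v (i + 1 + 1)) := fun h => by
    rcases (hi ⟨left_mem_segment _ _ _, h⟩).2 with h | h
    · exact n1 h
    · exact n3 h
  have hC : v (i + 1 + 1) ∉ segment ℝ (v i) (v (i + 1)) := fun h => by
    rcases (hi ⟨h, right_mem_segment _ _ _⟩).1 with h | h
    · exact n3 h.symm
    · exact n2 h.symm
  generalize v i = a at *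
  generalize v (i + 1) = b at *
  generalize v (i + 1 + 1) = c at *
  have hA' := mt (mem_seg_of b c a (by rw [← h0]; simp [dt, det2]; ring)) hA
  have hC' := mt (mem_seg_of a b c (by rw [← h0]; simp [dt, det2]; ring)) hC
  simp only [det2, Prod.fst_sub, Prod.snd_sub] at *
  obtain ⟨a1, a2⟩ := a
  obtain ⟨b1, b2⟩ := b
  obtain ⟨c1, c2⟩ := c
  simp only at *
  set p1 := b1 - a1
  set p2 := b2 - a2
  set q1 := c1 - b1
  set q2 := c2 - b2
  have e1 : c1 - a1 = p1 + q1 := by ring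
  have e2 : c2 - a2 = p2 + q2 := by ring
  rw [e1, e2] at hA'
  have hC'' : 0 < (p1 + q1) * q1 + (p2 + q2) * q2 := by
    have : (a1 - c1) * (b1 - c1) + (a2 - c2) * (b2 - c2) = (p1 + q1) * q1 + (p2 + q2) * q2 := by ring
    rw [this] at hC'; exact not_le.1 hC'
  have hA'' := not_le.1 hA'
  have hc' := not_lt.1 hc
  have key : (p1 ^ 2 + p2 ^ 2) * (q1 ^ 2 + q2 ^ 2) = (p1 * q1 + p2 * q2) ^ 2 := by
    linear_combination (p1 * q2 - p2 * q1) * h0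
  nlinarith [mul_pos hA'' hC'']

lemma near_vertex (hv : IsSimplePolygon v) (i : Fin n) :
    ∀ᶠ y in 𝓝 (v (i + 1)), y ∉ segment ℝ (v i) (v (i + 1)) →
      y ∉ segment ℝ (v (i + 1)) (v (i + 1 + 1)) → y ∉ polyBoundary v := by
  have : ∀ᶠ y in 𝓝 (v (i + 1)), ∀ j, j ≠ i → j ≠ i + 1 → y ∉ segment ℝ (v j) (v (j + 1)) := by
    rw [eventually_all]
    intro j
    by_cases hj : j = i
    · simp [hj]
    by_cases hj' : j = i + 1
    · simp [hj']
    have : v (i + 1) ∉ segment ℝ (v j) (v (j + 1)) := by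
      intro h
      rcases (hv.2.2 j (i + 1) hj' ⟨h, left_mem_segment _ _ _⟩).1 with h | h
      · exact hj' (hv.2.1 h).symm
      · exact hj (add_right_cancel (hv.2.1 h)).symm
    filter_upwards [(seg_closed (v j) (v (j + 1))).isOpen_compl.mem_nhds this] with y hy _ _
    exact hy
  filter_upwards [this] with y hy h1 h2 hb
  obtain ⟨j, hj⟩ := Set.mem_iUnion.1 hb
  by_cases hji : j = i
  · subst hji; exact h1 hj
  by_cases hji' : j = i + 1
  · subst hji'; exact h2 hj
  exact hy j hji hji' hj

lemma combo_near (b a : Pt) {r : ℝ} (hr : 0 < r) :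
    ∃ t : ℝ, 0 < t ∧ t < 1 ∧ b + t • (a - b) ∈ Metric.ball b r ∧
      b + t • (a - b) ∈ openSegment ℝ a b := by
  have h := (tendsto_add_smul b (a - b)).eventually (Metric.ball_mem_nhds b hr)
  have h2 : ∀ᶠ t : ℝ in 𝓝[>] 0, t ∈ Set.Ioo (0:ℝ) 1 := Ioo_mem_nhdsGT one_pos
  obtain ⟨t, ht, ht'⟩ := (h.and h2).exists
  refine ⟨t, ht'.1, ht'.2, ht, t, 1 - t, ht'.1, by linarith [ht'.2], by ring, ?_⟩
  module

lemma Lk_vertex (hv : IsSimplePolygon v) {e : ℝ} (he : e ≠ 0) (i : Fin n) :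
    ∃ m ∈ openSegment ℝ (v i) (v (i + 1)), ∃ m' ∈ openSegment ℝ (v (i + 1)) (v (i + 1 + 1)),
      Lk v e i m (i + 1) m' := by
  obtain ⟨r, hr, hball⟩ := Metric.eventually_nhds_iff_ball.1 (near_vertex hv i)
  have nf := no_fold hv i
  unfold Lk
  have n1 := edge_ne hv i
  generalize hB : polyBoundary v = B at *
  generalize v i = a at *
  generalize v (i + 1) = b at *
  generalize v (i + 1 + 1) = c at *
  obtain ⟨t, ht0, ht1, htb, hm⟩ := combo_near b a hr
  obtain ⟨t', ht0', ht1', htb', hm'⟩ := combo_near b c hr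
  refine ⟨_, hm, _, (openSegment_symm ℝ c b) ▸ hm', ?_⟩
  set D := det2 (b - a) (c - b) with hD
  have d1 : ∀ s : ℝ, dt b c (b + s • (a - b)) = s * D := fun s => by
    simp [dt, det2, hD]; ring
  have d2 : ∀ s : ℝ, dt a b (b + s • (c - b)) = s * D := fun s => by
    simp [dt, det2, hD]; ring
  have s1 : ∀ y ∈ segment ℝ a b, ∃ s : ℝ, 0 ≤ s ∧ y = b + s • (a - b) := by
    rintro y ⟨s, s', hs, hs', hss, rfl⟩
    refine ⟨s, hs, ?_⟩
    obtain rfl : s' = 1 - s := by linarith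
    module
  have s2 : ∀ y ∈ segment ℝ b c, ∃ s : ℝ, 0 ≤ s ∧ y = b + s • (c - b) := by
    rintro y ⟨s', s, hs', hs, hss, rfl⟩
    refine ⟨s, hs, ?_⟩
    obtain rfl : s' = 1 - s := by linarith
    module
  rcases lt_or_ge 0 (e * D) with hpos | hneg
  · refine ⟨Metric.ball b r ∩ (Side e a b ∩ Side e b c),
      ((convex_ball _ _).inter ((Side_convex _ _ _).inter (Side_convex _ _ _))).isPreconnected,
      ?_, ?_, ?_⟩
    · rintro y ⟨y1, y2, y3⟩
      refine hball y y1 ?_ ?_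
      · intro h; have := dt_seg h; simp [Side, this] at y2
      · intro h; have := dt_seg h; simp [Side, this] at y3
    · have : Metric.ball b r ∩ (Side e a b ∩ Side e b c) =
        Side e a b ∩ (Metric.ball b r ∩ Side e b c) := by ext; simp; tauto
      rw [this]
      refine inter_mem_nhdsWithin _ ((Metric.isOpen_ball.inter (Side_open _ _ _)).mem_nhds ⟨htb, ?_⟩)
      show 0 < e * _
      rw [d1]; have := mul_pos ht0 hpos; linarith
    · have : Metric.ball b r ∩ (Side e a b ∩ Side e b c) =
        Side e b c ∩ (Metric.ball b r ∩ Side e a b) := by ext; simp; tauto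
      rw [this]
      refine inter_mem_nhdsWithin _ ((Metric.isOpen_ball.inter (Side_open _ _ _)).mem_nhds ⟨htb', ?_⟩)
      show 0 < e * _
      rw [d2]; have := mul_pos ht0' hpos; linarith
  · have hw : ∃ w : Pt, 0 < e * det2 (b - a) w ∧ 0 < e * det2 (c - b) w := by
      rcases hneg.lt_or_eq with h | h
      · refine ⟨-((a - b) + (c - b)), ?_, ?_⟩
        · have : det2 (b - a) (-((a - b) + (c - b))) = - D := by simp [det2, hD]; ring
          rw [this]; linarith
        · have : det2 (c - b) (-((a - b) + (c - b))) = - D := by simp [det2, hD]; ring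
          rw [this]; linarith
      · have hD0 : D = 0 := by simpa [he] using h
        have nf' := nf hD0
        refine ⟨e • rot (b - a), ?_, ?_⟩
        · have : e * det2 (b - a) (e • rot (b - a)) =
            e ^ 2 * ((b.1 - a.1) ^ 2 + (b.2 - a.2) ^ 2) := by simp [det2, rot]; ring
          rw [this]; have := pos_of_ne n1; positivity
        · have : e * det2 (c - b) (e • rot (b - a)) =
            e ^ 2 * ((b - a).1 * (c - b).1 + (b - a).2 * (c - b).2) := by simp [det2, rot]; ring
          rw [this]; positivity
    obtain ⟨w, hw1, hw2⟩ := hw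
    have hcp : ∃ z ∈ Metric.ball b r, z ∈ Side e a b ∧ z ∈ Side e b c := by
      obtain ⟨s, hs, hs'⟩ := (((tendsto_add_smul b w).eventually
        (Metric.ball_mem_nhds b hr)).and self_mem_nhdsWithin).exists
      replace hs' : 0 < s := hs'
      refine ⟨_, hs, ?_, ?_⟩
      · show 0 < e * _
        rw [dt_add, dt_right, det2_smul]; have := mul_pos hs' hw1; linarith
      · show 0 < e * _
        rw [dt_add, dt_left, det2_smul]; have := mul_pos hs' hw2; linarith
    obtain ⟨z, hz, hz1, hz2⟩ := hcp
    refine ⟨(Metric.ball b r ∩ Side e a b) ∪ (Metric.ball b r ∩ Side e b c),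
      IsPreconnected.union z ⟨hz, hz1⟩ ⟨hz, hz2⟩
        ((convex_ball _ _).inter (Side_convex _ _ _)).isPreconnected
        ((convex_ball _ _).inter (Side_convex _ _ _)).isPreconnected, ?_, ?_, ?_⟩
    · have t1 : ∀ y ∈ segment ℝ a b, y ∉ Side e a b ∧ y ∉ Side e b c := by
        intro y hy
        constructor
        · intro h; simp [Side, dt_seg hy] at h
        · obtain ⟨s, hs, rfl⟩ := s1 y hy
          intro h
          have h' : 0 < e * dt b c (b + s • (a - b)) := h
          rw [d1] at h'
          have := mul_nonneg hs (neg_nonneg.2 hneg)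
          linarith
      have t2 : ∀ y ∈ segment ℝ b c, y ∉ Side e a b ∧ y ∉ Side e b c := by
        intro y hy
        constructor
        · obtain ⟨s, hs, rfl⟩ := s2 y hy
          intro h
          have h' : 0 < e * dt a b (b + s • (c - b)) := h
          rw [d2] at h'
          have := mul_nonneg hs (neg_nonneg.2 hneg)
          linarith
        · intro h; simp [Side, dt_seg hy] at h
      rintro y (⟨y1, y2⟩ | ⟨y1, y2⟩)
      · exact hball y y1 (fun h => (t1 y h).1 y2) (fun h => (t2 y h).1 y2)
      · exact hball y y1 (fun h => (t1 y h).2 y2) (fun h => (t2 y h).2 y2)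
    · refine mem_of_superset ?_ Set.subset_union_left
      rw [Set.inter_comm]
      exact inter_mem_nhdsWithin _ (Metric.isOpen_ball.mem_nhds htb)
    · refine mem_of_superset ?_ Set.subset_union_right
      rw [Set.inter_comm]
      exact inter_mem_nhdsWithin _ (Metric.isOpen_ball.mem_nhds htb')

lemma Lk_all (hv : IsSimplePolygon v) {e : ℝ} (he : e ≠ 0) {i j : Fin n} {m m' : Pt}
    (hm : m ∈ openSegment ℝ (v i) (v (i + 1))) (hm' : m' ∈ openSegment ℝ (v j) (v (j + 1))) :
    Lk v e i m j m' := by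
  have key : ∀ k : ℕ, ∀ m' ∈ openSegment ℝ (v (i + Fin.ofNat n k)) (v (i + Fin.ofNat n k + 1)),
      Lk v e i m (i + Fin.ofNat n k) m' := by
    intro k
    induction k with
    | zero =>
      intro m' hm'
      have h0 : i + Fin.ofNat n 0 = i := by
        have : Fin.ofNat n 0 = 0 := by apply Fin.ext; simp
        rw [this, add_zero]
      rw [h0] at hm' ⊢
      exact Lk_edge hv he hm hm'
    | succ k ih =>
      intro m' hm'
      have : i + Fin.ofNat n (k + 1) = i + Fin.ofNat n k + 1 := by
        rw [add_assoc]; congr 1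
        apply Fin.ext; simp [Fin.val_add, Fin.val_one']
      rw [this] at hm' ⊢
      obtain ⟨m1, h1, m2, h2, hL⟩ := Lk_vertex hv he (i + Fin.ofNat n k)
      exact Lk.trans hv he (openSegment_subset_segment _ _ _ h2)
        (Lk.trans hv he (openSegment_subset_segment _ _ _ h1) (ih m1 h1) hL)
        (Lk_edge hv he h2 hm')
  have := key (j - i).val
  rw [Fin.ofNat_val_eq_self, add_sub_cancel] at this
  exact this m' hm'

end simple
end part3

section part4
open Filter Topology

section simple
variable {n : ℕ} [NeZero n] {v : Fin n → Pt}

lemma near_dot {a b m : Pt} (hne : a ≠ b) (hm : m ∈ openSegment ℝ a b) :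
    ∀ᶠ x in 𝓝 m, (a.1 - x.1) * (b.1 - x.1) + (a.2 - x.2) * (b.2 - x.2) < 0 := by
  have hc : Continuous fun x : Pt => (a.1 - x.1) * (b.1 - x.1) + (a.2 - x.2) * (b.2 - x.2) := by
    fun_prop
  apply hc.continuousAt.eventually_lt continuousAt_const
  obtain ⟨s, t, hs, ht, hst, rfl⟩ := hm
  obtain rfl : s = 1 - t := by linarith
  have := mul_pos (mul_pos hs ht) (pos_of_ne hne)
  simp
  linarith

lemma open_edge_not_vertex (hv : IsSimplePolygon v) {i : Fin n} {m : Pt}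
    (hm : m ∈ openSegment ℝ (v i) (v (i + 1))) (j : Fin n) : v j ≠ m := by
  intro h
  by_cases hj : j = i
  · subst hj; exact (openSeg_ne (edge_ne hv j) hm).1 h.symm
  · exact open_edge_other hv hj hm (h ▸ left_mem_segment _ _ _)

lemma mid_mem (a b : Pt) : midpoint ℝ a b ∈ openSegment ℝ a b := by
  refine ⟨1/2, 1/2, by norm_num, by norm_num, by norm_num, ?_⟩
  rw [midpoint_eq_smul_add, ← smul_add]
  norm_num

/-- every component of the complement touches one side of all edges -/
lemma comp_side (hv : IsSimplePolygon v) {x : Pt} (hx : x ∉ polyBoundary v) :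
    ∃ e : ℝ, (e = 1 ∨ e = -1) ∧ ∀ (i : Fin n), ∀ m ∈ openSegment ℝ (v i) (v (i + 1)),
      connectedComponentIn (polyBoundary v)ᶜ x ∈ 𝓝[Side e (v i) (v (i + 1))] m := by
  set C := connectedComponentIn (polyBoundary v)ᶜ x with hC
  have hxC : x ∈ C := mem_connectedComponentIn hx
  have hCo : IsOpen C := (bd_closed v).isOpen_compl.connectedComponentIn
  have hCs : C ⊆ (polyBoundary v)ᶜ := connectedComponentIn_subset _ _
  have hT : ∀ T : Set Pt, IsPreconnected T → T ⊆ (polyBoundary v)ᶜ → (T ∩ C).Nonempty → T ⊆ C := by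
    rintro T h1 h2 ⟨z, hz, hzC⟩
    rw [hC, connectedComponentIn_eq hzC]
    exact h1.subset_connectedComponentIn hz h2
  have hcl : ∃ i, ∃ m ∈ openSegment ℝ (v i) (v (i + 1)), m ∈ closure C := by
    by_contra hcon
    push Not at hcon
    have hS : IsConnected (Set.range v)ᶜ := by
      apply Set.Countable.isConnected_compl_of_one_lt_rank
      · rw [← Module.finrank_eq_rank]; simp
      · exact (Set.finite_range v).countable
    have hsub : (Set.range v)ᶜ ⊆ C := by
      refine hS.isPreconnected.subset_of_closure_inter_subset hCo ⟨x, ?_, hxC⟩ ?_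
      · rintro ⟨i, rfl⟩; exact hx (vertex_mem_bd v i)
      · rintro y ⟨hy, hyV⟩
        have hyb : y ∉ polyBoundary v := by
          intro hb
          obtain ⟨i, hi⟩ := Set.mem_iUnion.1 hb
          rw [← insert_endpoints_openSegment] at hi
          rcases hi with h | h | h
          · exact hyV ⟨i, h.symm⟩
          · exact hyV ⟨i + 1, h.symm⟩
          · exact hcon i y h hy
        have h1 : IsPreconnected (C ∪ {y}) :=
          isPreconnected_connectedComponentIn.subset_closure Set.subset_union_left
            (Set.union_subset subset_closure (Set.singleton_subset_iff.2 hy))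
        exact hT _ h1 (Set.union_subset hCs (Set.singleton_subset_iff.2 hyb))
          ⟨x, Or.inl hxC, hxC⟩ (Or.inr rfl)
    have hm := mid_mem (v 0) (v (0 + 1))
    refine hCs (hsub ?_) (Set.mem_iUnion.2 ⟨0, openSegment_subset_segment _ _ _ hm⟩)
    rintro ⟨j, hj⟩
    exact open_edge_not_vertex hv hm j hj
  obtain ⟨i, m, hm, hmC⟩ := hcl
  have f1 : ∃ᶠ y in 𝓝 m, y ∈ C := mem_closure_iff_frequently.1 hmC
  have f2 : ∃ᶠ y in 𝓝 m, (y ∈ C ∧ y ∈ Side 1 (v i) (v (i + 1))) ∨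
      (y ∈ C ∧ y ∈ Side (-1) (v i) (v (i + 1))) := by
    refine (f1.and_eventually (near_dot (edge_ne hv i) hm)).mono ?_
    rintro y ⟨hy, hd⟩
    rcases lt_trichotomy (dt (v i) (v (i + 1)) y) 0 with h | h | h
    · right; refine ⟨hy, ?_⟩; show 0 < (-1 : ℝ) * _; linarith
    · exact absurd (Set.mem_iUnion.2 ⟨i, mem_seg_of _ _ _ h hd.le⟩) (hCs hy)
    · left; refine ⟨hy, ?_⟩; show 0 < (1 : ℝ) * _; linarith
  have f3 : ∃ e : ℝ, (e = 1 ∨ e = -1) ∧ ∃ᶠ y in 𝓝[Side e (v i) (v (i + 1))] m, y ∈ C := by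
    rcases frequently_or_distrib.1 f2 with h | h
    · exact ⟨1, Or.inl rfl, frequently_nhdsWithin_iff.2 h⟩
    · exact ⟨-1, Or.inr rfl, frequently_nhdsWithin_iff.2 h⟩
  obtain ⟨e, he, f4⟩ := f3
  have he0 : e ≠ 0 := by rcases he with rfl | rfl <;> norm_num
  refine ⟨e, he, fun j m' hm' => ?_⟩
  obtain ⟨T, t1, t2, t3, t4⟩ := Lk_all hv he0 hm hm'
  obtain ⟨z, hz1, hz2⟩ := (f4.and_eventually t3).exists
  exact mem_of_superset t4 (hT T t1 t2 ⟨z, hz2, hz1⟩)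

lemma far (v : Fin n → Pt) : ∃ R : ℝ, ∀ x : Pt, R < ‖x‖ → x ∉ polyBoundary v ∧ wn v x = 0 := by
  refine ⟨∑ i, (|(v i).1| + |(v i).2|), fun x hx => ?_⟩
  have key : ∀ i, 0 < (-x).1 * ((v i).1 - x.1) + (-x).2 * ((v i).2 - x.2) := by
    intro i
    have h1 : |(v i).1| + |(v i).2| ≤ ∑ i, (|(v i).1| + |(v i).2|) :=
      Finset.single_le_sum (f := fun i => |(v i).1| + |(v i).2|) (fun j _ => by positivity)
        (Finset.mem_univ i)
    have hx' := h1.trans_lt hx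
    have a1 : |x.1| ≤ ‖x‖ := norm_fst_le x
    have a2 : |x.2| ≤ ‖x‖ := norm_snd_le x
    have a3 : ‖x‖ ^ 2 ≤ x.1 ^ 2 + x.2 ^ 2 := by
      rw [Prod.norm_def]
      rcases max_choice ‖x.1‖ ‖x.2‖ with h | h <;> rw [h] <;> simp [sq_nonneg]
    have b1 : x.1 * (v i).1 ≤ ‖x‖ * |(v i).1| := (le_abs_self _).trans (by
      rw [abs_mul]; gcongr)
    have b2 : x.2 * (v i).2 ≤ ‖x‖ * |(v i).2| := (le_abs_self _).trans (by
      rw [abs_mul]; gcongr)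
    have hp : 0 < ‖x‖ := lt_of_le_of_lt (by positivity) hx'
    have := mul_lt_mul_of_pos_left hx' hp
    simp only [Prod.fst_neg, Prod.snd_neg]
    nlinarith
  refine ⟨fun hb => ?_, wn_half v x (-x) key⟩
  obtain ⟨i, s, t, hs, ht, hst, hh⟩ := Set.mem_iUnion.1 hb
  have k1 := key i
  have k2 := key (i + 1)
  have e1 : s * (v i).1 + t * (v (i + 1)).1 = x.1 := congrArg Prod.fst hh
  have e2 : s * (v i).2 + t * (v (i + 1)).2 = x.2 := congrArg Prod.snd hh
  have : s * ((-x).1 * ((v i).1 - x.1) + (-x).2 * ((v i).2 - x.2)) +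
      t * ((-x).1 * ((v (i + 1)).1 - x.1) + (-x).2 * ((v (i + 1)).2 - x.2)) = 0 := by
    obtain rfl : s = 1 - t := by linarith
    simp only [Prod.fst_neg, Prod.snd_neg]
    linear_combination (-x.1) * e1 + (-x.2) * e2
  rcases hs.eq_or_lt with h | h
  · subst h
    obtain rfl : t = 1 := by linarith
    linarith
  · have := mul_pos h k1
    have := mul_nonneg ht k2.le
    linarith

lemma far_conn (R : ℝ) : IsPreconnected {y : Pt | R < ‖y‖} := by
  have h : {y : Pt | R < ‖y‖} =
      (({y : Pt | R < y.1} ∪ {y : Pt | R < y.2}) ∪ {y : Pt | y.1 < -R}) ∪ {y : Pt | y.2 < -R} := by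
    ext y
    simp only [Set.mem_ofPred_eq, Set.mem_union, Prod.norm_def, lt_max_iff, Real.norm_eq_abs, lt_abs]
    constructor
    · rintro ((h | h) | (h | h))
      · tauto
      · left; right; linarith
      · tauto
      · right; linarith
    · rintro (((h | h) | h) | h)
      · tauto
      · tauto
      · left; right; linarith
      · right; right; linarith
  have c1 : IsPreconnected {y : Pt | R < y.1} :=
    (convex_halfSpace_gt (f := fun y : Pt => y.1) ⟨fun _ _ => rfl, fun _ _ => rfl⟩ R).isPreconnected
  have c2 : IsPreconnected {y : Pt | R < y.2} :=
    (convex_halfSpace_gt (f := fun y : Pt => y.2) ⟨fun _ _ => rfl, fun _ _ => rfl⟩ R).isPreconnected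
  have c3 : IsPreconnected {y : Pt | y.1 < -R} :=
    (convex_halfSpace_lt (f := fun y : Pt => y.1) ⟨fun _ _ => rfl, fun _ _ => rfl⟩ _).isPreconnected
  have c4 : IsPreconnected {y : Pt | y.2 < -R} :=
    (convex_halfSpace_lt (f := fun y : Pt => y.2) ⟨fun _ _ => rfl, fun _ _ => rfl⟩ _).isPreconnected
  rw [h]
  refine IsPreconnected.union (-R - 1, -R - 1) (Or.inr ?_) ?_
    (IsPreconnected.union (-R - 1, R + 1) (Or.inr ?_) ?_
      (IsPreconnected.union (R + 1, R + 1) ?_ ?_ c1 c2) c3) c4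
  all_goals simp

/-- conclusion of the Jordan curve theorem with orientation sign -/
structure Jor (v : Fin n → Pt) (σ : ℤ) : Prop where
  hs : σ = 1 ∨ σ = -1
  val : ∀ x, x ∉ polyBoundary v → wn v x = 0 ∨ wn v x = σ
  int : ∀ x, x ∈ polyInterior v ↔ x ∉ polyBoundary v ∧ wn v x ≠ 0
  clI : polyBoundary v ⊆ closure (polyInterior v)
  clO : polyBoundary v ⊆ closure {x | x ∉ polyBoundary v ∧ wn v x = 0}

theorem jordan (hv : IsSimplePolygon v) : ∃ σ, Jor v σ := by
  obtain ⟨R, hR⟩ := far v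
  have hfar : ∀ r : ℝ, ∃ y : Pt, r < ‖y‖ := fun r => by
    refine ⟨(|r| + 1, 0), ?_⟩
    have := norm_fst_le ((|r| + 1, 0) : Pt)
    simp only [Real.norm_eq_abs] at this
    have h1 := le_abs_self r
    have h2 := le_abs_self (|r| + 1)
    linarith
  obtain ⟨y0, hy0⟩ := hfar R
  have hcc : ∀ x, x ∉ polyBoundary v → ∀ y ∈ connectedComponentIn (polyBoundary v)ᶜ x,
      wn v y = wn v x := fun x hx y hy =>
    wn_const isPreconnected_connectedComponentIn (connectedComponentIn_subset _ _) hy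
      (mem_connectedComponentIn hx)
  have hub : ∀ x, x ∉ polyBoundary v → wn v x ≠ 0 →
      Bornology.IsBounded (connectedComponentIn (polyBoundary v)ᶜ x) := by
    intro x hx hw
    rw [isBounded_iff_forall_norm_le]
    refine ⟨R, fun y hy => ?_⟩
    by_contra hc
    exact hw ((hcc x hx y hy).symm.trans (hR y (not_le.1 hc)).2)
  have hfc : {y : Pt | R < ‖y‖} ⊆ connectedComponentIn (polyBoundary v)ᶜ y0 := by
    exact (far_conn R).subset_connectedComponentIn hy0 fun y hy => (hR y hy).1
  obtain ⟨e0, he0, hs0⟩ := comp_side hv (hR y0 hy0).1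
  have hm := mid_mem (v 0) (v (0 + 1))
  have hsame : ∀ x, x ∉ polyBoundary v → ∀ e : ℝ, (e = 1 ∨ e = -1) →
      (∀ (i : Fin n), ∀ m ∈ openSegment ℝ (v i) (v (i + 1)),
      connectedComponentIn (polyBoundary v)ᶜ x ∈ 𝓝[Side e (v i) (v (i + 1))] m) →
      (e = e0 → connectedComponentIn (polyBoundary v)ᶜ x =
        connectedComponentIn (polyBoundary v)ᶜ y0) ∧
      (e ≠ e0 → (wn v x : ℝ) = - e0) := by
    intro x hx e he hs
    constructor
    · rintro rfl
      have : (𝓝[Side e (v 0) (v (0 + 1))] (midpoint ℝ (v 0) (v (0 + 1)))).NeBot :=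
        Side_neBot (by rcases he with rfl | rfl <;> norm_num) (edge_ne hv 0)
          (dt_seg (openSegment_subset_segment _ _ _ hm))
      obtain ⟨z, hz1, hz2⟩ := Filter.nonempty_of_mem (inter_mem (hs 0 _ hm) (hs0 0 _ hm))
      rw [connectedComponentIn_eq hz1, connectedComponentIn_eq hz2]
    · intro hne
      obtain ⟨U, hU, -, hJ⟩ := jump (edge_ne hv 0) hm (fun j hj => open_edge_other hv hj hm)
      have key : ∀ e' : ℝ, (e' = 1 ∨ e' = -1) → ∀ y, (∀ (i : Fin n),
          ∀ m ∈ openSegment ℝ (v i) (v (i + 1)),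
          connectedComponentIn (polyBoundary v)ᶜ y ∈ 𝓝[Side e' (v i) (v (i + 1))] m) →
          ∃ z ∈ U, z ∈ Side e' (v 0) (v (0 + 1)) ∧
            z ∈ connectedComponentIn (polyBoundary v)ᶜ y := by
        intro e' he' y hy
        have : (𝓝[Side e' (v 0) (v (0 + 1))] (midpoint ℝ (v 0) (v (0 + 1)))).NeBot :=
          Side_neBot (by rcases he' with rfl | rfl <;> norm_num) (edge_ne hv 0)
            (dt_seg (openSegment_subset_segment _ _ _ hm))
        obtain ⟨z, hz1, hz2, hz3⟩ := Filter.nonempty_of_mem (inter_mem (hy 0 _ hm)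
          (inter_mem (mem_nhdsWithin_of_mem_nhds hU) self_mem_nhdsWithin))
        exact ⟨z, hz2, hz3, hz1⟩
      obtain ⟨z1, a1, a2, a3⟩ := key e he x hs
      obtain ⟨z2, b1, b2, b3⟩ := key e0 he0 y0 hs0
      have w1 := hcc x hx z1 a3
      have w2 := hcc y0 (hR y0 hy0).1 z2 b3
      rw [(hR y0 hy0).2] at w2
      simp only [Side, Set.mem_ofPred_eq] at a2 b2
      rcases he with rfl | rfl <;> rcases he0 with rfl | rfl
      · exact absurd rfl hne
      · have := hJ z1 a1 z2 b1 (by linarith) (by linarith)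
        rw [← w1, this, w2]; norm_num
      · have := hJ z2 b1 z1 a1 (by linarith) (by linarith)
        have h3 : wn v z1 = -1 := by omega
        rw [← w1, h3]; norm_num
      · exact absurd rfl hne
  obtain ⟨σ, hσ, hσe⟩ : ∃ σ : ℤ, (σ = 1 ∨ σ = -1) ∧ (σ : ℝ) = - e0 := by
    rcases he0 with rfl | rfl
    · exact ⟨-1, Or.inr rfl, by norm_num⟩
    · exact ⟨1, Or.inl rfl, by norm_num⟩
  have hval : ∀ x, x ∉ polyBoundary v → (wn v x = 0 ∧ x ∉ polyInterior v) ∨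
      (wn v x = σ ∧ x ∈ polyInterior v) := by
    intro x hx
    obtain ⟨e, he, hs⟩ := comp_side hv hx
    by_cases hee : e = e0
    · have h := (hsame x hx e he hs).1 hee
      left
      have hy0' : y0 ∈ connectedComponentIn (polyBoundary v)ᶜ x := by
        rw [h]; exact mem_connectedComponentIn (hR y0 hy0).1
      refine ⟨by rw [← hcc x hx y0 hy0', (hR y0 hy0).2], fun hin => ?_⟩
      have hb := hin.2
      rw [h] at hb
      obtain ⟨M, hM⟩ := isBounded_iff_forall_norm_le.1 (hb.subset hfc)
      obtain ⟨y, hy⟩ := hfar (max R M)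
      have := hM y ((le_max_left _ _).trans_lt hy)
      exact absurd (lt_of_le_of_lt (le_max_right R M) hy) (not_lt.2 this)
    · have h := (hsame x hx e he hs).2 hee
      right
      have h' : wn v x = σ := by
        have : (wn v x : ℝ) = σ := by rw [h, hσe]
        exact_mod_cast this
      refine ⟨h', hx, hub x hx ?_⟩
      rw [h']; rcases hσ with rfl | rfl <;> norm_num
  have hσ0 : σ ≠ 0 := by rcases hσ with rfl | rfl <;> norm_num
  have hInt : ∀ x, x ∈ polyInterior v ↔ x ∉ polyBoundary v ∧ wn v x ≠ 0 := by
    intro x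
    constructor
    · intro h
      rcases hval x h.1 with h' | h'
      · exact absurd h h'.2
      · exact ⟨h.1, by rw [h'.1]; exact hσ0⟩
    · rintro ⟨h1, h2⟩
      rcases hval x h1 with h' | h'
      · exact absurd h'.1 h2
      · exact h'.2
  have hcl : ∀ i, ∀ m ∈ openSegment ℝ (v i) (v (i + 1)), m ∈ closure (polyInterior v) ∧
      m ∈ closure {x | x ∉ polyBoundary v ∧ wn v x = 0} := by
    intro i m hm
    obtain ⟨U, hU, hb, hJ⟩ := jump (edge_ne hv i) hm (fun j hj => open_edge_other hv hj hm)
    have hd := dt_seg (openSegment_subset_segment _ _ _ hm)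
    have key : ∀ W ∈ 𝓝 m, ∃ x ∈ W, ∃ y ∈ W, x ∈ polyInterior v ∧ y ∉ polyBoundary v ∧ wn v y = 0 := by
      intro W hW
      have n1 := Side_neBot (one_ne_zero) (edge_ne hv i) hd
      have n2 := Side_neBot (neg_ne_zero.2 one_ne_zero) (edge_ne hv i) hd
      obtain ⟨z1, a1, a2, a3⟩ := Filter.nonempty_of_mem (inter_mem
        (mem_nhdsWithin_of_mem_nhds hW) (inter_mem (mem_nhdsWithin_of_mem_nhds hU)
          (self_mem_nhdsWithin (a := m) (s := Side 1 (v i) (v (i + 1))))))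
      obtain ⟨z2, b1, b2, b3⟩ := Filter.nonempty_of_mem (inter_mem
        (mem_nhdsWithin_of_mem_nhds hW) (inter_mem (mem_nhdsWithin_of_mem_nhds hU)
          (self_mem_nhdsWithin (a := m) (s := Side (-1) (v i) (v (i + 1))))))
      simp only [Side, Set.mem_ofPred_eq] at a3 b3
      have hj := hJ z1 a2 z2 b2 (by linarith) (by linarith)
      have hz1 := hb z1 a2 (by linarith)
      have hz2 := hb z2 b2 (by linarith)
      rcases hval z1 hz1 with h1 | h1 <;> rcases hval z2 hz2 with h2 | h2
      · omega
      · exact ⟨z2, b1, z1, a1, h2.2, hz1, h1.1⟩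
      · exact ⟨z1, a1, z2, b1, h1.2, hz2, h2.1⟩
      · omega
    constructor
    · rw [mem_closure_iff_nhds]
      intro W hW
      obtain ⟨x, hx, y, hy, h1, h2⟩ := key W hW
      exact ⟨x, hx, h1⟩
    · rw [mem_closure_iff_nhds]
      intro W hW
      obtain ⟨x, hx, y, hy, h1, h2⟩ := key W hW
      exact ⟨y, hy, h2⟩
  have hsegc : ∀ i, segment ℝ (v i) (v (i + 1)) ⊆ closure (openSegment ℝ (v i) (v (i + 1))) :=
    fun i => segment_subset_closure_openSegment
  refine ⟨σ, hσ, fun x hx => (hval x hx).imp And.left And.left, hInt, ?_, ?_⟩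
  · intro x hx
    obtain ⟨i, hi⟩ := Set.mem_iUnion.1 hx
    exact closure_minimal (fun m hm => (hcl i m hm).1) isClosed_closure (hsegc i hi)
  · intro x hx
    obtain ⟨i, hi⟩ := Set.mem_iUnion.1 hx
    exact closure_minimal (fun m hm => (hcl i m hm).2) isClosed_closure (hsegc i hi)

end simple
end part4

section part5
open Filter Topology

section simple
variable {n : ℕ} [NeZero n] {v : Fin n → Pt}

/-- barycentric type coordinate -/
noncomputable def bc (D : ℝ) (a b x : Pt) : ℝ := dt a b x / D

lemma bc_comb (D : ℝ) (a b x y : Pt) (s t : ℝ) (h : s + t = 1) :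
    bc D a b (s • x + t • y) = s * bc D a b x + t * bc D a b y := by
  simp only [bc, dt_comb _ _ _ _ _ _ h]; ring

lemma bc_cont (D : ℝ) (a b : Pt) : Continuous (bc D a b) := (dt_cont a b).div_const _

lemma bc_rep {a b c : Pt} (hD : det2 (b - a) (c - b) ≠ 0) (x : Pt) :
    x = b + (bc (det2 (b - a) (c - b)) b c x) • (a - b) +
      (bc (det2 (b - a) (c - b)) a b x) • (c - b) := by
  simp only [bc]
  set D := det2 (b - a) (c - b) with hDd
  have h1 : dt b c x * (a - b).1 + dt a b x * (c - b).1 = D * (x - b).1 := by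
    simp [dt, det2, hDd]; ring
  have h2 : dt b c x * (a - b).2 + dt a b x * (c - b).2 = D * (x - b).2 := by
    simp [dt, det2, hDd]; ring
  apply Prod.ext
  · simp only [Prod.fst_add, Prod.smul_fst, smul_eq_mul]
    have : x.1 = b.1 + (x - b).1 := by simp
    rw [this]; field_simp; linear_combination -h1
  · simp only [Prod.snd_add, Prod.smul_snd, smul_eq_mul]
    have : x.2 = b.2 + (x - b).2 := by simp
    rw [this]; field_simp; linear_combination -h2

/-- data of an extreme vertex -/
lemma extreme (hv : IsSimplePolygon v) : ∃ i : Fin n, ∀ j, j ≠ i + 1 →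
    (v (i + 1)).1 * (v j).1 + (v (i + 1)).2 * (v j).2 <
      (v (i + 1)).1 * (v (i + 1)).1 + (v (i + 1)).2 * (v (i + 1)).2 := by
  obtain ⟨k, -, hk⟩ := Finset.exists_max_image (Finset.univ : Finset (Fin n))
    (fun j => (v j).1 ^ 2 + (v j).2 ^ 2) ⟨0, Finset.mem_univ _⟩
  refine ⟨k - 1, fun j hj => ?_⟩
  rw [sub_add_cancel] at *
  have h1 := hk j (Finset.mem_univ _)
  have h2 := pos_of_ne (fun h => hj (hv.2.1 h) : v j ≠ v k)
  nlinarith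

lemma extreme_det (hv : IsSimplePolygon v) {i : Fin n} (hi : ∀ j, j ≠ i + 1 →
    (v (i + 1)).1 * (v j).1 + (v (i + 1)).2 * (v j).2 <
      (v (i + 1)).1 * (v (i + 1)).1 + (v (i + 1)).2 * (v (i + 1)).2) :
    det2 (v (i + 1) - v i) (v (i + 1 + 1) - v (i + 1)) ≠ 0 := by
  intro h0
  have nf := no_fold hv i h0
  have h1 := hi i (add_one_ne hv.1 i).symm
  have h2 := hi (i + 1 + 1) (add_one_ne hv.1 (i + 1))
  have n1 := pos_of_ne (edge_ne hv i)
  generalize v i = a at *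
  generalize v (i + 1) = b at *
  generalize v (i + 1 + 1) = c at *
  simp only [det2, Prod.fst_sub, Prod.snd_sub] at *
  have k1 : 0 < b.1 * (b.1 - a.1) + b.2 * (b.2 - a.2) := by linarith
  have k2 : b.1 * (c.1 - b.1) + b.2 * (c.2 - b.2) < 0 := by linarith
  have e : ((b.1 - a.1) ^ 2 + (b.2 - a.2) ^ 2) * (b.1 * (c.1 - b.1) + b.2 * (c.2 - b.2)) =
    ((b.1 - a.1) * (c.1 - b.1) + (b.2 - a.2) * (c.2 - b.2)) *
      (b.1 * (b.1 - a.1) + b.2 * (b.2 - a.2)) := by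
    linear_combination (b.2 * (b.1 - a.1) - b.1 * (b.2 - a.2)) * h0
  have := mul_pos nf k1
  have := mul_neg_of_pos_of_neg n1 k2
  linarith

/-- near an extreme vertex, the inside of the cone has nonzero winding number -/
lemma extreme_cone (hv : IsSimplePolygon v) {i : Fin n} (hi : ∀ j, j ≠ i + 1 →
    (v (i + 1)).1 * (v j).1 + (v (i + 1)).2 * (v j).2 <
      (v (i + 1)).1 * (v (i + 1)).1 + (v (i + 1)).2 * (v (i + 1)).2) {D : ℝ}
    (hDd : D = det2 (v (i + 1) - v i) (v (i + 1 + 1) - v (i + 1))) :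
    ∀ᶠ y in 𝓝 (v (i + 1)), 0 < bc D (v (i + 1)) (v (i + 1 + 1)) y →
      0 < bc D (v i) (v (i + 1)) y → wn v y ≠ 0 := by
  have hD := extreme_det hv hi
  rw [← hDd] at hD
  obtain ⟨r, hr, hball⟩ := Metric.eventually_nhds_iff_ball.1 (near_vertex hv i)
  obtain ⟨t, ht0, ht1, htb, hm⟩ := combo_near (v (i + 1)) (v i) hr
  obtain ⟨U, hU, -, hJ⟩ := jump (edge_ne hv i) hm (fun j hj => open_edge_other hv hj hm)
  have h1 := hi i (add_one_ne hv.1 i).symm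
  have h2 := hi (i + 1 + 1) (add_one_ne hv.1 (i + 1))
  have rep := bc_rep (hDd ▸ hD)
  rw [← hDd] at rep
  -- the outer point
  have hout : ∃ z ∈ Metric.ball (v (i + 1)) r, bc D (v i) (v (i + 1)) z < 0 ∧ wn v z = 0 := by
    obtain ⟨s, hs, hs'⟩ := (((tendsto_add_smul (v (i + 1))
      (-((v i - v (i + 1)) + (v (i + 1 + 1) - v (i + 1))))).eventually
      (Metric.ball_mem_nhds _ hr)).and self_mem_nhdsWithin).exists
    replace hs' : 0 < s := hs'
    refine ⟨_, hs, ?_, wn_half v _ (-v (i + 1)) fun j => ?_⟩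
    · have : bc D (v i) (v (i + 1)) (v (i + 1) + s •
          (-((v i - v (i + 1)) + (v (i + 1 + 1) - v (i + 1))))) = -s := by
        rw [bc, div_eq_iff hD, hDd]; simp [dt, det2]; ring
      rw [this]; linarith
    · have h3 : (v (i + 1)).1 * (v j).1 + (v (i + 1)).2 * (v j).2 ≤
          (v (i + 1)).1 * (v (i + 1)).1 + (v (i + 1)).2 * (v (i + 1)).2 := by
        by_cases hj : j = i + 1
        · rw [hj]
        · exact (hi j hj).le
      have k1 := mul_pos hs' (sub_pos.2 h1)
      have k2 := mul_pos hs' (sub_pos.2 h2)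
      simp
      nlinarith
  obtain ⟨z, hz, hz1, hz2⟩ := hout
  generalize ha : v i = a at *
  generalize hb : v (i + 1) = b at *
  generalize hc : v (i + 1 + 1) = c at *
  have sa : ∀ y ∈ segment ℝ a b, bc D a b y = 0 := fun y hy => by
    simp [bc, dt_seg hy]
  have sc : ∀ y ∈ segment ℝ b c, bc D b c y = 0 ∧ 0 ≤ bc D a b y := fun y hy => by
    refine ⟨by simp [bc, dt_seg hy], ?_⟩
    obtain ⟨p, q, hp, hq, hpq, rfl⟩ := hy
    rw [bc_comb _ _ _ _ _ _ _ hpq]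
    have e1 : bc D a b b = 0 := by simp [bc, dt_right]
    have e2 : bc D a b c = 1 := by
      rw [bc, div_eq_one_iff_eq hD, hDd]; simp [dt, det2]; ring
    rw [e1, e2]; linarith
  have hlin1 : Convex ℝ {y | 0 < bc D a b y} := by
    intro x hx y hy p q hp hq hpq
    simp only [Set.mem_ofPred_eq] at *
    rw [bc_comb _ _ _ _ _ _ _ hpq]
    rcases hp.eq_or_lt with h | h
    · subst h; obtain rfl : q = 1 := by linarith
      simpa using hy
    · have := mul_pos h hx; have := mul_nonneg hq hy.le; linarith
  have hlin2 : Convex ℝ {y | 0 < bc D b c y} := by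
    intro x hx y hy p q hp hq hpq
    simp only [Set.mem_ofPred_eq] at *
    rw [bc_comb _ _ _ _ _ _ _ hpq]
    rcases hp.eq_or_lt with h | h
    · subst h; obtain rfl : q = 1 := by linarith
      simpa using hy
    · have := mul_pos h hx; have := mul_nonneg hq hy.le; linarith
  have hlin3 : Convex ℝ {y | bc D a b y < 0} := by
    intro x hx y hy p q hp hq hpq
    simp only [Set.mem_ofPred_eq] at *
    rw [bc_comb _ _ _ _ _ _ _ hpq]
    rcases hp.eq_or_lt with h | h
    · subst h; obtain rfl : q = 1 := by linarith
      simpa using hy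
    · have := mul_neg_of_pos_of_neg h hx
      have := mul_nonpos_of_nonneg_of_nonpos hq hy.le; linarith
  have cA : IsPreconnected (Metric.ball b r ∩ ({y | 0 < bc D b c y} ∩ {y | 0 < bc D a b y})) :=
    ((convex_ball _ _).inter (hlin2.inter hlin1)).isPreconnected
  have cB : IsPreconnected (Metric.ball b r ∩ {y | bc D a b y < 0}) :=
    ((convex_ball _ _).inter hlin3).isPreconnected
  have sA : (Metric.ball b r ∩ ({y | 0 < bc D b c y} ∩ {y | 0 < bc D a b y})) ⊆
      (polyBoundary v)ᶜ := by
    rintro y ⟨y1, y2, y3⟩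
    simp only [Set.mem_ofPred_eq] at y2 y3
    exact hball y y1 (fun h => by rw [sa y h] at y3; exact lt_irrefl _ y3)
      (fun h => by rw [(sc y h).1] at y2; exact lt_irrefl _ y2)
  have sB : (Metric.ball b r ∩ {y | bc D a b y < 0}) ⊆ (polyBoundary v)ᶜ := by
    rintro y ⟨y1, y3⟩
    simp only [Set.mem_ofPred_eq] at y3
    exact hball y y1 (fun h => by rw [sa y h] at y3; exact lt_irrefl _ y3)
      (fun h => by linarith [(sc y h).2])
  -- points near m
  set m := b + t • (a - b) with hmd
  have hms : bc D b c m = t := by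
    rw [bc, div_eq_iff hD, hDd, hmd]; simp [dt, det2]; ring
  have hmt : bc D a b m = 0 := sa m (openSegment_subset_segment _ _ _ hm)
  have ev : ∀ w : Pt, ∀ᶠ s : ℝ in 𝓝[>] 0, m + s • w ∈ U ∧ m + s • w ∈ Metric.ball b r ∧
      0 < bc D b c (m + s • w) ∧ 0 < s := by
    intro w
    have t1 := tendsto_add_smul m w
    filter_upwards [t1.eventually hU, t1.eventually (Metric.isOpen_ball.mem_nhds htb),
      t1.eventually ((isOpen_lt continuous_const (bc_cont D b c)).mem_nhds (by
        show (0:ℝ) < bc D b c m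
        rw [hms]; exact ht0)),
      self_mem_nhdsWithin] with s q1 q2 q3 q4
    exact ⟨q1, q2, q3, q4⟩
  have ew : ∀ s w, bc D a b (m + s • w) = s * (det2 (b - a) w / D) := by
    intro s w
    have : dt a b m = 0 := dt_seg (openSegment_subset_segment _ _ _ hm)
    rw [bc, dt_add, this, det2_smul]; ring
  obtain ⟨s1, u1, u2, u3, u4⟩ := (ev (c - b)).exists
  obtain ⟨s2, w1, w2, w3, w4⟩ := (ev (b - c)).exists
  have f1 : det2 (b - a) (c - b) / D = 1 := by rw [← hDd]; exact div_self hD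
  have f2 : det2 (b - a) (b - c) / D = -1 := by
    rw [div_eq_iff hD, hDd]; simp [det2]; ring
  have g1 := ew s1 (c - b)
  have g2 := ew s2 (b - c)
  rw [f1, mul_one] at g1
  rw [f2] at g2
  have hw0 : wn v (m + s2 • (b - c)) = 0 := by
    rw [← hz2]
    refine wn_const cB sB ⟨w2, ?_⟩ ⟨hz, hz1⟩
    show bc D a b _ < 0
    rw [g2]; linarith
  have hw1 : wn v (m + s1 • (c - b)) ≠ 0 := by
    have g1' := (div_eq_iff hD).1 g1
    have g2' := (div_eq_iff hD).1 g2
    rcases lt_or_gt_of_ne hD with h | h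
    · have := hJ _ w1 _ u1 (by rw [g2']; nlinarith) (by rw [g1']; nlinarith)
      omega
    · have := hJ _ u1 _ w1 (by rw [g1']; positivity) (by rw [g2']; nlinarith)
      omega
  filter_upwards [Metric.ball_mem_nhds b hr] with y hy p1 p2
  rw [wn_const cA sA ⟨hy, p1, p2⟩ ⟨u2, u3, ?_⟩]
  · exact hw1
  · show 0 < bc D a b _
    rw [g1]; exact u4

end simple
end part5

section part6
open Filter Topology

section simple
variable {n : ℕ} [NeZero n] {v : Fin n → Pt}

/-- If a point of the (half open) ear triangle is on an edge then a further vertex is in the ear. -/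
lemma ear_core (hv : IsSimplePolygon v) {i : Fin n} {D : ℝ}
    (hDd : D = det2 (v (i + 1) - v i) (v (i + 1 + 1) - v (i + 1))) (hD : D ≠ 0)
    {y : Pt} (hs : 0 < bc D (v (i + 1)) (v (i + 1 + 1)) y) (ht : 0 < bc D (v i) (v (i + 1)) y)
    (hst : bc D (v (i + 1)) (v (i + 1 + 1)) y + bc D (v i) (v (i + 1)) y < 1)
    (hy : y ∈ polyBoundary v) :
    ∃ j, j ≠ i ∧ j ≠ i + 1 ∧ j ≠ i + 1 + 1 ∧ 0 ≤ bc D (v (i + 1)) (v (i + 1 + 1)) (v j) ∧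
      0 ≤ bc D (v i) (v (i + 1)) (v j) ∧
      bc D (v (i + 1)) (v (i + 1 + 1)) (v j) + bc D (v i) (v (i + 1)) (v j) ≤
      bc D (v (i + 1)) (v (i + 1 + 1)) y + bc D (v i) (v (i + 1)) y := by
  obtain ⟨k, hk⟩ := Set.mem_iUnion.1 hy
  have hki : k ≠ i := by
    rintro rfl; rw [bc, dt_seg hk] at ht; simp at ht
  have hki' : k ≠ i + 1 := by
    rintro rfl; rw [bc, dt_seg hk] at hs; simp at hs
  have rep := bc_rep (hDd ▸ hD)
  rw [← hDd] at rep
  -- choose the endpoint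
  have hp : ∃ j, (j = k ∨ j = k + 1) ∧ segment ℝ y (v j) ⊆ segment ℝ (v k) (v (k + 1)) ∧
      bc D (v (i + 1)) (v (i + 1 + 1)) (v j) + bc D (v i) (v (i + 1)) (v j) ≤
      bc D (v (i + 1)) (v (i + 1 + 1)) y + bc D (v i) (v (i + 1)) y := by
    have c1 : segment ℝ y (v k) ⊆ segment ℝ (v k) (v (k + 1)) :=
      (convex_segment _ _).segment_subset hk (left_mem_segment _ _ _)
    have c2 : segment ℝ y (v (k + 1)) ⊆ segment ℝ (v k) (v (k + 1)) :=
      (convex_segment _ _).segment_subset hk (right_mem_segment _ _ _)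
    by_contra hcon
    push Not at hcon
    have h1 := hcon k (Or.inl rfl) c1
    have h2 := hcon (k + 1) (Or.inr rfl) c2
    obtain ⟨p, q, hp, hq, hpq, rfl⟩ := hk
    rw [bc_comb _ _ _ _ _ _ _ hpq, bc_comb _ _ _ _ _ _ _ hpq] at h1 h2
    obtain rfl : p = 1 - q := by linarith
    generalize bc D (v (i + 1)) (v (i + 1 + 1)) (v k) = A1 at h1 h2
    generalize bc D (v i) (v (i + 1)) (v k) = A2 at h1 h2
    generalize bc D (v (i + 1)) (v (i + 1 + 1)) (v (k + 1)) = B1 at h1 h2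
    generalize bc D (v i) (v (i + 1)) (v (k + 1)) = B2 at h1 h2
    rcases le_total (A1 + A2) (B1 + B2) with h | h
    · have := mul_nonneg hq (sub_nonneg.2 h); linarith
    · have := mul_nonneg hp (sub_nonneg.2 h); linarith
  obtain ⟨j, hj, hseg, hle⟩ := hp
  have sa : bc D (v (i + 1)) (v (i + 1 + 1)) (v i) = 1 := by
    rw [bc, div_eq_one_iff_eq hD, hDd]; simp [dt, det2]; ring
  have ta : bc D (v i) (v (i + 1)) (v i) = 0 := by simp [bc, dt_left]
  have sc : bc D (v (i + 1)) (v (i + 1 + 1)) (v (i + 1 + 1)) = 0 := by simp [bc, dt_right]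
  have tc : bc D (v i) (v (i + 1)) (v (i + 1 + 1)) = 1 := by
    rw [bc, div_eq_one_iff_eq hD, hDd]; simp [dt, det2]; ring
  have hji : j ≠ i := by rintro rfl; rw [sa, ta] at hle; linarith
  have hji2 : j ≠ i + 1 + 1 := by rintro rfl; rw [sc, tc] at hle; linarith
  have hnb : ∀ l, (l = k ∨ l = k + 1) → l ≠ i + 1 := by
    rintro l (rfl | rfl)
    · exact hki'
    · exact fun h => hki (add_right_cancel h)
  refine ⟨j, hji, hnb j hj, hji2, ?_⟩
  by_contra hcon
  have hneg : bc D (v (i + 1)) (v (i + 1 + 1)) (v j) < 0 ∨ bc D (v i) (v (i + 1)) (v j) < 0 := by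
    by_contra h
    push Not at h
    exact hcon ⟨h.1, h.2, hle⟩
  -- intermediate value theorem
  have hw : ∃ l ∈ Set.Icc (0:ℝ) 1,
      min (bc D (v (i + 1)) (v (i + 1 + 1)) ((1 - l) • y + l • v j))
        (bc D (v i) (v (i + 1)) ((1 - l) • y + l • v j)) = 0 := by
    have hcont : ContinuousOn (fun l : ℝ =>
      min (bc D (v (i + 1)) (v (i + 1 + 1)) ((1 - l) • y + l • v j))
        (bc D (v i) (v (i + 1)) ((1 - l) • y + l • v j))) (Set.Icc 0 1) := by
      apply Continuous.continuousOn
      have h0 : Continuous fun l : ℝ => (1 - l) • y + l • v j := by fun_prop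
      exact ((bc_cont _ _ _).comp h0).min ((bc_cont _ _ _).comp h0)
    have := intermediate_value_Icc' zero_le_one hcont
    refine this ⟨?_, ?_⟩
    · simp only [sub_self, zero_smul, one_smul, zero_add]
      rcases hneg with h | h
      · exact (min_le_left _ _).trans h.le
      · exact (min_le_right _ _).trans h.le
    · simp only [sub_zero, zero_smul, one_smul, add_zero]
      exact le_min hs.le ht.le
  obtain ⟨l, ⟨hl0, hl1⟩, hmin⟩ := hw
  set w := (1 - l) • y + l • v j with hwd
  have hwk : w ∈ segment ℝ (v k) (v (k + 1)) :=
    hseg ⟨1 - l, l, by linarith, hl0, by ring, rfl⟩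
  have hws : 0 ≤ bc D (v (i + 1)) (v (i + 1 + 1)) w := by rw [← hmin]; exact min_le_left _ _
  have hwt : 0 ≤ bc D (v i) (v (i + 1)) w := by rw [← hmin]; exact min_le_right _ _
  have hwh : bc D (v (i + 1)) (v (i + 1 + 1)) w + bc D (v i) (v (i + 1)) w < 1 := by
    rw [hwd, bc_comb _ _ _ _ _ _ _ (by ring), bc_comb _ _ _ _ _ _ _ (by ring)]
    nlinarith
  have rw' := rep w
  rcases min_choice (bc D (v (i + 1)) (v (i + 1 + 1)) w) (bc D (v i) (v (i + 1)) w) with h | h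
  · rw [hmin] at h
    have hwi : w ∈ segment ℝ (v (i + 1)) (v (i + 1 + 1)) := by
      refine ⟨1 - bc D (v i) (v (i + 1)) w, bc D (v i) (v (i + 1)) w, by linarith, hwt, by ring, ?_⟩
      conv_rhs => rw [rw', ← h]
      module
    have := hv.2.2 k (i + 1) hki' ⟨hwk, hwi⟩
    have hwc : w ≠ v (i + 1 + 1) := by
      intro hh; rw [hh, sc, tc] at hwh; linarith
    have hwb : w = v (i + 1) := by
      rcases this.2 with h | h
      · exact h
      · exact absurd h hwc
    rcases this.1 with h | h
    · exact hnb k (Or.inl rfl) (hv.2.1 (h.symm.trans hwb))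
    · exact hnb (k + 1) (Or.inr rfl) (hv.2.1 (h.symm.trans hwb))
  · rw [hmin] at h
    have hwi : w ∈ segment ℝ (v i) (v (i + 1)) := by
      refine ⟨bc D (v (i + 1)) (v (i + 1 + 1)) w, 1 - bc D (v (i + 1)) (v (i + 1 + 1)) w,
        hws, by linarith, by ring, ?_⟩
      conv_rhs => rw [rw', ← h]
      module
    have := hv.2.2 k i hki ⟨hwk, hwi⟩
    have hwc : w ≠ v i := by
      intro hh; rw [hh, sa, ta] at hwh; linarith
    have hwb : w = v (i + 1) := by
      rcases this.2 with h | h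
      · exact absurd h hwc
      · exact h
    rcases this.1 with h | h
    · exact hnb k (Or.inl rfl) (hv.2.1 (h.symm.trans hwb))
    · exact hnb (k + 1) (Or.inr rfl) (hv.2.1 (h.symm.trans hwb))

/-- a polygon with at least four vertices has an internal diagonal -/
theorem diag_exists (hv : IsSimplePolygon v) (h4 : ∀ i : Fin n, i + 1 + 1 + 1 ≠ i) :
    ∃ i j : Fin n, j ≠ i ∧ j ≠ i + 1 ∧ i ≠ j + 1 ∧
      ∀ y ∈ openSegment ℝ (v i) (v j), y ∉ polyBoundary v ∧ wn v y ≠ 0 := by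
  obtain ⟨i, hi⟩ := extreme hv
  obtain ⟨D, hDd⟩ : ∃ D, D = det2 (v (i + 1) - v i) (v (i + 1 + 1) - v (i + 1)) := ⟨_, rfl⟩
  have hD : D ≠ 0 := hDd ▸ extreme_det hv hi
  have cone := extreme_cone hv hi hDd
  have core := fun y => ear_core hv hDd hD (y := y)
  have rep := bc_rep (hDd ▸ hD)
  rw [← hDd] at rep
  set S := bc D (v (i + 1)) (v (i + 1 + 1)) with hS
  set T := bc D (v i) (v (i + 1)) with hT
  have Sc : ∀ x y (p q : ℝ), p + q = 1 → S (p • x + q • y) = p * S x + q * S y := fun x y p q h =>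
    bc_comb _ _ _ _ _ _ _ h
  have Tc : ∀ x y (p q : ℝ), p + q = 1 → T (p • x + q • y) = p * T x + q * T y := fun x y p q h =>
    bc_comb _ _ _ _ _ _ _ h
  have sa : S (v i) = 1 := by
    rw [hS, bc, div_eq_one_iff_eq hD, hDd]; simp [dt, det2]; ring
  have ta : T (v i) = 0 := by simp [hT, bc, dt_left]
  have sb : S (v (i + 1)) = 0 := by simp [hS, bc, dt_left]
  have tb : T (v (i + 1)) = 0 := by simp [hT, bc, dt_right]
  have sc : S (v (i + 1 + 1)) = 0 := by simp [hS, bc, dt_right]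
  have tc : T (v (i + 1 + 1)) = 1 := by
    rw [hT, bc, div_eq_one_iff_eq hD, hDd]; simp [dt, det2]; ring
  have sE : ∀ x ∈ segment ℝ (v (i + 1)) (v (i + 1 + 1)), S x = 0 := fun x hx => by
    simp [hS, bc, dt_seg hx]
  have tE : ∀ x ∈ segment ℝ (v i) (v (i + 1)), T x = 0 := fun x hx => by
    simp [hT, bc, dt_seg hx]
  -- points in the ear on the sides
  have hside : ∀ j, j ≠ i → j ≠ i + 1 → j ≠ i + 1 + 1 → 0 ≤ S (v j) → 0 ≤ T (v j) →
      S (v j) + T (v j) ≤ 1 → 0 < S (v j) ∧ 0 < T (v j) := by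
    intro j h1 h2 h3 h4 h5 h6
    have r := rep (v j)
    constructor
    · refine lt_of_le_of_ne h4 fun h => ?_
      have : v j ∈ segment ℝ (v (i + 1)) (v (i + 1 + 1)) := by
        refine ⟨1 - T (v j), T (v j), by linarith, h5, by ring, ?_⟩
        conv_rhs => rw [r, ← h]
        module
      rcases (hv.2.2 j (i + 1) h2 ⟨left_mem_segment _ _ _, this⟩).2 with h | h
      · exact h2 (hv.2.1 h)
      · exact h3 (hv.2.1 h)
    · refine lt_of_le_of_ne h5 fun h => ?_
      have : v j ∈ segment ℝ (v i) (v (i + 1)) := by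
        refine ⟨S (v j), 1 - S (v j), h4, by linarith, by ring, ?_⟩
        conv_rhs => rw [r, ← h]
        module
      rcases (hv.2.2 j i h1 ⟨left_mem_segment _ _ _, this⟩).2 with h | h
      · exact h1 (hv.2.1 h)
      · exact h2 (hv.2.1 h)
  by_cases hex : ∃ j, j ≠ i ∧ j ≠ i + 1 ∧ j ≠ i + 1 + 1 ∧ 0 ≤ S (v j) ∧ 0 ≤ T (v j) ∧
      S (v j) + T (v j) ≤ 1
  · -- diagonal from the extreme vertex
    classical
    obtain ⟨j, hj, hmin⟩ := Finset.exists_min_image (Finset.univ.filter fun j =>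
      j ≠ i ∧ j ≠ i + 1 ∧ j ≠ i + 1 + 1 ∧ 0 ≤ S (v j) ∧ 0 ≤ T (v j) ∧ S (v j) + T (v j) ≤ 1)
      (fun j => S (v j) + T (v j)) (by
        obtain ⟨j, hj⟩ := hex
        exact ⟨j, Finset.mem_filter.2 ⟨Finset.mem_univ _, hj⟩⟩)
    obtain ⟨-, j1, j2, j3, j4, j5, j6⟩ := Finset.mem_filter.1 hj
    obtain ⟨p1, p2⟩ := hside j j1 j2 j3 j4 j5 j6
    have key : ∀ y ∈ openSegment ℝ (v (i + 1)) (v j), 0 < S y ∧ 0 < T y ∧ y ∉ polyBoundary v := by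
      rintro y ⟨p, q, hp, hq, hpq, rfl⟩
      have e1 := Sc (v (i + 1)) (v j) p q hpq
      have e2 := Tc (v (i + 1)) (v j) p q hpq
      rw [sb] at e1; rw [tb] at e2
      have q1 : 0 < S (p • v (i + 1) + q • v j) := by rw [e1]; have := mul_pos hq p1; linarith
      have q2 : 0 < T (p • v (i + 1) + q • v j) := by rw [e2]; have := mul_pos hq p2; linarith
      have hlt : S (p • v (i + 1) + q • v j) + T (p • v (i + 1) + q • v j) < S (v j) + T (v j) := by
        rw [e1, e2]; nlinarith
      refine ⟨q1, q2, fun hb => ?_⟩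
      obtain ⟨j', k1, k2, k3, k4, k5, k6⟩ := core _ q1 q2 (by linarith) hb
      have := hmin j' (Finset.mem_filter.2 ⟨Finset.mem_univ _, k1, k2, k3, k4, k5, by linarith⟩)
      linarith
    obtain ⟨r, hr, hball⟩ := Metric.eventually_nhds_iff_ball.1 cone
    obtain ⟨t, ht0, ht1, htb, hm⟩ := combo_near (v (i + 1)) (v j) hr
    rw [openSegment_symm] at hm
    refine ⟨i + 1, j, j2, j3, fun h => j1 (add_right_cancel h).symm, fun y hy => ⟨(key y hy).2.2, ?_⟩⟩
    rw [wn_const (openSeg_preconn _ _) (fun y hy => (key y hy).2.2) hy hm]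
    exact hball _ htb (key _ hm).1 (key _ hm).2.1
  · -- the ear diagonal
    push Not at hex
    have hno : ∀ y, 0 < S y → 0 < T y → S y + T y < 1 → y ∉ polyBoundary v := by
      intro y h1 h2 h3 hb
      obtain ⟨j', k1, k2, k3, k4, k5, k6⟩ := core _ h1 h2 h3 hb
      have := hex j' k1 k2 k3 k4 k5
      linarith
    have hno1 : ∀ y, 0 < S y → 0 < T y → S y + T y = 1 → y ∉ polyBoundary v := by
      intro y h1 h2 h3 hb
      obtain ⟨k, hk⟩ := Set.mem_iUnion.1 hb
      have hki : k ≠ i := by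
        rintro rfl; rw [tE y hk] at h2; exact lt_irrefl _ h2
      have hki' : k ≠ i + 1 := by
        rintro rfl; rw [sE y hk] at h1; exact lt_irrefl _ h1
      -- no vertex with smaller height
      have hge : ∀ l, v l ∈ segment ℝ (v k) (v (k + 1)) → 1 ≤ S (v l) + T (v l) := by
        intro l hl
        by_contra hc
        have hsub := (convex_segment (𝕜 := ℝ) (v k) (v (k + 1))).segment_subset hk hl
        have h0 : Continuous fun p : ℝ => (1 - p) • y + p • v l := by fun_prop
        have t0 : Tendsto (fun p : ℝ => (1 - p) • y + p • v l) (𝓝[>] 0) (𝓝 y) := by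
          have := h0.tendsto 0
          simp only [sub_zero, one_smul, zero_smul, add_zero] at this
          exact this.mono_left nhdsWithin_le_nhds
        have o1 : ∀ᶠ z in 𝓝 y, 0 < S z :=
          (isOpen_lt continuous_const (bc_cont D (v (i + 1)) (v (i + 1 + 1)))).mem_nhds h1
        have o2 : ∀ᶠ z in 𝓝 y, 0 < T z :=
          (isOpen_lt continuous_const (bc_cont D (v i) (v (i + 1)))).mem_nhds h2
        have o3 : ∀ᶠ p : ℝ in 𝓝[>] 0, p ∈ Set.Ioo (0:ℝ) 1 := Ioo_mem_nhdsGT one_pos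
        obtain ⟨p, a1, a2, a3⟩ := ((t0.eventually o1).and ((t0.eventually o2).and o3)).exists
        refine hno _ a1 a2 ?_ (Set.mem_iUnion.2 ⟨k, hsub ⟨1 - p, p, by linarith [a3.2],
          a3.1.le, by ring, rfl⟩⟩)
        rw [Sc _ _ _ _ (by ring), Tc _ _ _ _ (by ring)]
        have := a3.1
        nlinarith
      have hvk : ∀ l, (l = k ∨ l = k + 1) → v l ≠ y := by
        rintro l hl rfl
        have l1 : l ≠ i := by rintro rfl; rw [ta] at h2; exact lt_irrefl _ h2
        have l2 : l ≠ i + 1 := by rintro rfl; rw [tb] at h2; exact lt_irrefl _ h2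
        have l3 : l ≠ i + 1 + 1 := by rintro rfl; rw [sc] at h1; exact lt_irrefl _ h1
        have := hex l l1 l2 l3 h1.le h2.le
        linarith
      have g1 := hge k (left_mem_segment _ _ _)
      have g2 := hge (k + 1) (right_mem_segment _ _ _)
      obtain ⟨p, q, hp, hq, hpq, hy⟩ := hk
      have hp' : 0 < p := lt_of_le_of_ne hp fun h => hvk (k + 1) (Or.inr rfl) (by
        rw [← hy, ← h, show q = 1 by linarith]; simp)
      have hq' : 0 < q := lt_of_le_of_ne hq fun h => hvk k (Or.inl rfl) (by
        rw [← hy, ← h, show p = 1 by linarith]; simp)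
      have e1 := Sc (v k) (v (k + 1)) p q hpq
      have e2 := Tc (v k) (v (k + 1)) p q hpq
      rw [hy] at e1 e2
      have g1' : S (v k) + T (v k) = 1 := by
        by_contra hc
        have hlt : 1 < S (v k) + T (v k) := lt_of_le_of_ne g1 (Ne.symm hc)
        have r1 := mul_lt_mul_of_pos_left hlt hp'
        have r2 := mul_le_mul_of_nonneg_left g2 hq
        nlinarith
      have g2' : S (v (k + 1)) + T (v (k + 1)) = 1 := by
        by_contra hc
        have hlt : 1 < S (v (k + 1)) + T (v (k + 1)) := lt_of_le_of_ne g2 (Ne.symm hc)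
        have r1 := mul_lt_mul_of_pos_left hlt hq'
        have r2 := mul_le_mul_of_nonneg_left g1 hp
        nlinarith
      -- both ends are outside the open interval
      have hout : ∀ l, l ≠ i + 1 → S (v l) + T (v l) = 1 → T (v l) ≤ 0 ∨ 1 ≤ T (v l) := by
        intro l hl he
        by_cases l1 : l = i
        · left; rw [l1, ta]
        by_cases l3 : l = i + 1 + 1
        · right; rw [l3, tc]
        by_contra hc
        push Not at hc
        have := hex l l1 hl l3 (by linarith) (by linarith)
        linarith
      have o1 := hout k hki' g1'
      have o2 := hout (k + 1) (fun h => hki (add_right_cancel h)) g2'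
      have hTy : T y < 1 := by linarith
      -- a point of the line ac with parameter between lies on the edge
      have hmem : ∀ l, S (v l) + T (v l) = 1 → ((T (v k) ≤ T (v l) ∧ T (v l) ≤ T (v (k + 1))) ∨
          (T (v (k + 1)) ≤ T (v l) ∧ T (v l) ≤ T (v k))) → T (v k) ≠ T (v (k + 1)) →
          v l ∈ segment ℝ (v k) (v (k + 1)) := by
        intro l hl hb hne
        have hd : T (v (k + 1)) - T (v k) ≠ 0 := sub_ne_zero.2 hne.symm
        set w := (T (v l) - T (v k)) / (T (v (k + 1)) - T (v k)) with hw
        have hw1 : w * (T (v (k + 1)) - T (v k)) = T (v l) - T (v k) := div_mul_cancel₀ _ hd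
        have hw0 : 0 ≤ w := by
          rcases hb with h | h
          · exact div_nonneg (by linarith) (by linarith)
          · exact div_nonneg_of_nonpos (by linarith) (by linarith)
        have hw2 : w ≤ 1 := by
          rcases hb with h | h
          · exact div_le_one_of_le₀ (by linarith) (by linarith)
          · exact div_le_one_of_ge (by linarith) (by linarith)
        refine ⟨1 - w, w, by linarith, hw0, by ring, ?_⟩
        have f1 := Sc (v k) (v (k + 1)) (1 - w) w (by ring)
        have f2 := Tc (v k) (v (k + 1)) (1 - w) w (by ring)
        have f3 : T ((1 - w) • v k + w • v (k + 1)) = T (v l) := by rw [f2]; linarith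
        have f4 : S ((1 - w) • v k + w • v (k + 1)) = S (v l) := by
          have : S ((1 - w) • v k + w • v (k + 1)) + T ((1 - w) • v k + w • v (k + 1)) = 1 := by
            rw [f1, f2]; linear_combination (1 - w) * g1' + w * g2'
          linarith
        rw [rep ((1 - w) • v k + w • v (k + 1)), f3, f4, ← rep (v l)]
      have hboth : v i ∈ segment ℝ (v k) (v (k + 1)) ∧
          v (i + 1 + 1) ∈ segment ℝ (v k) (v (k + 1)) := by
        have hTy' := e2
        rcases o1 with o1 | o1 <;> rcases o2 with o2 | o2
        · exfalso; nlinarith [mul_nonneg hp (neg_nonneg.2 o1), mul_nonneg hq (neg_nonneg.2 o2)]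
        · have hne : T (v k) ≠ T (v (k + 1)) := by intro h; linarith
          exact ⟨hmem i (by rw [sa, ta]; norm_num) (by left; rw [ta]; constructor <;> linarith) hne,
            hmem (i + 1 + 1) (by rw [sc, tc]; norm_num)
              (by left; rw [tc]; constructor <;> linarith) hne⟩
        · have hne : T (v k) ≠ T (v (k + 1)) := by intro h; linarith
          exact ⟨hmem i (by rw [sa, ta]; norm_num) (by right; rw [ta]; constructor <;> linarith) hne,
            hmem (i + 1 + 1) (by rw [sc, tc]; norm_num)
              (by right; rw [tc]; constructor <;> linarith) hne⟩
        · exfalso; nlinarith [mul_nonneg hp (sub_nonneg.2 o1), mul_nonneg hq (sub_nonneg.2 o2)]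
      have m1 := (hv.2.2 k i hki ⟨hboth.1, left_mem_segment _ _ _⟩).1
      have m2 := (hv.2.2 k (i + 1) hki' ⟨hboth.2, right_mem_segment _ _ _⟩).1
      rcases m1 with m1 | m1
      · exact hki (hv.2.1 m1).symm
      · rcases m2 with m2 | m2
        · have a1 := hv.2.1 m1
          have a2 := hv.2.1 m2
          rw [← a2] at a1
          exact h4 i a1.symm
        · exact hki' (add_right_cancel (hv.2.1 m2)).symm
    have hcv : Convex ℝ {y | 0 < S y ∧ 0 < T y ∧ S y + T y ≤ 1} := by
      rintro x ⟨x1, x2, x3⟩ y ⟨y1, y2, y3⟩ p q hp hq hpq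
      simp only [Set.mem_ofPred_eq]
      rw [Sc _ _ _ _ hpq, Tc _ _ _ _ hpq]
      rcases hp.eq_or_lt with h | h
      · subst h; obtain rfl : q = 1 := by linarith
        simp only [zero_mul, one_mul, zero_add]; exact ⟨y1, y2, y3⟩
      · have := mul_pos h x1
        have := mul_pos h x2
        have := mul_nonneg hq y1.le
        have := mul_nonneg hq y2.le
        have := mul_le_mul_of_nonneg_left x3 hp
        have := mul_le_mul_of_nonneg_left y3 hq
        refine ⟨by linarith, by linarith, by linarith⟩
    have hsub : {y | 0 < S y ∧ 0 < T y ∧ S y + T y ≤ 1} ⊆ (polyBoundary v)ᶜ := by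
      rintro y ⟨y1, y2, y3⟩
      rcases y3.lt_or_eq with h | h
      · exact hno y y1 y2 h
      · exact hno1 y y1 y2 h
    have hopen : ∀ y ∈ openSegment ℝ (v i) (v (i + 1 + 1)), 0 < S y ∧ 0 < T y ∧ S y + T y ≤ 1 := by
      rintro y ⟨p, q, hp, hq, hpq, rfl⟩
      rw [Sc _ _ _ _ hpq, Tc _ _ _ _ hpq, sa, ta, sc, tc]
      refine ⟨by linarith, by linarith, by linarith⟩
    obtain ⟨r, hr, hball⟩ := Metric.eventually_nhds_iff_ball.1 cone
    obtain ⟨t, ht0, ht1, htb, hm⟩ := combo_near (v (i + 1)) (midpoint ℝ (v i) (v (i + 1 + 1))) hr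
    have hmm := mid_mem (v i) (v (i + 1 + 1))
    obtain ⟨k1, k2, k3⟩ := hopen _ hmm
    have hz : 0 < S (v (i + 1) + t • (midpoint ℝ (v i) (v (i + 1 + 1)) - v (i + 1))) ∧
        0 < T (v (i + 1) + t • (midpoint ℝ (v i) (v (i + 1 + 1)) - v (i + 1))) ∧
        S (v (i + 1) + t • (midpoint ℝ (v i) (v (i + 1 + 1)) - v (i + 1))) +
        T (v (i + 1) + t • (midpoint ℝ (v i) (v (i + 1 + 1)) - v (i + 1))) ≤ 1 := by
      have : v (i + 1) + t • (midpoint ℝ (v i) (v (i + 1 + 1)) - v (i + 1)) =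
        (1 - t) • v (i + 1) + t • midpoint ℝ (v i) (v (i + 1 + 1)) := by module
      rw [this, Sc _ _ _ _ (by ring), Tc _ _ _ _ (by ring), sb, tb]
      refine ⟨by nlinarith, by nlinarith, by nlinarith⟩
    refine ⟨i, i + 1 + 1, add_two_ne hv.1 i, add_one_ne hv.1 (i + 1), (h4 i).symm, fun y hy =>
      ⟨hsub (hopen y hy), ?_⟩⟩
    rw [wn_const hcv.isPreconnected hsub (hopen y hy) hz]
    exact hball _ htb hz.1 hz.2.1

end simple
end part6

section part7
open Filter Topology

section simple
variable {n : ℕ} [NeZero n] {v : Fin n → Pt}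

lemma vertex_on_edge (hv : IsSimplePolygon v) {m k : Fin n}
    (h : v m ∈ segment ℝ (v k) (v (k + 1))) : m = k ∨ m = k + 1 := by
  by_cases hmk : m = k
  · exact Or.inl hmk
  · rcases (hv.2.2 k m (Ne.symm hmk) ⟨h, left_mem_segment _ _ _⟩).1 with h | h
    · exact Or.inl (hv.2.1 h)
    · exact Or.inr (hv.2.1 h)

lemma sub_simple (hv : IsSimplePolygon v) {k : ℕ} [NeZero k] (hk : 3 ≤ k) (g : Fin k → Fin n)
    (hg : Function.Injective g) (l : Fin k) (hs : ∀ i, i ≠ l → g (i + 1) = g i + 1)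
    (hd : ∀ y ∈ openSegment ℝ (v (g l)) (v (g (l + 1))), y ∉ polyBoundary v) :
    IsSimplePolygon (fun i => v (g i)) := by
  refine ⟨hk, hv.2.1.comp hg, ?_⟩
  have key : ∀ j, j ≠ l → segment ℝ (v (g l)) (v (g (l + 1))) ∩ segment ℝ (v (g j)) (v (g (j + 1))) ⊆
      ({v (g l), v (g (l + 1))} ∩ {v (g j), v (g (j + 1))} : Set Pt) := by
    rintro j hj x ⟨hx1, hx2⟩
    rw [hs j hj] at hx2 ⊢
    have hb : x ∈ polyBoundary v := Set.mem_iUnion.2 ⟨_, hx2⟩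
    rw [← insert_endpoints_openSegment] at hx1
    rcases hx1 with h | h | h
    · refine ⟨Or.inl h, ?_⟩
      subst h
      rcases vertex_on_edge hv hx2 with h | h
      · left; rw [h]
      · right; rw [h]; rfl
    · refine ⟨Or.inr h, ?_⟩
      subst h
      rcases vertex_on_edge hv hx2 with h | h
      · left; rw [h]
      · right; rw [h]; rfl
    · exact absurd hb (hd x h)
  intro i j hij
  by_cases hi : i = l
  · subst hi; exact key j (Ne.symm hij)
  by_cases hj : j = l
  · subst hj
    rw [Set.inter_comm, Set.inter_comm ({_, _} : Set Pt)]
    exact key i hi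
  · show segment ℝ (v (g i)) (v (g (i + 1))) ∩ segment ℝ (v (g j)) (v (g (j + 1))) ⊆
      ({v (g i), v (g (i + 1))} ∩ {v (g j), v (g (j + 1))} : Set Pt)
    rw [hs i hi, hs j hj]
    exact hv.2.2 _ _ (fun h => hij (hg h))

lemma dt_swap (a b x : Pt) : dt b a x = - dt a b x := by simp [dt, det2]; ring

/-- signs of the two parts of a split polygon -/
lemma split_sign {k₁ k₂ : ℕ} [NeZero k₁] [NeZero k₂] {v₁ : Fin k₁ → Pt} {v₂ : Fin k₂ → Pt}
    {σ σ₁ σ₂ : ℤ} (hJ : Jor v σ) (h1 : IsSimplePolygon v₁) (h2 : IsSimplePolygon v₂)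
    (hJ1 : Jor v₁ σ₁) (hJ2 : Jor v₂ σ₂) (l₁ : Fin k₁) (l₂ : Fin k₂)
    (e1 : v₁ l₁ = v₂ (l₂ + 1)) (e2 : v₁ (l₁ + 1) = v₂ l₂)
    (hd : ∀ y ∈ openSegment ℝ (v₁ l₁) (v₁ (l₁ + 1)), y ∉ polyBoundary v ∧ wn v y ≠ 0)
    (hW : ∀ x, x ∉ segment ℝ (v₁ l₁) (v₁ (l₁ + 1)) → Wd v x = Wd v₁ x + Wd v₂ x) :
    σ₁ = σ ∧ σ₂ = σ := by
  have hm := mid_mem (v₁ l₁) (v₁ (l₁ + 1))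
  set m := midpoint ℝ (v₁ l₁) (v₁ (l₁ + 1)) with hmd
  have hm2 : m ∈ openSegment ℝ (v₂ l₂) (v₂ (l₂ + 1)) := by
    rw [← e1, ← e2, openSegment_symm]; exact hm
  obtain ⟨hmb, hmw⟩ := hd m hm
  have hmσ : wn v m = σ := (hJ.val m hmb).resolve_left hmw
  obtain ⟨U, hU, hUb, hUJ⟩ := jump (edge_ne h1 l₁) hm (fun j hj => open_edge_other h1 hj hm)
  obtain ⟨V, hV, hVb, hVJ⟩ := jump (edge_ne h2 l₂) hm2 (fun j hj => open_edge_other h2 hj hm2)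
  have hO := (wn_open v σ).mem_nhds ⟨hmb, hmσ⟩
  have hdm := dt_seg (openSegment_subset_segment _ _ _ hm)
  have n1 := Side_neBot one_ne_zero (edge_ne h1 l₁) hdm
  have n2 := Side_neBot (neg_ne_zero.2 one_ne_zero) (edge_ne h1 l₁) hdm
  obtain ⟨x, ⟨x1, x2, x3⟩, x4⟩ := Filter.nonempty_of_mem (inter_mem
    (mem_nhdsWithin_of_mem_nhds (inter_mem hU (inter_mem hV hO)))
    (self_mem_nhdsWithin (a := m) (s := Side 1 (v₁ l₁) (v₁ (l₁ + 1)))))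
  obtain ⟨y, ⟨y1, y2, y3⟩, y4⟩ := Filter.nonempty_of_mem (inter_mem
    (mem_nhdsWithin_of_mem_nhds (inter_mem hU (inter_mem hV hO)))
    (self_mem_nhdsWithin (a := m) (s := Side (-1) (v₁ l₁) (v₁ (l₁ + 1)))))
  simp only [Side, Set.mem_ofPred_eq] at x3 x4 y3 y4
  have dx : dt (v₂ l₂) (v₂ (l₂ + 1)) x < 0 := by rw [← e1, ← e2, dt_swap]; linarith
  have dy : 0 < dt (v₂ l₂) (v₂ (l₂ + 1)) y := by rw [← e1, ← e2, dt_swap]; linarith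
  have j1 := hUJ x x1 y y1 (by linarith) (by linarith)
  have j2 := hVJ y y2 x x2 dy dx
  have bx1 := hUb x x1 (by linarith)
  have by1 := hUb y y1 (by linarith)
  have bx2 := hVb x x2 dx.ne
  have by2 := hVb y y2 dy.ne'
  have sumx : ∀ z, z ∉ segment ℝ (v₁ l₁) (v₁ (l₁ + 1)) → z ∉ polyBoundary v →
      z ∉ polyBoundary v₁ → z ∉ polyBoundary v₂ → wn v z = wn v₁ z + wn v₂ z := by
    intro z hz a1 a2 a3
    have := hW z hz
    rw [Wd_wn a1, Wd_wn a2, Wd_wn a3, ← mul_add] at this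
    have := mul_left_cancel₀ (by positivity) this
    exact_mod_cast this
  have s1 := sumx x (fun h => by have := dt_seg h; linarith) x3.1 bx1 bx2
  have s2 := sumx y (fun h => by have := dt_seg h; linarith) y3.1 by1 by2
  rw [x3.2] at s1
  rw [y3.2] at s2
  have a1 := hJ1.val x bx1
  have a2 := hJ1.val y by1
  have a3 := hJ2.val x bx2
  have a4 := hJ2.val y by2
  have a5 := hJ.hs
  have a6 := hJ1.hs
  have a7 := hJ2.hs
  omega

/-- packaged splitting along a diagonal -/
lemma split (hv : IsSimplePolygon v) {σ : ℤ} (hJ : Jor v σ) {k₁ k₂ : ℕ} [NeZero k₁] [NeZero k₂]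
    (hk₁ : 3 ≤ k₁) (hk₂ : 3 ≤ k₂) (g₁ : Fin k₁ → Fin n) (g₂ : Fin k₂ → Fin n)
    (hg₁ : Function.Injective g₁) (hg₂ : Function.Injective g₂) (l₁ : Fin k₁) (l₂ : Fin k₂)
    (hs₁ : ∀ i, i ≠ l₁ → g₁ (i + 1) = g₁ i + 1) (hs₂ : ∀ i, i ≠ l₂ → g₂ (i + 1) = g₂ i + 1)
    (e1 : g₁ l₁ = g₂ (l₂ + 1)) (e2 : g₁ (l₁ + 1) = g₂ l₂)
    (hd : ∀ y ∈ openSegment ℝ (v (g₁ l₁)) (v (g₁ (l₁ + 1))), y ∉ polyBoundary v ∧ wn v y ≠ 0)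
    (hW : ∀ x, x ∉ segment ℝ (v (g₁ l₁)) (v (g₁ (l₁ + 1))) →
      Wd v x = Wd (fun i => v (g₁ i)) x + Wd (fun i => v (g₂ i)) x) :
    (IsSimplePolygon (fun i => v (g₁ i)) ∧ Jor (fun i => v (g₁ i)) σ) ∧
      (IsSimplePolygon (fun i => v (g₂ i)) ∧ Jor (fun i => v (g₂ i)) σ) := by
  have h1 := sub_simple hv hk₁ g₁ hg₁ l₁ hs₁ (fun y hy => (hd y hy).1)
  have h2 := sub_simple hv hk₂ g₂ hg₂ l₂ hs₂ (fun y hy => (hd y (by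
    rw [e1, e2, openSegment_symm]; exact hy)).1)
  obtain ⟨σ₁, hJ1⟩ := jordan h1
  obtain ⟨σ₂, hJ2⟩ := jordan h2
  obtain ⟨rfl, rfl⟩ := split_sign hJ h1 h2 hJ1 hJ2 l₁ l₂ (by rw [e1]) (by rw [e2]) hd hW
  exact ⟨⟨h1, hJ1⟩, h2, hJ2⟩

/-- rotation of the labels -/
def rotP (v : Fin n → Pt) (i : Fin n) : Fin n → Pt := fun k => v (i + k)

lemma rotP_rotP (v : Fin n → Pt) (i j : Fin n) : rotP (rotP v i) j = rotP v (i + j) := by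
  funext k; simp [rotP, add_assoc]

lemma rotP_bd (v : Fin n → Pt) (i : Fin n) : polyBoundary (rotP v i) = polyBoundary v := by
  unfold polyBoundary rotP
  simp only [← add_assoc]
  exact (Equiv.addLeft i).surjective.iUnion_comp (fun k => segment ℝ (v k) (v (k + 1)))

lemma rotP_Wd (v : Fin n → Pt) (i : Fin n) (x : Pt) : Wd (rotP v i) x = Wd v x := by
  unfold Wd rotP
  simp only [← add_assoc]
  exact Equiv.sum_comp (Equiv.addLeft i) (fun k => th (v k) (v (k + 1)) x)

lemma rotP_wn (v : Fin n → Pt) (i : Fin n) (x : Pt) : wn (rotP v i) x = wn v x := by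
  unfold wn; rw [rotP_Wd]

lemma rotP_int (v : Fin n → Pt) (i : Fin n) : polyInterior (rotP v i) = polyInterior v := by
  unfold polyInterior; rw [rotP_bd]

lemma rotP_region (v : Fin n → Pt) (i : Fin n) : polyRegion (rotP v i) = polyRegion v := by
  unfold polyRegion; rw [rotP_bd, rotP_int]

lemma rotP_range (v : Fin n → Pt) (i : Fin n) : Set.range (rotP v i) = Set.range v :=
  (Equiv.addLeft i).surjective.range_comp v

lemma rotP_ccw (v : Fin n → Pt) (i : Fin n) (h : IsCCW v) : IsCCW (rotP v i) := by
  unfold IsCCW signedArea2 rotP at *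
  simp only [← add_assoc]
  exact lt_of_lt_of_eq h (Equiv.sum_comp (Equiv.addLeft i) (fun k => det2 (v k) (v (k + 1)))).symm

lemma rotP_simple (hv : IsSimplePolygon v) (i : Fin n) : IsSimplePolygon (rotP v i) := by
  refine ⟨hv.1, hv.2.1.comp (add_right_injective i), fun j k hjk => ?_⟩
  simp only [rotP, ← add_assoc]
  exact hv.2.2 _ _ (fun h => hjk (add_left_cancel h))

lemma rotP_jor {σ : ℤ} (h : Jor v σ) (i : Fin n) : Jor (rotP v i) σ := by
  constructor
  · exact h.hs
  · intro x hx; rw [rotP_bd] at hx; rw [rotP_wn]; exact h.val x hx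
  · intro x; rw [rotP_bd, rotP_int, rotP_wn]; exact h.int x
  · rw [rotP_bd, rotP_int]; exact h.clI
  · simp only [rotP_bd, rotP_wn]; exact h.clO

end simple

lemma dt_cyc (a b c : Pt) : dt b c a = dt a b c := by simp [dt, det2]; ring

lemma dt_half (a b x y : Pt) : (rot (b - a)).1 * (y.1 - x.1) + (rot (b - a)).2 * (y.2 - x.2) =
    dt a b y - dt a b x := by simp [rot, dt, det2]; ring

lemma Wd3 (v : Fin 3 → Pt) (x : Pt) : Wd v x = th (v 0) (v 1) x + th (v 1) (v 2) x + th (v 2) (v 0) x := by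
  rw [Wd, Fin.sum_univ_three]; rfl

lemma Wd4 (v : Fin 4 → Pt) (x : Pt) : Wd v x = th (v 0) (v 1) x + th (v 1) (v 2) x +
    th (v 2) (v 3) x + th (v 3) (v 0) x := by
  rw [Wd, Fin.sum_univ_four]; rfl

lemma Wd5 (v : Fin 5 → Pt) (x : Pt) : Wd v x = th (v 0) (v 1) x + th (v 1) (v 2) x +
    th (v 2) (v 3) x + th (v 3) (v 4) x + th (v 4) (v 0) x := by
  rw [Wd, Fin.sum_univ_five]; rfl

lemma Wd6 (v : Fin 6 → Pt) (x : Pt) : Wd v x = th (v 0) (v 1) x + th (v 1) (v 2) x +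
    th (v 2) (v 3) x + th (v 3) (v 4) x + th (v 4) (v 5) x + th (v 5) (v 0) x := by
  rw [Wd, Fin.sum_univ_six]; rfl

/-- orientation of a triangle -/
lemma tri_sign {u : Fin 3 → Pt} (hu : IsSimplePolygon u) {σ : ℤ} (hJ : Jor u σ) :
    0 < (σ : ℝ) * dt (u 0) (u 1) (u 2) := by
  have b0 : ∀ x, x ∈ polyBoundary u → dt (u 0) (u 1) x = 0 ∨ dt (u 1) (u 2) x = 0 ∨
      dt (u 2) (u 0) x = 0 := by
    intro x hx
    obtain ⟨i, hi⟩ := Set.mem_iUnion.1 hx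
    have := dt_seg hi
    fin_cases i
    · exact Or.inl this
    · exact Or.inr (Or.inl this)
    · exact Or.inr (Or.inr this)
  set g : Pt := (1 / 3 : ℝ) • (u 0 + u 1 + u 2) with hg
  have g1 : dt (u 0) (u 1) g = dt (u 0) (u 1) (u 2) / 3 := by simp [hg, dt, det2]; ring
  have g2 : dt (u 1) (u 2) g = dt (u 0) (u 1) (u 2) / 3 := by simp [hg, dt, det2]; ring
  have g3 : dt (u 2) (u 0) g = dt (u 0) (u 1) (u 2) / 3 := by simp [hg, dt, det2]; ring
  have hpi := Real.pi_pos
  rcases lt_trichotomy (dt (u 0) (u 1) (u 2)) 0 with h | h | h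
  · have hb : g ∉ polyBoundary u := by
      intro hb
      rcases b0 g hb with h' | h' | h' <;> linarith
    have hw := Wd_wn hb
    have t1 := (th_neg (show dt (u 0) (u 1) g < 0 by linarith)).1
    have t2 := (th_neg (show dt (u 1) (u 2) g < 0 by linarith)).1
    have t3 := (th_neg (show dt (u 2) (u 0) g < 0 by linarith)).1
    rw [Wd3] at hw
    have : (wn u g : ℝ) < 0 := by
      by_contra hc
      have := mul_nonneg (by positivity : (0:ℝ) ≤ 2 * Real.pi) (not_lt.1 hc)
      linarith
    have h2 : wn u g < 0 := by exact_mod_cast this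
    have := hJ.val g hb
    have := hJ.hs
    have : σ = -1 := by omega
    rw [this]; push_cast; linarith
  · exfalso
    have hall : ∀ i, dt (u 0) (u 1) (u i) = 0 := by
      intro i; fin_cases i
      · exact dt_left _ _
      · exact dt_right _ _
      · exact h
    have hz : ∀ x, dt (u 0) (u 1) x ≠ 0 → wn u x = 0 := by
      intro x hx
      rcases lt_or_gt_of_ne hx with h | h
      · refine wn_half u x (rot (u 1 - u 0)) fun i => ?_
        rw [dt_half, hall]; linarith
      · refine wn_half u x (rot (u 0 - u 1)) fun i => ?_
        rw [dt_half, dt_swap (u 0) (u 1) (u i), dt_swap (u 0) (u 1) x, hall]; linarith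
    have hm := mid_mem (u 0) (u (0 + 1))
    obtain ⟨U, hU, -, hUJ⟩ := jump (edge_ne hu 0) hm (fun j hj => open_edge_other hu hj hm)
    have hdm := dt_seg (openSegment_subset_segment _ _ _ hm)
    have n1 := Side_neBot one_ne_zero (edge_ne hu 0) hdm
    have n2 := Side_neBot (neg_ne_zero.2 one_ne_zero) (edge_ne hu 0) hdm
    obtain ⟨x, x1, x4⟩ := Filter.nonempty_of_mem (inter_mem
      (mem_nhdsWithin_of_mem_nhds hU)
      (self_mem_nhdsWithin (s := Side 1 (u 0) (u (0 + 1)))))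
    obtain ⟨y, y1, y4⟩ := Filter.nonempty_of_mem (inter_mem
      (mem_nhdsWithin_of_mem_nhds hU)
      (self_mem_nhdsWithin (s := Side (-1) (u 0) (u (0 + 1)))))
    simp only [Side, Set.mem_ofPred_eq, zero_add] at x4 y4
    have := hUJ x x1 y y1 (by rw [zero_add]; linarith) (by rw [zero_add]; linarith)
    rw [hz x (by linarith), hz y (by linarith)] at this
    omega
  · have hb : g ∉ polyBoundary u := by
      intro hb
      rcases b0 g hb with h' | h' | h' <;> linarith
    have hw := Wd_wn hb
    have t1 := (th_pos (show 0 < dt (u 0) (u 1) g by linarith)).1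
    have t2 := (th_pos (show 0 < dt (u 1) (u 2) g by linarith)).1
    have t3 := (th_pos (show 0 < dt (u 2) (u 0) g by linarith)).1
    rw [Wd3] at hw
    have : (0 : ℝ) < wn u g := by
      by_contra hc
      have := mul_nonpos_of_nonneg_of_nonpos (by positivity : (0:ℝ) ≤ 2 * Real.pi) (not_lt.1 hc)
      linarith
    have h2 : 0 < wn u g := by exact_mod_cast this
    have := hJ.val g hb
    have := hJ.hs
    have : σ = 1 := by omega
    rw [this]; push_cast; linarith

/-- a diagonal in rotated labels -/
lemma diag_rot {n : ℕ} [NeZero n] {v : Fin n → Pt} (i j : Fin n)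
    (hd : ∀ y ∈ openSegment ℝ (v i) (v (i + j)), y ∉ polyBoundary v ∧ wn v y ≠ 0) :
    ∀ y ∈ openSegment ℝ (rotP v i j) (rotP v i 0),
      y ∉ polyBoundary (rotP v i) ∧ wn (rotP v i) y ≠ 0 := by
  intro y hy
  rw [rotP_bd, rotP_wn]
  rw [openSegment_symm] at hy
  exact hd y (by simpa [rotP] using hy)

/-- every quadrilateral is split by a diagonal -/
lemma quad_tri {v : Fin 4 → Pt} (hv : IsSimplePolygon v) {σ : ℤ} (hJ : Jor v σ) :
    ∃ i : Fin 4, 0 < (σ : ℝ) * dt (v i) (v (i + 1)) (v (i + 2)) ∧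
      0 < (σ : ℝ) * dt (v i) (v (i + 2)) (v (i + 3)) := by
  obtain ⟨i, j, h1, h2, h3, hd⟩ := diag_exists hv (by decide)
  have key : ∀ i j : Fin 4, j ≠ i → j ≠ i + 1 → i ≠ j + 1 → j = i + 2 := by decide
  obtain rfl := key i j h1 h2 h3
  refine ⟨i, ?_⟩
  have hw := rotP_simple hv i
  have hJw := rotP_jor hJ i
  have hd' := diag_rot i 2 hd
  obtain ⟨⟨a1, a2⟩, b1, b2⟩ := split hw hJw (by norm_num) (by norm_num) ![0, 1, 2] ![2, 3, 0]
    (by decide) (by decide) 2 2 (by decide) (by decide) (by decide) (by decide) hd' (by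
      intro x hx
      have hx' : x ∉ segment ℝ (rotP v i 2) (rotP v i 0) := hx
      have := th_anti hx'
      rw [Wd4, Wd3, Wd3]
      simp
      linarith)
  have t1 := tri_sign a1 a2
  have t2 := tri_sign b1 b2
  rw [dt_cyc] at t2
  simp [rotP] at t1 t2
  exact ⟨t1, t2⟩

/-- every pentagon is split into a fan -/
lemma pent_tri {v : Fin 5 → Pt} (hv : IsSimplePolygon v) {σ : ℤ} (hJ : Jor v σ) :
    ∃ i : Fin 5, 0 < (σ : ℝ) * dt (v i) (v (i + 1)) (v (i + 2)) ∧
      0 < (σ : ℝ) * dt (v i) (v (i + 2)) (v (i + 3)) ∧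
      0 < (σ : ℝ) * dt (v i) (v (i + 3)) (v (i + 4)) := by
  obtain ⟨i, hd⟩ : ∃ i, ∀ y ∈ openSegment ℝ (v i) (v (i + 2)), y ∉ polyBoundary v ∧ wn v y ≠ 0 := by
    obtain ⟨i, j, h1, h2, h3, hd⟩ := diag_exists hv (by decide)
    have key : ∀ i j : Fin 5, j ≠ i → j ≠ i + 1 → i ≠ j + 1 → j = i + 2 ∨ i = j + 2 := by decide
    rcases key i j h1 h2 h3 with rfl | rfl
    · exact ⟨i, hd⟩
    · refine ⟨j, fun y hy => hd y ?_⟩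
      rwa [openSegment_symm]
  have hw := rotP_simple hv i
  have hJw := rotP_jor hJ i
  have hd' := diag_rot i 2 hd
  obtain ⟨⟨a1, a2⟩, b1, b2⟩ := split hw hJw (by norm_num) (by norm_num) ![0, 1, 2] ![0, 2, 3, 4]
    (by decide) (by decide) 2 0 (by decide) (by decide) (by decide) (by decide) hd' (by
      intro x hx
      have hx' : x ∉ segment ℝ (rotP v i 2) (rotP v i 0) := hx
      have := th_anti hx'
      rw [Wd5, Wd3, Wd4]
      simp
      linarith)
  have t1 := tri_sign a1 a2
  obtain ⟨k, t2, t3⟩ := quad_tri b1 b2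
  suffices h : ∃ k : Fin 5, 0 < (σ : ℝ) * dt (rotP v i k) (rotP v i (k + 1)) (rotP v i (k + 2)) ∧
      0 < (σ : ℝ) * dt (rotP v i k) (rotP v i (k + 2)) (rotP v i (k + 3)) ∧
      0 < (σ : ℝ) * dt (rotP v i k) (rotP v i (k + 3)) (rotP v i (k + 4)) by
    obtain ⟨k, hk⟩ := h
    exact ⟨i + k, by simpa only [rotP, add_assoc] using hk⟩
  generalize rotP v i = w at *
  have t1' : 0 < (σ : ℝ) * dt (w 0) (w 1) (w 2) := t1
  fin_cases k
  · exact ⟨0, t1', t2, t3⟩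
  · refine ⟨2, t2, ?_, ?_⟩
    · exact t3
    · show 0 < (σ : ℝ) * dt (w 2) (w 0) (w 1)
      rw [← dt_cyc]; exact t1
  · refine ⟨0, t1, ?_, ?_⟩
    · show 0 < (σ : ℝ) * dt (w 0) (w 2) (w 3)
      rw [← dt_cyc, ← dt_cyc, dt_cyc, ← dt_cyc]; exact t3
    · show 0 < (σ : ℝ) * dt (w 0) (w 3) (w 4)
      rw [← dt_cyc]; exact t2
  · refine ⟨2, ?_, ?_, ?_⟩
    · show 0 < (σ : ℝ) * dt (w 2) (w 3) (w 4)
      rw [← dt_cyc, ← dt_cyc]; exact t3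
    · show 0 < (σ : ℝ) * dt (w 2) (w 4) (w 0)
      rw [← dt_cyc]; exact t2
    · show 0 < (σ : ℝ) * dt (w 2) (w 0) (w 1)
      rw [← dt_cyc]; exact t1

/-- orientation predicate -/
def TP (σ : ℤ) (w : Fin 6 → Pt) (a b c : Fin 6) : Prop := 0 < (σ : ℝ) * dt (w a) (w b) (w c)

lemma TP.c {σ : ℤ} {w : Fin 6 → Pt} {a b c : Fin 6} (h : TP σ w a b c) : TP σ w b c a := by
  unfold TP at *; rw [dt_cyc]; exact h

/-- the four triangulation shapes -/
def Shape (σ : ℤ) (w : Fin 6 → Pt) : Prop :=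
  (TP σ w 0 1 3 ∧ TP σ w 1 2 3 ∧ TP σ w 0 3 5 ∧ TP σ w 3 4 5) ∨
  (TP σ w 0 1 2 ∧ TP σ w 0 2 3 ∧ TP σ w 0 3 5 ∧ TP σ w 3 4 5) ∨
  (TP σ w 0 1 2 ∧ TP σ w 0 2 5 ∧ TP σ w 2 3 5 ∧ TP σ w 3 4 5) ∨
  (TP σ w 1 3 5 ∧ TP σ w 1 2 3 ∧ TP σ w 3 4 5 ∧ TP σ w 5 0 1)

lemma hex_tri {v : Fin 6 → Pt} (hv : IsSimplePolygon v) {σ : ℤ} (hJ : Jor v σ) :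
    ∃ i, Shape σ (rotP v i) := by
  obtain ⟨i, hd⟩ : ∃ i, (∀ y ∈ openSegment ℝ (v i) (v (i + 2)), y ∉ polyBoundary v ∧ wn v y ≠ 0) ∨
      (∀ y ∈ openSegment ℝ (v i) (v (i + 3)), y ∉ polyBoundary v ∧ wn v y ≠ 0) := by
    obtain ⟨i, j, h1, h2, h3, hd⟩ := diag_exists hv (by decide)
    have key : ∀ i j : Fin 6, j ≠ i → j ≠ i + 1 → i ≠ j + 1 → j = i + 2 ∨ i = j + 2 ∨ j = i + 3 := by
      decide
    rcases key i j h1 h2 h3 with rfl | rfl | rfl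
    · exact ⟨i, Or.inl hd⟩
    · refine ⟨j, Or.inl fun y hy => hd y ?_⟩
      rwa [openSegment_symm]
    · exact ⟨i, Or.inr hd⟩
  have hw := rotP_simple hv i
  have hJw := rotP_jor hJ i
  suffices h : ∃ k, Shape σ (rotP (rotP v i) k) by
    obtain ⟨k, hk⟩ := h
    exact ⟨i + k, by rwa [rotP_rotP] at hk⟩
  rcases hd with hd | hd
  · have hd' := diag_rot i 2 hd
    generalize rotP v i = w at *
    obtain ⟨⟨a1, a2⟩, b1, b2⟩ := split hw hJw (by norm_num) (by norm_num) ![0, 1, 2]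
      ![0, 2, 3, 4, 5]
      (by decide) (by decide) 2 0 (by decide) (by decide) (by decide) (by decide) hd' (by
        intro x hx
        have hx' : x ∉ segment ℝ (w 2) (w 0) := hx
        have := th_anti hx'
        rw [Wd6, Wd3, Wd5]
        simp
        linarith)
    have t : TP σ w 0 1 2 := tri_sign a1 a2
    obtain ⟨k, t1, t2, t3⟩ := pent_tri b1 b2
    fin_cases k
    · have t1' : TP σ w 0 2 3 := t1
      have t2' : TP σ w 0 3 4 := t2
      have t3' : TP σ w 0 4 5 := t3
      exact ⟨3, Or.inl ⟨t2'.c, t3'.c, t1'.c.c, t⟩⟩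
    · have t1' : TP σ w 2 3 4 := t1
      have t2' : TP σ w 2 4 5 := t2
      have t3' : TP σ w 2 5 0 := t3
      exact ⟨5, Or.inl ⟨t3'.c, t, t2'.c.c, t1'⟩⟩
    · have t1' : TP σ w 3 4 5 := t1
      have t2' : TP σ w 3 5 0 := t2
      have t3' : TP σ w 3 0 2 := t3
      exact ⟨0, Or.inr (Or.inl ⟨t, t3'.c, t2'.c.c, t1'⟩)⟩
    · have t1' : TP σ w 4 5 0 := t1
      have t2' : TP σ w 4 0 2 := t2
      have t3' : TP σ w 4 2 3 := t3
      exact ⟨1, Or.inr (Or.inr (Or.inr ⟨t2'.c.c, t3'.c, t1', t⟩))⟩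
    · have t1' : TP σ w 5 0 2 := t1
      have t2' : TP σ w 5 2 3 := t2
      have t3' : TP σ w 5 3 4 := t3
      exact ⟨0, Or.inr (Or.inr (Or.inl ⟨t, t1'.c, t2'.c, t3'.c⟩))⟩
  · have hd' := diag_rot i 3 hd
    generalize rotP v i = w at *
    obtain ⟨⟨a1, a2⟩, b1, b2⟩ := split hw hJw (by norm_num) (by norm_num) ![0, 1, 2, 3]
      ![0, 3, 4, 5]
      (by decide) (by decide) 3 0 (by decide) (by decide) (by decide) (by decide) hd' (by
        intro x hx
        have hx' : x ∉ segment ℝ (w 3) (w 0) := hx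
        have := th_anti hx'
        rw [Wd6, Wd4, Wd4]
        simp
        linarith)
    obtain ⟨k, s1, s2⟩ := quad_tri a1 a2
    obtain ⟨l, t1, t2⟩ := quad_tri b1 b2
    have hA : (TP σ w 0 1 2 ∧ TP σ w 0 2 3) ∨ (TP σ w 1 2 3 ∧ TP σ w 0 1 3) := by
      fin_cases k
      · exact Or.inl ⟨s1, s2⟩
      · have s1' : TP σ w 1 2 3 := s1
        have s2' : TP σ w 1 3 0 := s2
        exact Or.inr ⟨s1', s2'.c.c⟩
      · have s1' : TP σ w 2 3 0 := s1
        have s2' : TP σ w 2 0 1 := s2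
        exact Or.inl ⟨s2'.c, s1'.c.c⟩
      · have s1' : TP σ w 3 0 1 := s1
        have s2' : TP σ w 3 1 2 := s2
        exact Or.inr ⟨s2'.c, s1'.c⟩
    have hB : (TP σ w 0 3 4 ∧ TP σ w 0 4 5) ∨ (TP σ w 3 4 5 ∧ TP σ w 0 3 5) := by
      fin_cases l
      · exact Or.inl ⟨t1, t2⟩
      · have s1' : TP σ w 3 4 5 := t1
        have s2' : TP σ w 3 5 0 := t2
        exact Or.inr ⟨s1', s2'.c.c⟩
      · have s1' : TP σ w 4 5 0 := t1
        have s2' : TP σ w 4 0 3 := t2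
        exact Or.inl ⟨s2'.c, s1'.c.c⟩
      · have s1' : TP σ w 5 0 3 := t1
        have s2' : TP σ w 5 3 4 := t2
        exact Or.inr ⟨s2'.c, s1'.c⟩
    rcases hA with ⟨A1, A2⟩ | ⟨A1, A2⟩ <;> rcases hB with ⟨B1, B2⟩ | ⟨B1, B2⟩
    · exact ⟨3, Or.inl ⟨B1.c, B2.c, A2.c.c, A1⟩⟩
    · exact ⟨0, Or.inr (Or.inl ⟨A1, A2, B2, B1⟩)⟩
    · exact ⟨4, Or.inr (Or.inr (Or.inl ⟨B2.c, B1.c.c, A2, A1⟩))⟩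
    · exact ⟨0, Or.inl ⟨A2, A1, B2, B1⟩⟩

lemma hex_sign {w : Fin 6 → Pt} (hc : IsCCW w) {σ : ℤ} (hs : σ = 1 ∨ σ = -1)
    (h : Shape σ w) : σ = 1 := by
  rcases hs with rfl | rfl
  · rfl
  exfalso
  unfold IsCCW signedArea2 at hc
  rw [Fin.sum_univ_six] at hc
  have e : ((5 : Fin 6) + 1) = 0 := rfl
  simp only [Shape, TP, dt, det2, Prod.fst_sub, Prod.snd_sub] at h
  norm_num [det2, e] at hc h
  simp only [show (2 + 1 : Fin 6) = 3 from rfl, show (3 + 1 : Fin 6) = 4 from rfl,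
    show (4 + 1 : Fin 6) = 5 from rfl, show (1 + 1 : Fin 6) = 2 from rfl] at hc
  rcases h with ⟨a, b, c, d⟩ | ⟨a, b, c, d⟩ | ⟨a, b, c, d⟩ | ⟨a, b, c, d⟩ <;> nlinarith
end part7

section part8
section tiles
open Filter Topology

/-- open convex cell -/
def Oc {k : ℕ} [NeZero k] (u : Fin k → Pt) : Set Pt := {x | ∀ i, 0 < dt (u i) (u (i + 1)) x}

/-- general position set -/
def Gs {ι : Type} {k : ℕ} [NeZero k] (u : ι → Fin k → Pt) : Set Pt :=
  {x | ∀ c i, dt (u c i) (u c (i + 1)) x ≠ 0}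

lemma Oc_open {k : ℕ} [NeZero k] (u : Fin k → Pt) : IsOpen (Oc u) := by
  have : Oc u = ⋂ i, {x | 0 < dt (u i) (u (i + 1)) x} := by ext x; simp [Oc]
  rw [this]
  exact isOpen_iInter_of_finite fun i => isOpen_lt continuous_const (dt_cont _ _)

lemma line_dense {a b : Pt} (h : a ≠ b) : Dense {x | dt a b x ≠ 0} := by
  intro x
  by_cases hx : dt a b x = 0
  · have := Side_neBot one_ne_zero h hx
    refine closure_mono ?_ (mem_closure_iff_nhdsWithin_neBot.2 this)
    intro y hy
    simp only [Side, Set.mem_ofPred_eq, one_mul] at hy ⊢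
    exact ne_of_gt hy
  · exact subset_closure hx

lemma Gs_dense {ι : Type} [Finite ι] {k : ℕ} [NeZero k] (u : ι → Fin k → Pt)
    (hne : ∀ c i, u c i ≠ u c (i + 1)) : Dense (Gs u) := by
  have : Gs u = ⋂ p : ι × Fin k, {x | dt (u p.1 p.2) (u p.1 (p.2 + 1)) x ≠ 0} := by
    ext x; simp [Gs]
  rw [this]
  refine dense_iInter_of_isOpen (fun p => ?_) (fun p => line_dense (hne _ _))
  exact isOpen_ne_fun (dt_cont _ _) continuous_const

lemma Wd_in {k : ℕ} [NeZero k] (hk : k ≤ 4) {u : Fin k → Pt} {x : Pt} (hx : x ∈ Oc u) :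
    Wd u x = 2 * Real.pi := by
  have hb : x ∉ polyBoundary u := by
    intro hb
    obtain ⟨i, hi⟩ := Set.mem_iUnion.1 hb
    have := hx i
    have := dt_seg hi
    linarith
  have hw := Wd_wn hb
  have hp := Real.pi_pos
  have hk0 : 0 < k := Nat.pos_of_ne_zero (NeZero.ne k)
  have h1 : 0 < Wd u x := by
    unfold Wd
    exact Finset.sum_pos (fun i _ => (th_pos (hx i)).1) ⟨⟨0, hk0⟩, Finset.mem_univ _⟩
  have h2 : Wd u x < 4 * Real.pi := by
    unfold Wd
    calc _ < ∑ i : Fin k, Real.pi := Finset.sum_lt_sum_of_nonempty ⟨⟨0, hk0⟩, Finset.mem_univ _⟩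
            (fun i _ => (th_pos (hx i)).2)
      _ = k * Real.pi := by simp
      _ ≤ 4 * Real.pi := by
        have : (k : ℝ) ≤ 4 := by exact_mod_cast hk
        nlinarith
  rw [hw] at h1 h2
  have a1 : (0 : ℝ) < wn u x := by
    by_contra h
    nlinarith
  have a2 : (wn u x : ℝ) < 2 := by
    by_contra h
    nlinarith
  have b1 : 0 < wn u x := by exact_mod_cast a1
  have b2 : wn u x < 2 := by exact_mod_cast a2
  have : wn u x = 1 := by omega
  rw [hw, this]; simp

lemma Wd_out {k : ℕ} [NeZero k] {u : Fin k → Pt} {x : Pt}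
    (hu : ∀ i j, 0 ≤ dt (u i) (u (i + 1)) (u j)) {i : Fin k} (hi : dt (u i) (u (i + 1)) x < 0) :
    Wd u x = 0 := by
  refine Wd_half u x (rot (u (i + 1) - u i)) fun j => ?_
  rw [dt_half]
  have := hu i j
  linarith

structure Tiling {ι : Type} [Fintype ι] {k : ℕ} [NeZero k] (v : Fin 6 → Pt) (u : ι → Fin k → Pt) :
    Prop where
  hk : k ≤ 4
  hJ : Jor v 1
  ne : ∀ c i, u c i ≠ u c (i + 1)
  cv : ∀ c i j, 0 ≤ dt (u c i) (u c (i + 1)) (u c j)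
  sum : ∀ x ∈ Gs u, ∑ c, Wd (u c) x = Wd v x
  ed : ∀ i, ∃ c j, u c j = v i ∧ u c (j + 1) = v (i + 1)

variable {ι : Type} [Fintype ι] {k : ℕ} [NeZero k] {v : Fin 6 → Pt} {u : ι → Fin k → Pt}

lemma Tiling.bd (T : Tiling v u) {x : Pt} (hx : x ∈ Gs u) : x ∉ polyBoundary v := by
  intro hb
  obtain ⟨i, hi⟩ := Set.mem_iUnion.1 hb
  obtain ⟨c, j, h1, h2⟩ := T.ed i
  have := hx c j
  rw [h1, h2] at this
  exact this (dt_seg hi)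

lemma Tiling.val (T : Tiling v u) {x : Pt} (hx : x ∈ Gs u) (c : ι) :
    (x ∈ Oc (u c) ∧ Wd (u c) x = 2 * Real.pi) ∨ (x ∉ Oc (u c) ∧ Wd (u c) x = 0) := by
  by_cases h : x ∈ Oc (u c)
  · exact Or.inl ⟨h, Wd_in T.hk h⟩
  · refine Or.inr ⟨h, ?_⟩
    simp only [Oc, Set.mem_ofPred_eq, not_forall, not_lt] at h
    obtain ⟨i, hi⟩ := h
    exact Wd_out (T.cv c) (lt_of_le_of_ne hi (hx c i))

lemma Tiling.nn (T : Tiling v u) {x : Pt} (hx : x ∈ Gs u) (c : ι) : 0 ≤ Wd (u c) x := by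
  have := Real.pi_pos
  rcases T.val hx c with h | h <;> linarith [h.2]

lemma Tiling.dense (T : Tiling v u) : Dense (Gs u) := Gs_dense u T.ne

lemma Tiling.disjG (T : Tiling v u) {c d : ι} (hcd : c ≠ d) {x : Pt} (hx : x ∈ Gs u)
    (h1 : x ∈ Oc (u c)) (h2 : x ∈ Oc (u d)) : False := by
  have hp := Real.pi_pos
  have hs := T.sum x hx
  rw [Wd_wn (T.bd hx)] at hs
  have h3 : Wd (u c) x + Wd (u d) x ≤ ∑ c, Wd (u c) x :=
    Finset.add_le_sum (fun i _ => T.nn hx i) (Finset.mem_univ _) (Finset.mem_univ _) hcd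
  rw [Wd_in T.hk h1, Wd_in T.hk h2] at h3
  rcases T.hJ.val x (T.bd hx) with h | h <;> rw [h] at hs <;> push_cast at hs <;> linarith

lemma Tiling.disj (T : Tiling v u) {c d : ι} (hcd : c ≠ d) {x : Pt}
    (h1 : x ∈ Oc (u c)) (h2 : x ∈ Oc (u d)) : False := by
  obtain ⟨y, ⟨y1, y2⟩, y3⟩ := T.dense.inter_open_nonempty _ ((Oc_open (u c)).inter (Oc_open (u d)))
    ⟨x, h1, h2⟩
  exact T.disjG hcd y3 y1 y2

lemma Tiling.sub (T : Tiling v u) (c : ι) : Oc (u c) ⊆ polyInterior v := by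
  intro x hx
  have hp := Real.pi_pos
  by_contra hn
  have hcl : x ∈ closure {x | x ∉ polyBoundary v ∧ wn v x = 0} := by
    rw [T.hJ.int] at hn
    by_cases hb : x ∈ polyBoundary v
    · exact T.hJ.clO hb
    · exact subset_closure ⟨hb, by tauto⟩
  obtain ⟨z, z1, z2⟩ := mem_closure_iff.1 hcl _ (Oc_open _) hx
  obtain ⟨y, ⟨y1, y2⟩, y3⟩ := T.dense.inter_open_nonempty _ ((Oc_open (u c)).inter (wn_open v 0))
    ⟨z, z1, z2⟩
  have hs := T.sum y y3
  have h3 : Wd (u c) y ≤ ∑ c, Wd (u c) y :=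
    Finset.single_le_sum (fun i _ => T.nn y3 i) (Finset.mem_univ _)
  rw [Wd_wn (T.bd y3), y2.2] at hs
  rw [Wd_in T.hk y1] at h3
  push_cast at hs
  linarith

lemma Tiling.cover (T : Tiling v u) : polyInterior v ⊆ closure (⋃ c, Oc (u c)) := by
  intro x hx
  have hp := Real.pi_pos
  rw [T.hJ.int] at hx
  have hx1 : wn v x = 1 := (T.hJ.val x hx.1).resolve_left hx.2
  rw [mem_closure_iff]
  intro U hU hxU
  obtain ⟨y, ⟨y1, y2⟩, y3⟩ := T.dense.inter_open_nonempty _ (hU.inter (wn_open v 1))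
    ⟨x, hxU, hx.1, hx1⟩
  refine ⟨y, y1, ?_⟩
  by_contra hn
  have hs := T.sum y y3
  have : ∑ c, Wd (u c) y = 0 := Finset.sum_eq_zero fun c _ => by
    rcases T.val y3 c with h | h
    · exact absurd (Set.mem_iUnion.2 ⟨c, h.1⟩) hn
    · exact h.2
  rw [Wd_wn (T.bd y3), y2.2, this] at hs
  push_cast at hs
  linarith

lemma region_closed {σ : ℤ} (hJ : Jor v σ) : closure (polyInterior v) ⊆ polyRegion v := by
  intro x hx
  by_contra hn
  simp only [polyRegion, Set.mem_union, not_or] at hn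
  have h0 : wn v x = 0 := by
    by_contra h
    exact hn.2 ((hJ.int x).2 ⟨hn.1, h⟩)
  obtain ⟨y, y1, y2⟩ := mem_closure_iff.1 hx _ (wn_open v 0) ⟨hn.1, h0⟩
  exact ((hJ.int y).1 y2).2 y1.2

end tiles

section quads
open Filter Topology

/-- the quadruple of a cell -/
def tup (u : Fin 4 → Pt) : Pt × Pt × Pt × Pt := (u 0, u 1, u 2, u 3)

def SCQ (u : Fin 4 → Pt) : Prop := StrictConvexQuad (u 0) (u 1) (u 2) (u 3)

lemma SCQ.dts {u : Fin 4 → Pt} (h : SCQ u) : 0 < dt (u 0) (u 1) (u 2) ∧ 0 < dt (u 1) (u 2) (u 3) ∧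
    0 < dt (u 2) (u 3) (u 0) ∧ 0 < dt (u 3) (u 0) (u 1) := by
  obtain ⟨h1, h2, h3, h4⟩ := h
  simp only [det2, dt, Prod.fst_sub, Prod.snd_sub] at *
  refine ⟨?_, ?_, ?_, ?_⟩ <;> nlinarith

lemma SCQ.cv {u : Fin 4 → Pt} (h : SCQ u) : ∀ i j, 0 ≤ dt (u i) (u (i + 1)) (u j) := by
  obtain ⟨h1, h2, h3, h4⟩ := h.dts
  have e1 := dt_cyc (u 0) (u 1) (u 2)
  have e2 := dt_cyc (u 1) (u 2) (u 3)
  have e3 := dt_cyc (u 2) (u 3) (u 0)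
  have e4 := dt_cyc (u 3) (u 0) (u 1)
  intro i
  fin_cases i <;> (rw [Fin.forall_fin_succ, Fin.forall_fin_succ, Fin.forall_fin_succ, Fin.forall_fin_one])
  · exact ⟨(dt_left _ _).ge, (dt_right _ _).ge, h1.le, e4.symm ▸ h4.le⟩
  · exact ⟨e1.symm ▸ h1.le, (dt_left _ _).ge, (dt_right _ _).ge, h2.le⟩
  · exact ⟨h3.le, e2.symm ▸ h2.le, (dt_left _ _).ge, (dt_right _ _).ge⟩
  · exact ⟨(dt_right _ _).ge, h4.le, e3.symm ▸ h3.le, (dt_left _ _).ge⟩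

lemma SCQ.ne {u : Fin 4 → Pt} (h : SCQ u) : ∀ i, u i ≠ u (i + 1) := by
  obtain ⟨h1, h2, h3, h4⟩ := h.dts
  have z : ∀ a x : Pt, dt a a x = 0 := by intro a x; simp [dt, det2]
  intro i
  fin_cases i <;> intro he
  · have he' : u 0 = u 1 := he
    rw [he', z] at h1; exact h1.ne rfl
  · have he' : u 1 = u 2 := he
    rw [he', z] at h2; exact h2.ne rfl
  · have he' : u 2 = u 3 := he
    rw [he', z] at h3; exact h3.ne rfl
  · have he' : u 3 = u 0 := he
    rw [he', z] at h4; exact h4.ne rfl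

lemma dt_convex (a b : Pt) : Convex ℝ {x | 0 ≤ dt a b x} := by
  intro x hx y hy s t hs ht hst
  simp only [Set.mem_ofPred_eq] at *
  rw [dt_comb _ _ _ _ _ _ hst]
  positivity

lemma quad_sub {u : Fin 4 → Pt} (h : SCQ u) {x : Pt} (hx : x ∈ quadSet (tup u)) (i : Fin 4) :
    0 ≤ dt (u i) (u (i + 1)) x := by
  have : quadSet (tup u) ⊆ {x | 0 ≤ dt (u i) (u (i + 1)) x} := by
    refine convexHull_min ?_ (dt_convex _ _)
    rintro y (rfl | rfl | rfl | rfl) <;> exact h.cv i _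
  exact this hx

lemma tri_bary {a b c x : Pt} (h : 0 < dt a b c) (h1 : 0 ≤ dt a b x) (h2 : 0 ≤ dt b c x)
    (h3 : 0 ≤ dt c a x) : x ∈ convexHull ℝ {a, b, c} := by
  rw [convexHull_insert (by simp), ]
  have hs : dt a b x + dt b c x + dt c a x = dt a b c := by simp [dt, det2]; ring
  have key : x = (dt b c x / dt a b c) • a + (dt c a x / dt a b c) • b + (dt a b x / dt a b c) • c := by
    ext <;> simp only [Prod.fst_add, Prod.snd_add, Prod.smul_fst, Prod.smul_snd, smul_eq_mul] <;>
      field_simp <;> simp [dt, det2] <;> ring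
  rw [← convexHull_insert (by simp), key]
  have ha : a ∈ convexHull ℝ ({a, b, c} : Set Pt) := subset_convexHull ℝ _ (by simp)
  have hb : b ∈ convexHull ℝ ({a, b, c} : Set Pt) := subset_convexHull ℝ _ (by simp)
  have hc : c ∈ convexHull ℝ ({a, b, c} : Set Pt) := subset_convexHull ℝ _ (by simp)
  have hcv := convex_convexHull ℝ ({a, b, c} : Set Pt)
  have := hcv.sum_mem (t := Finset.univ) (w := ![dt b c x / dt a b c, dt c a x / dt a b c, dt a b x / dt a b c])
    (z := ![a, b, c]) (by
      intro i _; fin_cases i <;> simp <;> positivity) (by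
      simp [Fin.sum_univ_three]; field_simp; linarith) (by
      intro i _; fin_cases i <;> simpa)
  simpa [Fin.sum_univ_three] using this

lemma quad_sup {u : Fin 4 → Pt} (h : SCQ u) : Oc u ⊆ quadSet (tup u) := by
  intro x hx
  obtain ⟨h1, h2, h3, h4⟩ := h.dts
  have x0 : 0 < dt (u 0) (u 1) x := hx 0
  have x1 : 0 < dt (u 1) (u 2) x := hx 1
  have x2 : 0 < dt (u 2) (u 3) x := hx 2
  have x3 : 0 < dt (u 3) (u 0) x := hx 3
  have m1 : ({u 0, u 1, u 2} : Set Pt) ⊆ {u 0, u 1, u 2, u 3} := by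
    rintro y (rfl | rfl | rfl) <;> simp
  have m2 : ({u 0, u 2, u 3} : Set Pt) ⊆ {u 0, u 1, u 2, u 3} := by
    rintro y (rfl | rfl | rfl) <;> simp
  rcases le_total 0 (dt (u 0) (u 2) x) with h | h
  · exact convexHull_mono m2 (tri_bary (by rw [← dt_cyc]; exact h3) h x2.le x3.le)
  · exact convexHull_mono m1 (tri_bary h1 x0.le x1.le (by rw [dt_swap]; linarith))

lemma quad_closed (u : Fin 4 → Pt) : IsClosed (quadSet (tup u)) := by
  have : Set.Finite ({(tup u).1, (tup u).2.1, (tup u).2.2.1, (tup u).2.2.2} : Set Pt) := by simp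
  exact (this.isCompact_convexHull (𝕜 := ℝ)).isClosed

lemma quad_cl {u : Fin 4 → Pt} (h : SCQ u) : quadSet (tup u) ⊆ closure (Oc u) := by
  intro x hx
  obtain ⟨h1, h2, h3, h4⟩ := h.dts
  set g : Pt := (1 / 4 : ℝ) • (u 0 + u 1 + u 2 + u 3) with hg
  have hgO : ∀ i, 0 < dt (u i) (u (i + 1)) g := by
    intro i
    have e : dt (u i) (u (i + 1)) g = (dt (u i) (u (i + 1)) (u 0) + dt (u i) (u (i + 1)) (u 1) +
      dt (u i) (u (i + 1)) (u 2) + dt (u i) (u (i + 1)) (u 3)) / 4 := by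
      simp [hg, dt, det2]; ring
    rw [e]
    have c0 := h.cv i 0
    have c1 := h.cv i 1
    have c2 := h.cv i 2
    have c3 := h.cv i 3
    have : 0 < dt (u i) (u (i + 1)) (u (i + 2)) := by
      fin_cases i
      exacts [h1, h2, h3, h4]
    have : 0 < dt (u i) (u (i + 1)) (u 0) ∨ 0 < dt (u i) (u (i + 1)) (u 1) ∨
      0 < dt (u i) (u (i + 1)) (u 2) ∨ 0 < dt (u i) (u (i + 1)) (u 3) := by
      fin_cases i
      exacts [Or.inr (Or.inr (Or.inl h1)), Or.inr (Or.inr (Or.inr h2)), Or.inl h3, Or.inr (Or.inl h4)]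
    rcases this with h | h | h | h <;> linarith
  have ht := tendsto_add_smul x (g - x)
  refine mem_closure_of_tendsto (b := 𝓝[>] (0 : ℝ)) (ht.mono_left ?_) ?_
  · exact le_rfl
  · filter_upwards [Ioo_mem_nhdsGT (show (0 : ℝ) < 1 by norm_num)] with t htt i
    have : x + t • (g - x) = (1 - t) • x + t • g := by
      rw [smul_sub, sub_smul, one_smul]; abel
    rw [this, dt_comb _ _ _ _ _ _ (by ring)]
    have := quad_sub h hx i
    have := hgO i
    have h1 : 0 < 1 - t := by linarith [htt.2]
    have h2 := htt.1
    nlinarith [mul_nonneg h1.le (quad_sub h hx i), mul_pos h2 (hgO i)]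

lemma final_pack {ι : Type} [Fintype ι] {v : Fin 6 → Pt} {u : ι → Fin 4 → Pt}
    (hJ : Jor v 1) (hu : ∀ c, SCQ (u c))
    (hsum : ∀ x ∈ Gs u, ∑ c, Wd (u c) x = Wd v x)
    (hed : ∀ i, ∃ c j, u c j = v i ∧ u c (j + 1) = v (i + 1))
    (S : Finset Pt) (hS : S.card ≤ 3) (hSi : ∀ p ∈ S, p ∈ polyInterior v)
    (hv1 : ∀ c i, u c i ∈ Set.range v ∪ (S : Set Pt)) (hv2 : ∀ p ∈ S, ∃ c i, u c i = p) :
    ∃ (quads : Finset (Pt × Pt × Pt × Pt)) (Spts : Finset Pt),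
      Spts.card ≤ 3 ∧
      (∀ p ∈ Spts, p ∈ polyInterior v) ∧
      (∀ q ∈ quads, StrictConvexQuad q.1 q.2.1 q.2.2.1 q.2.2.2) ∧
      (⋃ q ∈ quads, quadSet q) = polyRegion v ∧
      (quadSet '' quads).Pairwise (fun A B => interior A ∩ interior B = ∅) ∧
      ((quads.biUnion quadVerts : Finset Pt) : Set Pt) = Set.range v ∪ (Spts : Set Pt) := by
  classical
  have T : Tiling v u := ⟨le_rfl, hJ, fun c => (hu c).ne, fun c => (hu c).cv, hsum, hed⟩
  refine ⟨Finset.univ.image (fun c => tup (u c)), S, hS, hSi, ?_, ?_, ?_, ?_⟩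
  · intro q hq
    obtain ⟨c, -, rfl⟩ := Finset.mem_image.1 hq
    exact hu c
  · have e : (⋃ q ∈ Finset.univ.image (fun c => tup (u c)), quadSet q) = ⋃ c, quadSet (tup (u c)) := by
      ext x; simp
    rw [e]
    have h1 : closure (polyInterior v) ⊆ ⋃ c, quadSet (tup (u c)) := by
      refine closure_minimal (T.cover.trans (closure_minimal ?_ ?_)) ?_
      · exact Set.iUnion_mono fun c => quad_sup (hu c)
      · exact isClosed_iUnion_of_finite fun c => quad_closed _
      · exact isClosed_iUnion_of_finite fun c => quad_closed _
    apply Set.Subset.antisymm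
    · exact Set.iUnion_subset fun c => (quad_cl (hu c)).trans
        ((closure_mono (T.sub c)).trans (region_closed hJ))
    · rintro x (hx | hx)
      · exact h1 (hJ.clI hx)
      · exact h1 (subset_closure hx)
  · rintro A ⟨a, ha, rfl⟩ B ⟨b, hb, rfl⟩ hAB
    obtain ⟨c, -, rfl⟩ := Finset.mem_image.1 (Finset.mem_coe.1 ha)
    obtain ⟨d, -, rfl⟩ := Finset.mem_image.1 (Finset.mem_coe.1 hb)
    rw [← Set.not_nonempty_iff_eq_empty]
    intro hne
    have hcd : c ≠ d := by rintro rfl; exact hAB rfl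
    obtain ⟨y, ⟨y1, y2⟩, y3⟩ := T.dense.inter_open_nonempty _ (isOpen_interior.inter isOpen_interior) hne
    refine T.disjG hcd y3 (fun i => ?_) (fun i => ?_)
    · exact lt_of_le_of_ne (quad_sub (hu c) (interior_subset y1) i) (Ne.symm (y3 c i))
    · exact lt_of_le_of_ne (quad_sub (hu d) (interior_subset y2) i) (Ne.symm (y3 d i))
  · ext x
    simp only [Finset.coe_biUnion, Set.mem_iUnion, Finset.mem_coe]
    constructor
    · rintro ⟨q, hq, hx⟩
      obtain ⟨c, -, rfl⟩ := Finset.mem_image.1 hq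
      simp only [quadVerts, tup, Finset.mem_insert, Finset.mem_singleton] at hx
      rcases hx with h | h | h | h <;> rw [h] <;> exact hv1 c _
    · intro hx
      have : ∃ c i, u c i = x := by
        rcases hx with ⟨i, rfl⟩ | hx
        · obtain ⟨c, j, h, -⟩ := hed i
          exact ⟨c, j, h⟩
        · exact hv2 x hx
      obtain ⟨c, i, rfl⟩ := this
      refine ⟨tup (u c), Finset.mem_image_of_mem _ (Finset.mem_univ _), ?_⟩
      simp only [quadVerts, tup, Finset.mem_insert, Finset.mem_singleton]
      fin_cases i <;> simp

end quads
end part8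

section part9
section germs
open Filter Topology

/-- open triangle by orientation -/
def inT (a b c x : Pt) : Prop := 0 < dt a b x ∧ 0 < dt b c x ∧ 0 < dt c a x

lemma inT.c {a b c x : Pt} (h : inT a b c x) : inT b c a x := ⟨h.2.1, h.2.2, h.1⟩

lemma inT_Oc {a b c x : Pt} (h : inT a b c x) : x ∈ Oc ![a, b, c] := by
  intro i
  fin_cases i
  exacts [h.1, h.2.1, h.2.2]

lemma dt_eps (o a w : Pt) (t : ℝ) : dt o a (o + t • w) = t * det2 (a - o) w := by
  simp [dt, det2]; ring

lemma det2_swap (a b : Pt) : det2 b a = - det2 a b := by simp [det2]; ring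

/-- continuity of orientation -/
lemma ev_dt {f g h : ℝ → Pt} {a b c : Pt} (hf : Tendsto f (𝓝[>] 0) (𝓝 a))
    (hg : Tendsto g (𝓝[>] 0) (𝓝 b)) (hh : Tendsto h (𝓝[>] 0) (𝓝 c)) (hp : 0 < dt a b c) :
    ∀ᶠ t in 𝓝[>] (0 : ℝ), 0 < dt (f t) (g t) (h t) := by
  have hc : Continuous (fun p : Pt × Pt × Pt => dt p.1 p.2.1 p.2.2) := by
    unfold dt det2; fun_prop
  have := (hc.tendsto (a, b, c)).comp (hf.prodMk_nhds (hg.prodMk_nhds hh))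
  exact this.eventually (lt_mem_nhds hp)

lemma ev_det {f g : ℝ → Pt} {a b : Pt} (hf : Tendsto f (𝓝[>] 0) (𝓝 a))
    (hg : Tendsto g (𝓝[>] 0) (𝓝 b)) (hp : 0 < det2 a b) :
    ∀ᶠ t in 𝓝[>] (0 : ℝ), 0 < det2 (f t) (g t) := by
  have hc : Continuous (fun p : Pt × Pt => det2 p.1 p.2) := by
    unfold det2; fun_prop
  have := (hc.tendsto (a, b)).comp (hf.prodMk_nhds hg)
  exact this.eventually (lt_mem_nhds hp)

lemma ev_pos : ∀ᶠ t in 𝓝[>] (0 : ℝ), 0 < t := self_mem_nhdsWithin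

lemma ev_lin {g : ℝ → ℝ} {a : ℝ} (hg : Continuous g) (h0 : g 0 = a) (ha : 0 < a) :
    ∀ᶠ t in 𝓝[>] (0 : ℝ), 0 < g t := by
  have := (hg.tendsto 0).mono_left (nhdsWithin_le_nhds (s := Set.Ioi 0))
  rw [h0] at this
  exact this.eventually (lt_mem_nhds ha)

lemma tri_germ {o a b w : Pt} (h : 0 < dt o a b) (h1 : 0 < det2 (a - o) w)
    (h2 : 0 < det2 w (b - o)) : ∀ᶠ t in 𝓝[>] (0 : ℝ), inT o a b (o + t • w) := by
  have e : 0 < dt a b o := by rw [dt_cyc]; exact h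
  filter_upwards [ev_pos, ev_dt (tendsto_const_nhds (x := a)) (tendsto_const_nhds (x := b))
    (tendsto_add_smul o w) e] with t ht h3
  refine ⟨?_, h3, ?_⟩
  · rw [dt_eps]; positivity
  · rw [dt_swap, dt_eps, det2_swap]
    have := mul_pos ht h2
    linarith

lemma small_exists {x : ℝ} (y : ℝ) (hx : 0 < x) : ∃ δ : ℝ, 0 < δ ∧ 0 < x + δ * y := by
  refine ⟨x / (|y| + 1), by positivity, ?_⟩
  have h : x + x / (|y| + 1) * y = x * (|y| + 1 + y) / (|y| + 1) := by field_simp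
  rw [h]
  have := neg_abs_le y
  have : 0 < |y| + 1 + y := by linarith
  positivity

/-- the cone lemma -/
lemma cone {a b c e : Pt} (hab : 0 < det2 a b) (hbc : 0 < det2 b c) (hce : 0 < det2 c e)
    (hn : ¬ (det2 a c < 0 ∧ det2 b e < 0 ∧ 0 ≤ det2 a e)) :
    ∃ d : Pt, 0 < det2 a d ∧ 0 < det2 b d ∧ 0 < det2 d c ∧ 0 < det2 d e := by
  suffices h : ∃ s t : ℝ, 0 < s ∧ 0 < t ∧ 0 < s * det2 a b + t * det2 a c ∧
      0 < s * det2 b e + t * det2 c e by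
    obtain ⟨s, t, hs, ht, h1, h2⟩ := h
    refine ⟨s • b + t • c, ?_, ?_, ?_, ?_⟩
    · refine lt_of_lt_of_eq (h1) ?_; simp [det2]; ring
    · refine lt_of_lt_of_eq (mul_pos ht hbc) ?_; simp [det2]; ring
    · refine lt_of_lt_of_eq (mul_pos hs hbc) ?_; simp [det2]; ring
    · refine lt_of_lt_of_eq (h2) ?_; simp [det2]; ring
  have pl : det2 a b * det2 c e - det2 a c * det2 b e + det2 a e * det2 b c = 0 := by
    simp [det2]; ring
  generalize det2 a b = ab at *
  generalize det2 b c = bc at *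
  generalize det2 c e = ce at *
  generalize det2 a c = ac at *
  generalize det2 b e = be at *
  generalize det2 a e = ae at *
  by_cases h1 : 0 ≤ ac
  · obtain ⟨δ, hδ, h⟩ := small_exists be hce
    exact ⟨δ, 1, hδ, one_pos, by positivity, by linarith⟩
  by_cases h2 : 0 ≤ be
  · obtain ⟨δ, hδ, h⟩ := small_exists ac hab
    exact ⟨1, δ, one_pos, hδ, by linarith, by positivity⟩
  push Not at h1 h2
  have h3 : ae < 0 := by
    by_contra h
    exact hn ⟨h1, h2, not_lt.1 h⟩
  have h4 : 0 < ab * ce - ac * be := by nlinarith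
  -- ratios
  refine ⟨-ac + ce, ab - be, by linarith, by linarith, by nlinarith, by nlinarith⟩

/-- directions for the fan -/
lemma fan_dirs {a b c e f : Pt} (hab : 0 < det2 a b) (hbc : 0 < det2 b c) (hce : 0 < det2 c e)
    (hef : 0 < det2 e f) (hn : ¬ (det2 a c < 0 ∧ det2 c f < 0)) :
    ∃ d d' : Pt, (0 < det2 b d' ∧ 0 < det2 d' c ∧ 0 < det2 a d') ∧
      (0 < det2 c d ∧ 0 < det2 d e ∧ 0 < det2 d f) ∧ 0 < det2 d' d := by
  by_cases h1 : 0 ≤ det2 a c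
  · obtain ⟨δ', hδ', k'⟩ := small_exists (det2 c f) hef
    obtain ⟨δ, hδ, k⟩ := small_exists (det2 b e + δ' * det2 b c) hce
    refine ⟨e + δ' • c, c + δ • b, ⟨?_, ?_, ?_⟩, ⟨?_, ?_, ?_⟩, ?_⟩
    · refine lt_of_lt_of_eq (hbc) ?_; simp [det2]; ring
    · refine lt_of_lt_of_eq (mul_pos hδ hbc) ?_; simp [det2]; ring
    · have : 0 < det2 a c + δ * det2 a b := by positivity
      refine lt_of_lt_of_eq (this) ?_; simp [det2]; ring
    · refine lt_of_lt_of_eq (hce) ?_; simp [det2]; ring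
    · refine lt_of_lt_of_eq (mul_pos hδ' hce) ?_; simp [det2]; ring
    · refine lt_of_lt_of_eq (k') ?_; simp [det2]; ring
    · refine lt_of_lt_of_eq (k) ?_; simp [det2]; ring
  · have h2 : 0 ≤ det2 c f := by
      by_contra h
      exact hn ⟨not_le.1 h1, not_le.1 h⟩
    obtain ⟨δ', hδ', k'⟩ := small_exists (det2 a c) hab
    obtain ⟨δ, hδ, k⟩ := small_exists (det2 b e + δ' * det2 c e) hbc
    refine ⟨c + δ • e, b + δ' • c, ⟨?_, ?_, ?_⟩, ⟨?_, ?_, ?_⟩, ?_⟩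
    · refine lt_of_lt_of_eq (mul_pos hδ' hbc) ?_; simp [det2]; ring
    · refine lt_of_lt_of_eq (hbc) ?_; simp [det2]; ring
    · refine lt_of_lt_of_eq (k') ?_; simp [det2]; ring
    · refine lt_of_lt_of_eq (mul_pos hδ hce) ?_; simp [det2]; ring
    · refine lt_of_lt_of_eq (hce) ?_; simp [det2]; ring
    · have : 0 < det2 c f + δ * det2 e f := by positivity
      refine lt_of_lt_of_eq (this) ?_; simp [det2]; ring
    · refine lt_of_lt_of_eq (k) ?_; simp [det2]; ring

/-- vertex lemma: a direction at a polygon vertex -/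
lemma vertex_dir {o A B C E : Pt} (h1 : 0 < dt o A B) (h2 : 0 < dt o B C) (h3 : 0 < dt o C E)
    (hdis : ∀ x, inT o A B x → inT o C E x → False)
    (hA : A ∉ segment ℝ E o) (hE : E ∉ segment ℝ o A) :
    ∃ d : Pt, 0 < det2 (A - o) d ∧ 0 < det2 (B - o) d ∧ 0 < det2 d (C - o) ∧ 0 < det2 d (E - o) := by
  apply cone h1 h2 h3
  rintro ⟨k1, k2, k3⟩
  rcases k3.lt_or_eq with k3 | k3
  · obtain ⟨τ1, hτ1, m1⟩ := small_exists (- det2 (B - o) (C - o)) (neg_pos.2 k1)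
    obtain ⟨τ2, hτ2, m2⟩ := small_exists (det2 (B - o) (E - o)) k3
    have hbc : 0 < det2 (B - o) (C - o) := h2
    set τ := min τ1 τ2 with hτ
    have hτ0 : 0 < τ := lt_min hτ1 hτ2
    have n1 : 0 < - det2 (A - o) (C - o) - τ * det2 (B - o) (C - o) := by
      nlinarith [min_le_left τ1 τ2]
    have n2 : 0 < det2 (A - o) (E - o) + τ * det2 (B - o) (E - o) := by
      nlinarith [min_le_right τ1 τ2]
    have hab : 0 < det2 (A - o) (B - o) := h1
    have g1 := tri_germ (w := (A - o) + τ • (B - o)) h1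
      (by refine lt_of_lt_of_eq (mul_pos hτ0 hab) ?_; simp [det2]; ring)
      (by refine lt_of_lt_of_eq (hab) ?_; simp [det2]; ring)
    have g2 := tri_germ (w := (A - o) + τ • (B - o)) h3
      (by refine lt_of_lt_of_eq (n1) ?_; simp [det2]; ring)
      (by refine lt_of_lt_of_eq (n2) ?_; simp [det2]; ring)
    obtain ⟨t, t1, t2⟩ := (g1.and g2).exists
    exact hdis _ t1 t2
  · -- parallel edges in the same direction
    have hce : 0 < det2 (C - o) (E - o) := h3
    have hca : 0 < det2 (C - o) (A - o) := by rw [det2_swap]; linarith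
    have e1 : det2 (C - o) (A - o) • (E - o) = det2 (C - o) (E - o) • (A - o) := by
      simp only [det2, Prod.fst_sub, Prod.snd_sub] at k3 ⊢
      ext
      · simp; linear_combination (C.1 - o.1) * k3
      · simp; linear_combination (C.2 - o.2) * k3
    rcases le_total (det2 (C - o) (E - o)) (det2 (C - o) (A - o)) with h | h
    · apply hE
      rw [segment_eq_image']
      refine ⟨det2 (C - o) (E - o) / det2 (C - o) (A - o), ⟨by positivity, (div_le_one hca).2 h⟩, ?_⟩
      have : E - o = (det2 (C - o) (E - o) / det2 (C - o) (A - o)) • (A - o) := by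
        rw [div_eq_inv_mul, mul_smul, ← e1, smul_smul, inv_mul_cancel₀ hca.ne', one_smul]
      simp only
      rw [← this]; abel
    · apply hA
      rw [segment_symm, segment_eq_image']
      refine ⟨det2 (C - o) (A - o) / det2 (C - o) (E - o), ⟨by positivity, (div_le_one hce).2 h⟩, ?_⟩
      have : A - o = (det2 (C - o) (A - o) / det2 (C - o) (E - o)) • (E - o) := by
        rw [div_eq_inv_mul, mul_smul, e1, smul_smul, inv_mul_cancel₀ hce.ne', one_smul]
      simp only
      rw [← this]; abel

end germs
end part9

section part10
section packs
open Filter Topology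

/-- the conclusion of the theorem -/
def Concl (v : Fin 6 → Pt) : Prop :=
    ∃ (quads : Finset (Pt × Pt × Pt × Pt)) (Spts : Finset Pt),
      Spts.card ≤ 3 ∧
      (∀ p ∈ Spts, p ∈ polyInterior v) ∧
      (∀ q ∈ quads, StrictConvexQuad q.1 q.2.1 q.2.2.1 q.2.2.2) ∧
      (⋃ q ∈ quads, quadSet q) = polyRegion v ∧
      (quadSet '' quads).Pairwise (fun A B => interior A ∩ interior B = ∅) ∧
      ((quads.biUnion quadVerts : Finset Pt) : Set Pt) = Set.range v ∪ (Spts : Set Pt)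

lemma Concl_rot {v : Fin 6 → Pt} {i : Fin 6} (h : Concl (rotP v i)) : Concl v := by
  unfold Concl at *
  rw [rotP_int, rotP_region, rotP_range] at h
  exact h

/-- cells in terms of `dt` -/
def Q4 (a b c d : Pt) : Prop := 0 < dt a b c ∧ 0 < dt b c d ∧ 0 < dt c d a ∧ 0 < dt d a b

lemma Q4.scq {a b c d : Pt} (h : Q4 a b c d) : SCQ ![a, b, c, d] := by
  obtain ⟨h1, h2, h3, h4⟩ := h
  show StrictConvexQuad a b c d
  simp only [StrictConvexQuad, det2, dt, Prod.fst_sub, Prod.snd_sub] at *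
  refine ⟨?_, ?_, ?_, ?_⟩ <;> nlinarith

lemma anti {a b x : Pt} (h : dt a b x ≠ 0) : th b a x = - th a b x :=
  th_anti fun hs => h (dt_seg hs)

lemma pack4 {w : Fin 6 → Pt} (hJ : Jor w 1) {p r : Pt} (hp : p ∈ polyInterior w)
    (hr : r ∈ polyInterior w) (h0 : Q4 (w 0) (w 1) (w 2) p) (h1 : Q4 p (w 2) (w 3) r)
    (h2 : Q4 r (w 3) (w 4) (w 5)) (h3 : Q4 r (w 5) (w 0) p) : Concl w := by
  classical
  refine final_pack (ι := Fin 4) (u := ![![w 0, w 1, w 2, p], ![p, w 2, w 3, r],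
    ![r, w 3, w 4, w 5], ![r, w 5, w 0, p]]) hJ ?_ ?_ ?_ {p, r} ?_ ?_ ?_ ?_
  · intro c
    fin_cases c
    exacts [h0.scq, h1.scq, h2.scq, h3.scq]
  · intro x hx
    have a1 : dt (w 2) p x ≠ 0 := hx 0 2
    have a2 : dt p (w 0) x ≠ 0 := hx 0 3
    have a3 : dt (w 3) r x ≠ 0 := hx 1 2
    have a4 : dt r p x ≠ 0 := hx 1 3
    have a5 : dt (w 5) r x ≠ 0 := hx 2 3
    have b1 := anti a1
    have b2 := anti a2
    have b3 := anti a3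
    have b4 := anti a4
    have b5 := anti a5
    rw [Fin.sum_univ_four, Wd6, Wd4, Wd4, Wd4, Wd4]
    simp
    linarith
  · intro i
    fin_cases i
    · exact ⟨0, 0, rfl, rfl⟩
    · exact ⟨0, 1, rfl, rfl⟩
    · exact ⟨1, 1, rfl, rfl⟩
    · exact ⟨2, 1, rfl, rfl⟩
    · exact ⟨2, 2, rfl, rfl⟩
    · exact ⟨3, 1, rfl, rfl⟩
  · exact Finset.card_le_two.trans (by norm_num)
  · intro y hy
    simp only [Finset.mem_insert, Finset.mem_singleton] at hy
    rcases hy with rfl | rfl <;> assumption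
  · intro c i
    fin_cases c <;> fin_cases i <;> simp
  · intro y hy
    simp only [Finset.mem_insert, Finset.mem_singleton] at hy
    rcases hy with rfl | rfl
    · exact ⟨0, 3, rfl⟩
    · exact ⟨2, 0, rfl⟩

lemma pack5 {w : Fin 6 → Pt} (hJ : Jor w 1) {p q r : Pt} (hp : p ∈ polyInterior w)
    (hq : q ∈ polyInterior w) (hr : r ∈ polyInterior w)
    (h0 : Q4 (w 1) (w 2) (w 3) p) (h1 : Q4 (w 3) (w 4) (w 5) r) (h2 : Q4 (w 3) r q p)
    (h3 : Q4 r (w 5) (w 0) q) (h4 : Q4 q (w 0) (w 1) p) : Concl w := by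
  classical
  refine final_pack (ι := Fin 5) (u := ![![w 1, w 2, w 3, p], ![w 3, w 4, w 5, r],
    ![w 3, r, q, p], ![r, w 5, w 0, q], ![q, w 0, w 1, p]]) hJ ?_ ?_ ?_ {p, q, r} ?_ ?_ ?_ ?_
  · intro c
    fin_cases c
    exacts [h0.scq, h1.scq, h2.scq, h3.scq, h4.scq]
  · intro x hx
    have a1 : dt (w 3) p x ≠ 0 := hx 0 2
    have a2 : dt p (w 1) x ≠ 0 := hx 0 3
    have a3 : dt (w 5) r x ≠ 0 := hx 1 2
    have a4 : dt r (w 3) x ≠ 0 := hx 1 3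
    have a5 : dt r q x ≠ 0 := hx 2 1
    have a6 : dt q p x ≠ 0 := hx 2 2
    have a7 : dt (w 0) q x ≠ 0 := hx 3 2
    have b1 := anti a1
    have b2 := anti a2
    have b3 := anti a3
    have b4 := anti a4
    have b5 := anti a5
    have b6 := anti a6
    have b7 := anti a7
    rw [Fin.sum_univ_five, Wd6, Wd4, Wd4, Wd4, Wd4, Wd4]
    simp
    linarith
  · intro i
    fin_cases i
    · exact ⟨4, 1, rfl, rfl⟩
    · exact ⟨0, 0, rfl, rfl⟩
    · exact ⟨0, 1, rfl, rfl⟩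
    · exact ⟨1, 0, rfl, rfl⟩
    · exact ⟨1, 1, rfl, rfl⟩
    · exact ⟨3, 1, rfl, rfl⟩
  · exact Finset.card_le_three
  · intro y hy
    simp only [Finset.mem_insert, Finset.mem_singleton] at hy
    rcases hy with rfl | rfl | rfl <;> assumption
  · intro c i
    fin_cases c <;> fin_cases i <;> simp
  · intro y hy
    simp only [Finset.mem_insert, Finset.mem_singleton] at hy
    rcases hy with rfl | rfl | rfl
    · exact ⟨0, 3, rfl⟩
    · exact ⟨4, 0, rfl⟩
    · exact ⟨3, 0, rfl⟩

/-- triangles as cells -/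
lemma tri_cells {w : Fin 6 → Pt} (hJ : Jor w 1) (g : Fin 4 → Fin 3 → Fin 6)
    (hpos : ∀ c, 0 < dt (w (g c 0)) (w (g c 1)) (w (g c 2)))
    (hed : ∀ i, ∃ c j, g c j = i ∧ g c (j + 1) = i + 1)
    (hsum : ∀ x ∈ Gs (fun c j => w (g c j)), ∑ c, Wd (fun j => w (g c j)) x = Wd w x) :
    Tiling w (fun c j => w (g c j)) := by
  have z : ∀ a x : Pt, dt a a x = 0 := by intro a x; simp [dt, det2]
  have cy : ∀ a b c : Pt, dt c a b = dt a b c := by intro a b c; rw [← dt_cyc]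
  refine ⟨by norm_num, hJ, fun c => ?_, fun c => ?_, hsum, fun i => ?_⟩
  · have h := hpos c
    generalize w ∘ g c = t
    intro i
    fin_cases i <;> intro he
    · have he' : w (g c 0) = w (g c 1) := he
      rw [he', z] at h; exact h.ne rfl
    · have he' : w (g c 1) = w (g c 2) := he
      rw [he', dt_right] at h; exact h.ne rfl
    · have he' : w (g c 2) = w (g c 0) := he
      rw [he', dt_left] at h; exact h.ne rfl
  · have h := (hpos c).le
    intro i
    fin_cases i <;> (rw [Fin.forall_fin_succ, Fin.forall_fin_succ, Fin.forall_fin_one])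
    · exact ⟨(dt_left _ _).ge, (dt_right _ _).ge, h⟩
    · exact ⟨(dt_cyc (w (g c 0)) (w (g c 1)) (w (g c 2))).symm ▸ h, (dt_left _ _).ge, (dt_right _ _).ge⟩
    · exact ⟨(dt_right _ _).ge, (cy (w (g c 0)) (w (g c 1)) (w (g c 2))).symm ▸ h, (dt_left _ _).ge⟩
  · obtain ⟨c, j, h1, h2⟩ := hed i
    exact ⟨c, j, by rw [h1], by rw [h2]⟩

lemma mem_cell {w : Fin 6 → Pt} {g : Fin 4 → Fin 3 → Fin 6} {x : Pt} (c : Fin 4)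
    (h : inT (w (g c 0)) (w (g c 1)) (w (g c 2)) x) : x ∈ Oc ((fun c j => w (g c j)) c) := by
  intro i
  fin_cases i
  exacts [h.1, h.2.1, h.2.2]

lemma zig_tiling {w : Fin 6 → Pt} (hJ : Jor w 1) (h0 : 0 < dt (w 0) (w 1) (w 2))
    (h1 : 0 < dt (w 0) (w 2) (w 3)) (h2 : 0 < dt (w 0) (w 3) (w 5)) (h3 : 0 < dt (w 3) (w 4) (w 5)) :
    Tiling w (fun c j => w ((![![0, 1, 2], ![0, 2, 3], ![0, 3, 5], ![3, 4, 5]] :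
      Fin 4 → Fin 3 → Fin 6) c j)) := by
  refine tri_cells hJ _ ?_ (by decide) ?_
  · intro c
    fin_cases c
    exacts [h0, h1, h2, h3]
  · intro x hx
    have b1 := anti (show dt (w 0) (w 2) x ≠ 0 from hx 1 0)
    have b2 := anti (show dt (w 0) (w 3) x ≠ 0 from hx 2 0)
    have b3 := anti (show dt (w 3) (w 5) x ≠ 0 from hx 2 1)
    rw [Fin.sum_univ_four, Wd6, Wd3, Wd3, Wd3, Wd3]
    simp
    linarith

lemma zag_tiling {w : Fin 6 → Pt} (hJ : Jor w 1) (h0 : 0 < dt (w 0) (w 1) (w 2))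
    (h1 : 0 < dt (w 0) (w 2) (w 5)) (h2 : 0 < dt (w 2) (w 3) (w 5)) (h3 : 0 < dt (w 3) (w 4) (w 5)) :
    Tiling w (fun c j => w ((![![0, 1, 2], ![0, 2, 5], ![2, 3, 5], ![3, 4, 5]] :
      Fin 4 → Fin 3 → Fin 6) c j)) := by
  refine tri_cells hJ _ ?_ (by decide) ?_
  · intro c
    fin_cases c
    exacts [h0, h1, h2, h3]
  · intro x hx
    have b1 := anti (show dt (w 0) (w 2) x ≠ 0 from hx 1 0)
    have b2 := anti (show dt (w 2) (w 5) x ≠ 0 from hx 1 1)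
    have b3 := anti (show dt (w 3) (w 5) x ≠ 0 from hx 2 1)
    rw [Fin.sum_univ_four, Wd6, Wd3, Wd3, Wd3, Wd3]
    simp
    linarith

lemma fan_tiling {w : Fin 6 → Pt} (hJ : Jor w 1) (h0 : 0 < dt (w 0) (w 1) (w 3))
    (h1 : 0 < dt (w 1) (w 2) (w 3)) (h2 : 0 < dt (w 0) (w 3) (w 5)) (h3 : 0 < dt (w 3) (w 4) (w 5)) :
    Tiling w (fun c j => w ((![![0, 1, 3], ![1, 2, 3], ![0, 3, 5], ![3, 4, 5]] :
      Fin 4 → Fin 3 → Fin 6) c j)) := by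
  refine tri_cells hJ _ ?_ (by decide) ?_
  · intro c
    fin_cases c
    exacts [h0, h1, h2, h3]
  · intro x hx
    have b1 := anti (show dt (w 1) (w 3) x ≠ 0 from hx 0 1)
    have b2 := anti (show dt (w 0) (w 3) x ≠ 0 from hx 2 0)
    have b3 := anti (show dt (w 3) (w 5) x ≠ 0 from hx 2 1)
    rw [Fin.sum_univ_four, Wd6, Wd3, Wd3, Wd3, Wd3]
    simp
    linarith

lemma star_tiling {w : Fin 6 → Pt} (hJ : Jor w 1) (h0 : 0 < dt (w 1) (w 3) (w 5))
    (h1 : 0 < dt (w 1) (w 2) (w 3)) (h2 : 0 < dt (w 3) (w 4) (w 5)) (h3 : 0 < dt (w 5) (w 0) (w 1)) :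
    Tiling w (fun c j => w ((![![1, 3, 5], ![1, 2, 3], ![3, 4, 5], ![5, 0, 1]] :
      Fin 4 → Fin 3 → Fin 6) c j)) := by
  refine tri_cells hJ _ ?_ (by decide) ?_
  · intro c
    fin_cases c
    exacts [h0, h1, h2, h3]
  · intro x hx
    have b1 := anti (show dt (w 1) (w 3) x ≠ 0 from hx 0 0)
    have b2 := anti (show dt (w 3) (w 5) x ≠ 0 from hx 0 1)
    have b3 := anti (show dt (w 5) (w 1) x ≠ 0 from hx 0 2)
    rw [Fin.sum_univ_four, Wd6, Wd3, Wd3, Wd3, Wd3]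
    simp
    linarith

end packs
end part10

section part11
section constructions
open Filter Topology

lemma dt_cyc' (a b c : Pt) : dt c a b = dt a b c := by rw [← dt_cyc]

lemma l1 {o a d : Pt} {t : ℝ} (ht : 0 < t) (h : 0 < det2 (a - o) d) : 0 < dt o a (o + t • d) := by
  rw [dt_eps]; positivity
lemma l2 {o a d : Pt} {t : ℝ} (ht : 0 < t) (h : 0 < det2 (a - o) d) : 0 < dt a (o + t • d) o := by
  rw [dt_cyc]; exact l1 ht h
lemma l3 {o a d : Pt} {t : ℝ} (ht : 0 < t) (h : 0 < det2 (a - o) d) : 0 < dt (o + t • d) o a := by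
  rw [dt_cyc']; exact l1 ht h
lemma r1 {o a d : Pt} {t : ℝ} (ht : 0 < t) (h : 0 < det2 d (a - o)) : 0 < dt a o (o + t • d) := by
  rw [dt_swap, dt_eps, det2_swap]
  have := mul_pos ht h
  linarith
lemma r2 {o a d : Pt} {t : ℝ} (ht : 0 < t) (h : 0 < det2 d (a - o)) : 0 < dt o (o + t • d) a := by
  rw [dt_cyc]; exact r1 ht h
lemma r3 {o a d : Pt} {t : ℝ} (ht : 0 < t) (h : 0 < det2 d (a - o)) : 0 < dt (o + t • d) a o := by
  rw [dt_cyc']; exact r1 ht h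

lemma cst (a : Pt) : Tendsto (fun _ : ℝ => a) (𝓝[>] 0) (𝓝 a) := tendsto_const_nhds

lemma zig_case {w : Fin 6 → Pt} (hv : IsSimplePolygon w) (hJ : Jor w 1)
    (h012 : 0 < dt (w 0) (w 1) (w 2)) (h023 : 0 < dt (w 0) (w 2) (w 3))
    (h035 : 0 < dt (w 0) (w 3) (w 5)) (h345 : 0 < dt (w 3) (w 4) (w 5)) : Concl w := by
  have T := zig_tiling hJ h012 h023 h035 h345
  obtain ⟨d, d1, d2, d3, d4⟩ := vertex_dir (o := w 0) (A := w 1) (B := w 2) (C := w 3) (E := w 5)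
    h012 h023 h035 (fun x a b => T.disj (show (0 : Fin 4) ≠ 2 by decide) (mem_cell 0 a) (mem_cell 2 b))
    (fun h => absurd (vertex_on_edge hv (k := 5) h) (by decide))
    (fun h => absurd (vertex_on_edge hv (k := 0) h) (by decide))
  obtain ⟨e, e1, e2, e3, e4⟩ := vertex_dir (o := w 3) (A := w 4) (B := w 5) (C := w 0) (E := w 2)
    h345 (by rw [dt_cyc]; exact h035) (by rw [dt_cyc']; exact h023)
    (fun x a b => T.disj (show (3 : Fin 4) ≠ 1 by decide) (mem_cell 3 a) (mem_cell 1 b.c))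
    (fun h => absurd (vertex_on_edge hv (k := 2) h) (by decide))
    (fun h => absurd (vertex_on_edge hv (k := 3) h) (by decide))
  have tp := tendsto_add_smul (w 0) d
  have tr := tendsto_add_smul (w 3) e
  have c1 := tri_germ h023 d2 d3
  have c2 := tri_germ (o := w 3) (a := w 5) (b := w 0) (by rw [dt_cyc]; exact h035) e2 e3
  obtain ⟨t, ht, c1, c2, k1, k2, k3, k4, k5, k6, k7, k8⟩ := (ev_pos.and (c1.and (c2.and
    ((ev_dt (cst (w 1)) (cst (w 2)) tp (by rw [dt_cyc]; exact h012)).and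
    ((ev_dt tp (cst (w 2)) (cst (w 3)) h023).and
    ((ev_det (cst e) (tp.sub (cst (w 3))) e3).and
    ((ev_dt tr tp (cst (w 2)) (by rw [dt_cyc']; exact h023)).and
    ((ev_dt (cst (w 4)) (cst (w 5)) tr (by rw [dt_cyc]; exact h345)).and
    ((ev_dt tr (cst (w 5)) (cst (w 0)) (by rw [dt_cyc]; exact h035)).and
    ((ev_det (cst d) (tr.sub (cst (w 0))) d3).and
    (ev_dt tp tr (cst (w 5)) h035))))))))))).exists
  refine pack4 hJ (p := w 0 + t • d) (r := w 3 + t • e) (T.sub 1 (mem_cell 1 c1))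
    (T.sub 2 (mem_cell 2 c2.c.c)) ⟨h012, k1, l2 ht d2, l3 ht d1⟩
    ⟨k2, r1 ht e4, r2 ht k3, k4⟩ ⟨l3 ht e1, h345, k5, l2 ht e2⟩ ⟨k6, r1 ht d4, r2 ht k7, k8⟩

lemma zag_case {w : Fin 6 → Pt} (hv : IsSimplePolygon w) (hJ : Jor w 1)
    (h012 : 0 < dt (w 0) (w 1) (w 2)) (h025 : 0 < dt (w 0) (w 2) (w 5))
    (h235 : 0 < dt (w 2) (w 3) (w 5)) (h345 : 0 < dt (w 3) (w 4) (w 5)) : Concl w := by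
  have T := zag_tiling hJ h012 h025 h235 h345
  have h250 : 0 < dt (w 2) (w 5) (w 0) := by rw [dt_cyc]; exact h025
  have h523 : 0 < dt (w 5) (w 2) (w 3) := by rw [dt_cyc']; exact h235
  obtain ⟨d, d1, d2, d3, d4⟩ := vertex_dir (o := w 2) (A := w 3) (B := w 5) (C := w 0) (E := w 1)
    h235 h250 (by rw [dt_cyc']; exact h012)
    (fun x a b => T.disj (show (2 : Fin 4) ≠ 0 by decide) (mem_cell 2 a) (mem_cell 0 b.c))
    (fun h => absurd (vertex_on_edge hv (k := 1) h) (by decide))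
    (fun h => absurd (vertex_on_edge hv (k := 2) h) (by decide))
  obtain ⟨e, e1, e2, e3, e4⟩ := vertex_dir (o := w 5) (A := w 0) (B := w 2) (C := w 3) (E := w 4)
    (by rw [dt_cyc']; exact h025) h523 (by rw [dt_cyc']; exact h345)
    (fun x a b => T.disj (show (1 : Fin 4) ≠ 3 by decide) (mem_cell 1 a.c) (mem_cell 3 b.c))
    (fun h => absurd (vertex_on_edge hv (k := 4) h) (by decide))
    (fun h => absurd (vertex_on_edge hv (k := 5) h) (by decide))
  have tp := tendsto_add_smul (w 2) d
  have tr := tendsto_add_smul (w 5) e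
  have c1 := tri_germ h250 d2 d3
  have c2 := tri_germ h523 e2 e3
  obtain ⟨t, ht, c1, c2, k1, k2, k3, k4, k5, k6, k7, k8⟩ := (ev_pos.and (c1.and (c2.and
    ((ev_dt tp (cst (w 0)) (cst (w 1)) (by rw [dt_cyc']; exact h012)).and
    ((ev_dt (cst (w 2)) (cst (w 3)) tr h235).and
    ((ev_dt (cst (w 3)) tr tp (by rw [dt_cyc]; exact h235)).and
    ((ev_det (tr.sub (cst (w 2))) (cst d) d2).and
    ((ev_dt tr (cst (w 3)) (cst (w 4)) (by rw [dt_cyc']; exact h345)).and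
    ((ev_dt (cst (w 5)) (cst (w 0)) tp (by rw [dt_cyc']; exact h025)).and
    ((ev_dt (cst (w 0)) tp tr h025).and
    (ev_det (tp.sub (cst (w 5))) (cst e) e2))))))))))).exists
  refine pack4 hJ (p := w 2 + t • d) (r := w 5 + t • e) (T.sub 1 (mem_cell 1 c1.c.c))
    (T.sub 2 (mem_cell 2 c2.c)) ⟨h012, r1 ht d4, r2 ht d3, k1⟩
    ⟨l3 ht d1, k2, k3, l2 ht k4⟩ ⟨k5, h345, r1 ht e4, r2 ht e3⟩ ⟨l3 ht e1, k6, k7, l2 ht k8⟩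

end constructions
end part11

section part12
section constructions2
open Filter Topology

lemma dt_mid (a b x y : Pt) : dt a b ((1 / 2 : ℝ) • (x + y)) = (dt a b x + dt a b y) / 2 := by
  simp [dt, det2]; ring

lemma ev_mul {g : ℝ → ℝ} (hg : Continuous g) (ha : 0 < g 0) :
    ∀ᶠ t in 𝓝[>] (0 : ℝ), 0 < t * g t := by
  filter_upwards [ev_pos, ev_lin hg rfl ha] with t h1 h2
  positivity

lemma star_case {w : Fin 6 → Pt} (hv : IsSimplePolygon w) (hJ : Jor w 1)
    (h135 : 0 < dt (w 1) (w 3) (w 5)) (h123 : 0 < dt (w 1) (w 2) (w 3))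
    (h345 : 0 < dt (w 3) (w 4) (w 5)) (h501 : 0 < dt (w 5) (w 0) (w 1)) : Concl w := by
  have T := star_tiling hJ h135 h123 h345 h501
  have h513 : 0 < dt (w 5) (w 1) (w 3) := by rw [dt_cyc']; exact h135
  obtain ⟨d, d1, d2, d3, d4⟩ := vertex_dir (o := w 1) (A := w 2) (B := w 3) (C := w 5) (E := w 0)
    h123 h135 (by rw [dt_cyc']; exact h501)
    (fun x a b => T.disj (show (1 : Fin 4) ≠ 3 by decide) (mem_cell 1 a) (mem_cell 3 b.c))
    (fun h => absurd (vertex_on_edge hv (k := 0) h) (by decide))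
    (fun h => absurd (vertex_on_edge hv (k := 1) h) (by decide))
  obtain ⟨e, e1, e2, e3, e4⟩ := vertex_dir (o := w 5) (A := w 0) (B := w 1) (C := w 3) (E := w 4)
    h501 h513 (by rw [dt_cyc']; exact h345)
    (fun x a b => T.disj (show (3 : Fin 4) ≠ 2 by decide) (mem_cell 3 a) (mem_cell 2 b.c))
    (fun h => absurd (vertex_on_edge hv (k := 4) h) (by decide))
    (fun h => absurd (vertex_on_edge hv (k := 5) h) (by decide))
  set m : Pt := (1 / 2 : ℝ) • (w 1 + w 5) with hm
  have M1 : ∀ a b, dt a b m = (dt a b (w 1) + dt a b (w 5)) / 2 := fun a b => dt_mid _ _ _ _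
  have M2 : ∀ a b, dt m a b = (dt a b (w 1) + dt a b (w 5)) / 2 := fun a b => by
    rw [← dt_cyc, M1]
  have M3 : ∀ a b, dt b m a = (dt a b (w 1) + dt a b (w 5)) / 2 := fun a b => by
    rw [dt_cyc', dt_cyc', M1]
  set f : Pt := w 0 - w 5 with hf
  have tp := tendsto_add_smul (w 1) d
  have tr := tendsto_add_smul (w 5) e
  have tq := tendsto_add_smul m f
  have c1 := tri_germ h135 d2 d3
  have c2 := tri_germ h513 e2 e3
  have x501 : 0 < dt (w 0) (w 1) (w 5) := by rw [dt_cyc]; exact h501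
  have x150 : 0 < dt (w 1) (w 5) (w 0) := by rw [dt_cyc, dt_cyc]; exact h501
  have coll : ∀ t : ℝ, dt (w 5 + t • e) (m + t • f) (w 1 + t • d) =
      t * ((det2 (w 1 - w 5) d + det2 (w 1 - w 5) e) / 2 - det2 (w 1 - w 5) f +
        t * det2 (f - e) (d - e)) := by
    intro t; simp [hm, dt, det2]; ring
  have coll2 : ∀ t : ℝ, dt (w 1) (w 5) (m + t • f) = t * dt (w 1) (w 5) (w 0) := by
    intro t; simp [hm, hf, dt, det2]; ring
  have g0 : 0 < (det2 (w 1 - w 5) d + det2 (w 1 - w 5) e) / 2 - det2 (w 1 - w 5) f +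
        0 * det2 (f - e) (d - e) := by
    have a1 : det2 (w 1 - w 5) d = det2 d (w 5 - w 1) := by simp [det2]; ring
    have a2 : det2 (w 1 - w 5) f = - dt (w 5) (w 0) (w 1) := by simp [hf, dt, det2]; ring
    rw [a1, a2]; linarith
  have D5 : 0 < det2 (m - w 5) e := by
    refine lt_of_lt_of_eq (half_pos e2) ?_
    simp [hm, det2]; ring
  have D1 : 0 < det2 d (m - w 1) := by
    refine lt_of_lt_of_eq (half_pos d3) ?_
    simp [hm, det2]; ring
  have v1 := ev_mul (g := fun t => (det2 (w 1 - w 5) d + det2 (w 1 - w 5) e) / 2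
    - det2 (w 1 - w 5) f + t * det2 (f - e) (d - e)) (by fun_prop) g0
  have zl := fun a b : Pt => dt_left a b
  have zr := fun a b : Pt => dt_right a b
  have u1 := ev_dt (cst (w 2)) (cst (w 3)) tp (by rw [dt_cyc]; exact h123)
  have u2 := ev_dt tr (cst (w 3)) (cst (w 4)) (by rw [dt_cyc']; exact h345)
  have u3 := ev_dt (cst (w 3)) tr tq (by rw [M1, zr, ← dt_cyc']; linarith)
  have u4 := ev_dt tq tp (cst (w 3)) (by rw [M2, zl]; linarith)
  have u5 := ev_dt tp (cst (w 3)) tr h135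
  have u6 := ev_dt (cst (w 5)) (cst (w 0)) tq (by rw [M1, zl]; linarith)
  have u7 := ev_dt (cst (w 0)) tq tr (by rw [M3, zl]; linarith)
  have u8 := ev_det (tq.sub (cst (w 5))) (cst e) D5
  have u9 := ev_dt tq (cst (w 0)) (cst (w 1)) (by rw [M2, zr]; linarith)
  have u10 := ev_det (cst d) (tq.sub (cst (w 1))) D1
  have u11 := ev_dt tp tq (cst (w 0)) (by rw [M3, zr]; linarith)
  have u12 := ev_dt (cst (w 0)) (cst (w 1)) tq (by rw [M1, zr]; linarith)
  obtain ⟨t, ht, c1, c2, v1, u1, u2, u3, u4, u5, u6, u7, u8, u9, u10, u11, u12⟩ :=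
    (ev_pos.and (c1.and (c2.and (v1.and (u1.and (u2.and (u3.and (u4.and (u5.and (u6.and (u7.and
      (u8.and (u9.and (u10.and (u11.and u12))))))))))))))).exists
  rw [← coll] at v1
  have cq : inT (w 5) (w 0) (w 1) (m + t • f) := by
    refine ⟨u6, u12, ?_⟩
    rw [coll2]; positivity
  exact pack5 hJ (p := w 1 + t • d) (r := w 5 + t • e) (q := m + t • f) (T.sub 0 (mem_cell 0 c1))
    (T.sub 3 (mem_cell 3 cq)) (T.sub 0 (mem_cell 0 c2.c))
    ⟨h123, u1, l2 ht d2, l3 ht d1⟩ ⟨h345, r1 ht e4, r2 ht e3, u2⟩ ⟨u3, v1, u4, u5⟩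
    ⟨l3 ht e1, u6, u7, l2 ht u8⟩ ⟨u9, r1 ht d4, r2 ht u10, u11⟩

lemma fan_case {w : Fin 6 → Pt} (hJ : Jor w 1)
    (h013 : 0 < dt (w 0) (w 1) (w 3)) (h123 : 0 < dt (w 1) (w 2) (w 3))
    (h035 : 0 < dt (w 0) (w 3) (w 5)) (h345 : 0 < dt (w 3) (w 4) (w 5)) : Concl w := by
  have T := fan_tiling hJ h013 h123 h035 h345
  have h350 : 0 < dt (w 3) (w 5) (w 0) := by rw [dt_cyc]; exact h035
  have h301 : 0 < dt (w 3) (w 0) (w 1) := by rw [dt_cyc']; exact h013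
  have h312 : 0 < dt (w 3) (w 1) (w 2) := by rw [dt_cyc']; exact h123
  obtain ⟨d, e, ⟨e1, e2, e3⟩, ⟨d1, d2, d3⟩, hde⟩ := fan_dirs (a := w 4 - w 3) (b := w 5 - w 3)
    (c := w 0 - w 3) (e := w 1 - w 3) (f := w 2 - w 3) h345 h350 h301 h312 (by
      rintro ⟨n1, n2⟩
      have g1 := tri_germ (w := w 3 - w 0) h345
        (by refine lt_of_lt_of_eq (neg_pos.2 n1) ?_; simp [det2]; ring)
        (by refine lt_of_lt_of_eq h350 ?_; simp [dt, det2]; ring)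
      have g2 := tri_germ (w := w 3 - w 0) h312
        (by refine lt_of_lt_of_eq h301 ?_; simp [dt, det2]; ring)
        (by refine lt_of_lt_of_eq (neg_pos.2 n2) ?_; simp [det2]; ring)
      obtain ⟨t, t1, t2⟩ := (g1.and g2).exists
      exact T.disj (show (3 : Fin 4) ≠ 1 by decide) (mem_cell 3 t1) (mem_cell 1 t2.c))
  obtain ⟨κ, hκ, hκ2⟩ := small_exists (- det2 (w 0 - w 3) (w 1 - w 3)) (half_pos d1)
  set m : Pt := (1 / 2 : ℝ) • (w 0 + w 3) with hm
  have M1 : ∀ a b, dt a b m = (dt a b (w 0) + dt a b (w 3)) / 2 := fun a b => dt_mid _ _ _ _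
  have M2 : ∀ a b, dt m a b = (dt a b (w 0) + dt a b (w 3)) / 2 := fun a b => by
    rw [← dt_cyc, M1]
  set f : Pt := κ • (w 1 - w 3) with hf
  have tp := tendsto_add_smul (w 3) d
  have tr := tendsto_add_smul (w 3) e
  have tq := tendsto_add_smul m f
  have c1 := tri_germ h301 d1 d2
  have c2 := tri_germ h350 e1 e2
  have hce : 0 < det2 (w 0 - w 3) (w 1 - w 3) := h301
  have e2' : det2 (w 0 - w 3) e < 0 := by rw [det2_swap]; linarith
  have coll1 : ∀ t : ℝ, dt (w 3 + t • e) (m + t • f) (w 3 + t • d) =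
      t * ((det2 (w 0 - w 3) d - det2 (w 0 - w 3) e) / 2 + t * det2 (f - e) (d - e)) := by
    intro t; simp [hm, dt, det2]; ring
  have coll2 : ∀ t : ℝ, dt (w 0) (m + t • f) (w 3 + t • e) =
      t * (- det2 (w 0 - w 3) e / 2 + κ * det2 (w 0 - w 3) (w 1 - w 3) + t * det2 f e) := by
    intro t; simp [hm, hf, dt, det2]; ring
  have coll3 : ∀ t : ℝ, dt (w 3 + t • d) (m + t • f) (w 0) =
      t * (det2 (w 0 - w 3) d / 2 + κ * - det2 (w 0 - w 3) (w 1 - w 3) + t * det2 d f) := by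
    intro t; simp [hm, hf, dt, det2]; ring
  have coll4 : ∀ t : ℝ, dt (w 3) (w 0) (m + t • f) = t * (κ * dt (w 3) (w 0) (w 1)) := by
    intro t; simp [hm, hf, dt, det2]; ring
  have coll5 : ∀ t : ℝ, dt (w 3 + t • d) (w 3) (w 3 + t • e) = t * (t * det2 e d) := by
    intro t; simp [dt, det2]; ring
  have v1 := ev_mul (g := fun t => (det2 (w 0 - w 3) d - det2 (w 0 - w 3) e) / 2 +
    t * det2 (f - e) (d - e)) (by fun_prop) (by simp only [zero_mul]; linarith)
  have v2 := ev_mul (g := fun t => - det2 (w 0 - w 3) e / 2 +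
    κ * det2 (w 0 - w 3) (w 1 - w 3) + t * det2 f e) (by fun_prop)
    (by simp only [zero_mul]; have := mul_pos hκ hce; linarith)
  have v3 := ev_mul (g := fun t => det2 (w 0 - w 3) d / 2 +
    κ * - det2 (w 0 - w 3) (w 1 - w 3) + t * det2 d f) (by fun_prop)
    (by simp only [zero_mul]; linarith)
  have D1 : 0 < det2 e (m - w 3) := by
    refine lt_of_lt_of_eq (half_pos e2) ?_
    simp [hm, det2]; ring
  have D2 : 0 < det2 (m - w 3) d := by
    refine lt_of_lt_of_eq (half_pos d1) ?_
    simp [hm, det2]; ring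
  have zl := fun a b : Pt => dt_left a b
  have zr := fun a b : Pt => dt_right a b
  have h130 : 0 < dt (w 1) (w 3) (w 0) := by rw [dt_cyc]; exact h013
  have h503 : 0 < dt (w 5) (w 0) (w 3) := by rw [dt_cyc]; exact h350
  have u1 := ev_dt tp (cst (w 1)) (cst (w 2)) h312
  have u2 := ev_dt (cst (w 4)) (cst (w 5)) tr (by rw [dt_cyc]; exact h345)
  have u3 := ev_det (cst e) (tq.sub (cst (w 3))) D1
  have u4 := ev_det (tq.sub (cst (w 3))) (cst d) D2
  have u5 := ev_dt tr (cst (w 5)) (cst (w 0)) h350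
  have u6 := ev_dt (cst (w 5)) (cst (w 0)) tq (by rw [M1, zr]; linarith)
  have u7 := ev_dt tq tr (cst (w 5)) (by rw [M2, zl]; linarith)
  have u8 := ev_dt tq (cst (w 0)) (cst (w 1)) (by rw [M2, zl]; linarith)
  have u9 := ev_dt (cst (w 0)) (cst (w 1)) tp h013
  have u10 := ev_dt (cst (w 1)) tp tq (by rw [M1, zr]; linarith)
  have u11 := ev_dt (cst (w 0)) (cst (w 1)) tq (by rw [M1, zl]; linarith)
  have u12 := ev_dt (cst (w 1)) (cst (w 3)) tq (by rw [M1, zr]; linarith)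
  obtain ⟨t, ht, c1, c2, v1, v2, v3, u1, u2, u3, u4, u5, u6, u7, u8, u9, u10, u11, u12⟩ :=
    (ev_pos.and (c1.and (c2.and (v1.and (v2.and (v3.and (u1.and (u2.and (u3.and (u4.and (u5.and
      (u6.and (u7.and (u8.and (u9.and (u10.and (u11.and u12))))))))))))))))).exists
  rw [← coll1] at v1
  rw [← coll2] at v2
  rw [← coll3] at v3
  have cq : inT (w 0) (w 1) (w 3) (m + t • f) := by
    refine ⟨u11, u12, ?_⟩
    rw [coll4]; positivity
  have k5 : 0 < dt (w 3 + t • d) (w 3) (w 3 + t • e) := by rw [coll5]; positivity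
  exact pack5 hJ (p := w 3 + t • d) (r := w 3 + t • e) (q := m + t • f) (T.sub 0 (mem_cell 0 c1.c))
    (T.sub 0 (mem_cell 0 cq)) (T.sub 2 (mem_cell 2 c2.c.c))
    ⟨h123, r1 ht d3, r2 ht d2, u1⟩ ⟨h345, u2, l2 ht e1, l3 ht e3⟩ ⟨r2 ht u3, v1, l2 ht u4, k5⟩
    ⟨u5, u6, v2, u7⟩ ⟨u8, u9, u10, v3⟩

lemma main_thm (v : Fin 6 → Pt) (hsimple : IsSimplePolygon v) (hccw : IsCCW v) : Concl v := by
  obtain ⟨σ, hJ⟩ := jordan hsimple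
  obtain ⟨i, hi⟩ := hex_tri hsimple hJ
  have hσ := hex_sign (rotP_ccw v i hccw) hJ.hs hi
  subst hσ
  have hw := rotP_simple hsimple i
  have hJw := rotP_jor hJ i
  apply Concl_rot (i := i)
  simp only [Shape, TP, Int.cast_one, one_mul] at hi
  rcases hi with ⟨a, b, c, d⟩ | ⟨a, b, c, d⟩ | ⟨a, b, c, d⟩ | ⟨a, b, c, d⟩
  · exact fan_case hJw a b c d
  · exact zig_case hw hJw a b c d
  · exact zag_case hw hJw a b c d
  · exact star_case hw hJw a b c d

end constructions2
end part12

/-- Theorem 6 (theorem:hexquad).  Every simple hexagon can be partitioned into strictly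
convex quadrilaterals using at most 3 Steiner points placed in its interior: the vertex
set of the decomposition consists of the 6 hexagon vertices plus at most 3 interior
points. -/
theorem hexagon_convex_quadrangulation_three_steiner (v : Fin 6 → Pt)
    (hsimple : IsSimplePolygon v) (hccw : IsCCW v) :
    ∃ (quads : Finset (Pt × Pt × Pt × Pt)) (Spts : Finset Pt),
      Spts.card ≤ 3 ∧
      (∀ p ∈ Spts, p ∈ polyInterior v) ∧
      (∀ q ∈ quads, StrictConvexQuad q.1 q.2.1 q.2.2.1 q.2.2.2) ∧
      (⋃ q ∈ quads, quadSet q) = polyRegion v ∧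
      (quadSet '' quads).Pairwise (fun A B => interior A ∩ interior B = ∅) ∧
      ((quads.biUnion quadVerts : Finset Pt) : Set Pt) = Set.range v ∪ (Spts : Set Pt) := by
  exact main_thm v hsimple hccw
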